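/- Let G be a k-connected maximal 1-plane graph on n vertices with 3 ≤ k ≤ 5, where G is immovable if k = 3, n ≥ 5 if k = 3, and n ≥ 6 if k ≥ 4. Then every true face of the planarization G^× is adjacent (i.e., shares a boundary edge) with at most 5 − k true faces of G^×. -/

import Mathlib

open Set

/-- A drawing of a simple graph in the plane: each vertex is assigned a distinct point,
and each edge a continuous arc (an injective continuous curve) joining its endpoints. -/
structure Drawing {V : Type} (G : SimpleGraph V) where
  pos : V → ℝ × ℝ
  pos_inj : Function.Injective pos
  arc : ∀ ⦃u v : V⦄, G.Adj u v → Set (ℝ × ℝ)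
  arc_symm : ∀ ⦃u v : V⦄ (h : G.Adj u v), arc h.symm = arc h
  arc_isArc : ∀ ⦃u v : V⦄ (h : G.Adj u v), ∃ γ : ℝ → ℝ × ℝ,
    ContinuousOn γ (Set.Icc 0 1) ∧ Set.InjOn γ (Set.Icc 0 1) ∧
    γ 0 = pos u ∧ γ 1 = pos v ∧ arc h = γ '' Set.Icc (0 : ℝ) 1

namespace Drawing

variable {V : Type} {G : SimpleGraph V} (D : Drawing G)

/-- The interior of the arc of an edge (the arc minus its endpoints). -/
def arcInt ⦃u v : V⦄ (h : G.Adj u v) : Set (ℝ × ℝ) :=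
  D.arc h \ {D.pos u, D.pos v}

/-- The interior of the drawing of an abstract edge `e : Sym2 V`. -/
def edgeInt (e : Sym2 V) : Set (ℝ × ℝ) :=
  {p | ∃ (u v : V) (h : G.Adj u v), e = s(u, v) ∧ p ∈ D.arcInt h}

/-- Two edges cross if they are distinct and their interiors meet. -/
def Cross (e f : Sym2 V) : Prop :=
  e ≠ f ∧ (D.edgeInt e ∩ D.edgeInt f).Nonempty

/-- The set of crossing points of the drawing. -/
def crossingSet : Set (ℝ × ℝ) :=
  {p | ∃ e f : Sym2 V, e ≠ f ∧ p ∈ D.edgeInt e ∧ p ∈ D.edgeInt f}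

/-- A good drawing: no vertex lies on the arc of a non-incident edge, any two distinct
edges meet in at most one interior point, and edges sharing an endpoint do not cross. -/
def IsGood : Prop :=
  (∀ (w : V) ⦃u v : V⦄ (h : G.Adj u v), D.pos w ∈ D.arc h → w = u ∨ w = v) ∧
  (∀ e f : Sym2 V, e ≠ f → (D.edgeInt e ∩ D.edgeInt f).Subsingleton) ∧
  (∀ ⦃u v w : V⦄ (h₁ : G.Adj u v) (h₂ : G.Adj u w), v ≠ w →
    D.arcInt h₁ ∩ D.arcInt h₂ = ∅)

/-- A drawing is 1-planar if every edge is crossed at most once. -/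
def IsOnePlanar : Prop :=
  ∀ e : Sym2 V, {f : Sym2 V | D.Cross e f}.Subsingleton

/-- The number of crossings of the drawing (each unordered pair of crossing edges
contributes one crossing). -/
noncomputable def crNum : ℕ :=
  Set.ncard {p : Sym2 V × Sym2 V | D.Cross p.1 p.2} / 2

/-- The subset of the plane covered by the drawing. -/
def drawingSet : Set (ℝ × ℝ) :=
  Set.range D.pos ∪ ⋃ (u : V) (v : V) (h : G.Adj u v), D.arc h

/-- A face of the drawing: a connected component of the complement of the drawing. -/
def IsFace (F : Set (ℝ × ℝ)) : Prop :=
  ∃ p ∉ D.drawingSet, F = connectedComponentIn D.drawingSetᶜ p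

/-- The set `∂(F)` of vertices on the boundary of a face `F`. -/
def faceVerts (F : Set (ℝ × ℝ)) : Set V :=
  {v | D.pos v ∈ frontier F}

/-- A true face of the planarization `G^×`: a face of the drawing whose boundary
contains no crossing point (i.e. it is incident with no fake vertex). -/
def IsTrueFace (F : Set (ℝ × ℝ)) : Prop :=
  D.IsFace F ∧ ∀ p ∈ D.crossingSet, p ∉ frontier F

/-- Two faces are adjacent if their boundaries share a common edge of the planarization,
i.e. they share a boundary point that is neither a vertex nor a crossing point. -/
def FaceAdj (F₁ F₂ : Set (ℝ × ℝ)) : Prop :=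
  F₁ ≠ F₂ ∧ ∃ p, p ∈ frontier F₁ ∧ p ∈ frontier F₂ ∧
    p ∉ Set.range D.pos ∧ p ∉ D.crossingSet

/-- The planarization `G^×` (crossings made into vertices of degree `4`) is a
triangulation: every face of the drawing has exactly three vertices of `G^×`
(true vertices or crossing points) on its boundary. -/
def PlanarizationIsTriangulation : Prop :=
  ∀ F : Set (ℝ × ℝ), D.IsFace F →
    ((Set.range D.pos ∪ D.crossingSet) ∩ frontier F).ncard = 3

/-- A maximal 1-plane graph: the drawing is good and 1-planar, and no edge between two
distinct non-adjacent vertices can be added to the drawing so that the result is still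
a good 1-planar drawing. -/
def IsMaximalOnePlane : Prop :=
  D.IsGood ∧ D.IsOnePlanar ∧
  ∀ u v : V, u ≠ v → ¬G.Adj u v →
    ∀ D' : Drawing (G ⊔ SimpleGraph.fromEdgeSet {s(u, v)}),
      D'.pos = D.pos →
      (∀ ⦃x y : V⦄ (h : G.Adj x y),
        D'.arc ((SimpleGraph.sup_adj _ _ _ _).mpr (Or.inl h)) = D.arc h) →
      ¬(D'.IsGood ∧ D'.IsOnePlanar)

/-- A maximal 1-plane graph is immovable if its number of crossings does not exceed that
of any good 1-planar drawing obtained from it by redrawing exactly one edge. -/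
def Immovable : Prop :=
  ∀ D' : Drawing G, D'.IsGood → D'.IsOnePlanar → D'.pos = D.pos →
    (∃ (u v : V) (_ : G.Adj u v), ∀ ⦃x y : V⦄ (h' : G.Adj x y),
      s(x, y) ≠ s(u, v) → D'.arc h' = D.arc h') →
    D.crNum ≤ D'.crNum

/-- The drawing induced on a subgraph. -/
def restrict {H : SimpleGraph V} (hle : H ≤ G) : Drawing H where
  pos := D.pos
  pos_inj := D.pos_inj
  arc := fun _ _ h => D.arc (hle h)
  arc_symm := fun _ _ h => D.arc_symm (hle h)
  arc_isArc := fun _ _ h => D.arc_isArc (hle h)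

/-- `H` is a planar skeleton `G_P` of the 1-plane graph `(G, D)`: it is obtained from `G`
by removing exactly one edge from each pair of crossing edges. -/
def IsPlanarSkeleton {H : SimpleGraph V} (_ : H ≤ G) : Prop :=
  (∀ e f : Sym2 V, D.Cross e f → (e ∈ H.edgeSet ↔ f ∉ H.edgeSet)) ∧
  ∀ e ∈ G.edgeSet, (¬∃ f, D.Cross e f) → e ∈ H.edgeSet

/-- `c_G(v)`: the number of crossing edges of the drawing incident with `v`. -/
noncomputable def cDeg (v : V) : ℕ :=
  Set.ncard {w : V | G.Adj v w ∧ ∃ f, D.Cross s(v, w) f}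

end Drawing

/-- The crossing number of a graph: the least number of crossings in a good drawing. -/
noncomputable def crossingNumber {V : Type} (G : SimpleGraph V) : ℕ :=
  sInf {n | ∃ D : Drawing G, D.IsGood ∧ D.crNum = n}

/-- A graph is `k`-connected if it stays connected after deleting any set of fewer than
`k` vertices. -/
def KConnected {V : Type} (G : SimpleGraph V) (k : ℕ) : Prop :=
  ∀ S : Set V, S.ncard < k → (G.induce Sᶜ).Connected

/-- A graph is 1-planar if it admits a good 1-planar drawing. -/
def Is1Planar {V : Type} (G : SimpleGraph V) : Prop :=
  ∃ D : Drawing G, D.IsGood ∧ D.IsOnePlanar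

/-- A maximal 1-planar graph: 1-planar, and adding any edge between distinct
non-adjacent vertices destroys 1-planarity. -/
def IsMaximal1Planar {V : Type} (G : SimpleGraph V) : Prop :=
  Is1Planar G ∧ ∀ u v : V, u ≠ v → ¬G.Adj u v →
    ¬Is1Planar (G ⊔ SimpleGraph.fromEdgeSet {s(u, v)})

section
namespace P11

/-- Existence of a continuous logarithm of `f` on `K`. -/
def HasLog {X : Type} [TopologicalSpace X] (K : Set X) (f : X → ℂ) : Prop :=
  ∃ g : X → ℂ, ContinuousOn g K ∧ ∀ w ∈ K, Complex.exp (g w) = f w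

/-- `x` and `y` are not separated by `K`. -/
def NS {X : Type} [TopologicalSpace X] (K : Set X) (x y : X) : Prop :=
  ∃ C : Set X, IsPreconnected C ∧ x ∈ C ∧ y ∈ C ∧ Disjoint C K

/-- `A` is an arc (possibly degenerate). -/
def IsArc {X : Type} [TopologicalSpace X] (A : Set X) : Prop :=
  ∃ (γ : ℝ → X) (s t : ℝ), s ≤ t ∧ ContinuousOn γ (Icc s t) ∧ InjOn γ (Icc s t) ∧
    A = γ '' Icc s t

lemma log_whole {X : Type} [TopologicalSpace X] [LocallyPathConnectedSpace X]
    [ContractibleSpace X] {f : X → ℂ} (hf : Continuous f) (h0 : ∀ x, f x ≠ 0) :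
    ∃ g : X → ℂ, Continuous g ∧ ∀ x, Complex.exp (g x) = f x := by
  have hs : IsSimplyConnected (univ : Set X) := by
    have : ContractibleSpace (univ : Set X) := (Homeomorph.Set.univ X).contractibleSpace
    rw [IsSimplyConnected]; infer_instance
  obtain ⟨g, hg, he⟩ := Complex.exists_continuousOn_eqOn_exp_comp hs isOpen_univ
    hf.continuousOn (by rintro ⟨x, -, hx⟩; exact h0 x hx)
  exact ⟨g, continuousOn_univ.1 hg, fun x => he (mem_univ x)⟩

lemma log_const {X : Type} [TopologicalSpace X] {S : Set X} (hS : IsPreconnected S)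
    {g₁ g₂ : X → ℂ} (h₁ : ContinuousOn g₁ S) (h₂ : ContinuousOn g₂ S)
    (he : ∀ w ∈ S, Complex.exp (g₁ w) = Complex.exp (g₂ w)) {a b : X} (ha : a ∈ S) (hb : b ∈ S) :
    g₁ a - g₂ a = g₁ b - g₂ b := by
  have := Complex.isCoveringMap_exp.constOn_of_comp (g := fun w => g₁ w - g₂ w) hS (h₁.sub h₂)
    (fun a ha a' ha' => by
      apply Subtype.ext
      simp only [Complex.exp_sub, he a ha, he a' ha', ne_eq, Complex.exp_ne_zero, not_false_eq_true, div_self]) ha hb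
  exact this

lemma log_glue {X : Type} [TopologicalSpace X] {K₁ K₂ : Set X} (h₁ : IsClosed K₁)
    (h₂ : IsClosed K₂) {f g₁ g₂ : X → ℂ} (c₁ : ContinuousOn g₁ K₁) (c₂ : ContinuousOn g₂ K₂)
    (e₁ : ∀ w ∈ K₁, Complex.exp (g₁ w) = f w) (e₂ : ∀ w ∈ K₂, Complex.exp (g₂ w) = f w)
    (hc : ∀ p ∈ K₁ ∩ K₂, ∀ q ∈ K₁ ∩ K₂, g₁ p - g₂ p = g₁ q - g₂ q) :
    HasLog (K₁ ∪ K₂) f := by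
  classical
  by_cases hne : (K₁ ∩ K₂).Nonempty
  swap
  · have hd : ∀ w ∈ K₁, w ∉ K₂ := fun w a b => hne ⟨w, a, b⟩
    refine ⟨fun w => if w ∈ K₁ then g₁ w else g₂ w, ?_, ?_⟩
    · apply ContinuousOn.union_of_isClosed _ _ h₁ h₂
      · exact c₁.congr fun w hw => if_pos hw
      · exact c₂.congr fun w hw => if_neg fun h => hd w h hw
    · rintro w (hw | hw)
      · simp [hw, e₁]
      · have : w ∉ K₁ := fun h => hd w h hw
        simp [this, e₂, hw]
  · obtain ⟨p, hp⟩ := hne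
    have hE : Complex.exp (g₁ p - g₂ p) = 1 := by
      rw [Complex.exp_sub, e₁ p hp.1, e₂ p hp.2]
      exact div_self (by rw [← e₁ p hp.1]; exact Complex.exp_ne_zero _)
    have key : ∀ w ∈ K₂, (if w ∈ K₁ then g₁ w else g₂ w + (g₁ p - g₂ p)) =
        g₂ w + (g₁ p - g₂ p) := by
      intro w hw
      split_ifs with h
      · rw [hc p hp w ⟨h, hw⟩]; ring
      · rfl
    refine ⟨fun w => if w ∈ K₁ then g₁ w else g₂ w + (g₁ p - g₂ p), ?_, ?_⟩
    · apply ContinuousOn.union_of_isClosed _ _ h₁ h₂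
      · exact c₁.congr fun w hw => if_pos hw
      · exact (c₂.add continuousOn_const).congr key
    · rintro w (hw | hw)
      · simp [hw, e₁]
      · simp only [key w hw, Complex.exp_add, hE, mul_one, e₂ w hw]

lemma IsArc.isCompact {X : Type} [TopologicalSpace X] {A : Set X} (h : IsArc A) : IsCompact A := by
  obtain ⟨γ, s, t, -, hc, -, rfl⟩ := h
  exact isCompact_Icc.image_of_continuousOn hc

lemma IsArc.hasLog {X : Type} [TopologicalSpace X] [T2Space X] {A : Set X} (h : IsArc A)
    {f : X → ℂ} (hf : ContinuousOn f A) (h0 : ∀ w ∈ A, f w ≠ 0) : HasLog A f := by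
  classical
  obtain ⟨γ, s, t, hst, hc, hi, rfl⟩ := h
  have hcont : Continuous fun r : ℝ => f (γ (projIcc s t hst r)) := by
    have h1 : Continuous fun r : ℝ => γ (projIcc s t hst r) :=
      hc.comp_continuous (continuous_subtype_val.comp continuous_projIcc) (fun r => (projIcc s t hst r).2)
    exact hf.comp_continuous h1 fun r => mem_image_of_mem _ (projIcc s t hst r).2
  obtain ⟨G, hG, hGe⟩ := log_whole hcont fun r => h0 _ (mem_image_of_mem _ (projIcc s t hst r).2)
  let e : Icc s t ≃ γ '' Icc s t := Equiv.Set.imageOfInjOn γ _ hi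
  have he : Continuous e := by
    apply Continuous.subtype_mk
    exact hc.domRestrict
  let E := he.homeoOfEquivCompactToT2
  refine ⟨fun w => if h : w ∈ γ '' Icc s t then G (E.symm ⟨w, h⟩) else 0, ?_, ?_⟩
  · rw [continuousOn_iff_continuous_domRestrict]
    have : Continuous fun w : γ '' Icc s t => G (E.symm w) :=
      hG.comp (continuous_subtype_val.comp E.symm.continuous)
    convert! this with w
    simp [Set.domRestrict, w.2]
  · intro w hw
    simp only [hw, dite_true, hGe]
    congr 1
    rw [projIcc_val]
    exact congrArg Subtype.val (E.apply_symm_apply ⟨w, hw⟩)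

/-! ### Eilenberg's criterion in the complex plane -/

lemma hasLog_of_NS {K : Set ℂ} (hK : IsClosed K) {x y : ℂ} (h : NS K x y) :
    HasLog K fun w => (w - x) / (w - y) := by
  obtain ⟨C, hC, hx, hy, hd⟩ := h
  refine hC.induction₂' (P := fun x y => HasLog K fun w => (w - x) / (w - y)) ?_ ?_ hx hy
  · intro b hb
    have hbK : b ∈ Kᶜ := fun h => hd.le_bot ⟨hb, h⟩
    obtain ⟨ε, hε, hball⟩ := Metric.isOpen_iff.1 hK.isOpen_compl b hbK
    have hev : ∀ᶠ b' in nhds b, b' ∈ Metric.ball b ε := Metric.ball_mem_nhds b hε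
    refine (hev.filter_mono nhdsWithin_le_nhds).mono fun b' hb' => ?_
    have hb'K : b' ∉ K := hball hb'
    have hn : ∀ w ∈ K, w - b ≠ 0 := fun w hw h => hbK (by rwa [sub_eq_zero.1 h] at hw)
    have hn' : ∀ w ∈ K, w - b' ≠ 0 := fun w hw h => hb'K (by rwa [sub_eq_zero.1 h] at hw)
    have hslit : ∀ w ∈ K, (w - b') / (w - b) ∈ Complex.slitPlane := by
      intro w hw
      have h1 : (w - b') / (w - b) = 1 + (b - b') / (w - b) := by
        field_simp [hn w hw]; ring
      rw [h1]
      apply Complex.mem_slitPlane_of_norm_lt_one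
      rw [norm_div, div_lt_one (norm_pos_iff.2 (hn w hw))]
      have h2 : ¬ w ∈ Metric.ball b ε := fun h => hball h hw
      rw [Metric.mem_ball, dist_eq_norm] at h2 hb'
      rw [norm_sub_rev]; linarith
    have hc : ContinuousOn (fun w => Complex.log ((w - b') / (w - b))) K := by
      refine ContinuousOn.clog (ContinuousOn.div (by fun_prop) (by fun_prop) hn) hslit
    have he : ∀ w ∈ K, Complex.exp (Complex.log ((w - b') / (w - b))) = (w - b') / (w - b) :=
      fun w hw => Complex.exp_log (Complex.slitPlane_ne_zero (hslit w hw))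
    refine ⟨⟨_, hc.neg, fun w hw => ?_⟩, ⟨_, hc, he⟩⟩
    simp only [Pi.neg_apply, Complex.exp_neg, he w hw, inv_div]
  · rintro a b c ha hb hc ⟨g₁, c₁, e₁⟩ ⟨g₂, c₂, e₂⟩
    refine ⟨_, c₁.add c₂, fun w hw => ?_⟩
    have hn : w - b ≠ 0 := fun h => hd.le_bot ⟨hb, by rwa [sub_eq_zero.1 h] at hw⟩
    simp only [Pi.add_apply, Complex.exp_add, e₁ w hw, e₂ w hw]
    field_simp

lemma frontier_comp_subset {X : Type} [TopologicalSpace X] [LocallyConnectedSpace X] {K : Set X}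
    (hK : IsClosed K) (x : X) : frontier (connectedComponentIn Kᶜ x) ⊆ K := by
  intro q hq
  by_contra hqK
  have ho : IsOpen (connectedComponentIn Kᶜ x) := hK.isOpen_compl.connectedComponentIn
  have ho' : IsOpen (connectedComponentIn Kᶜ q) := hK.isOpen_compl.connectedComponentIn
  have hqq : q ∈ connectedComponentIn Kᶜ q := mem_connectedComponentIn hqK
  obtain ⟨z, hz1, hz2⟩ := mem_closure_iff.1 hq.1 _ ho' hqq
  have := connectedComponentIn_eq hz1
  have h2 := connectedComponentIn_eq hz2
  apply hq.2
  rw [ho.interior_eq, h2, ← this]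
  exact hqq

lemma mem_comp_of_NS {X : Type} [TopologicalSpace X] {K : Set X} {x y : X} (h : NS K x y) :
    y ∈ connectedComponentIn Kᶜ x := by
  obtain ⟨C, hC, hx, hy, hd⟩ := h
  exact hC.subset_connectedComponentIn hx (fun z hz h => hd.le_bot ⟨hz, h⟩) hy

lemma NS_of_mem_comp {X : Type} [TopologicalSpace X] {K : Set X} {x y : X} (hx : x ∉ K)
    (h : y ∈ connectedComponentIn Kᶜ x) : NS K x y :=
  ⟨_, isPreconnected_connectedComponentIn, mem_connectedComponentIn hx, h,
    disjoint_left.2 fun z hz h => connectedComponentIn_subset _ _ hz h⟩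

lemma NS.symm {X : Type} [TopologicalSpace X] {K : Set X} {x y : X} (h : NS K x y) : NS K y x := by
  obtain ⟨C, hC, hx, hy, hd⟩ := h
  exact ⟨C, hC, hy, hx, hd⟩

lemma NS.mono {X : Type} [TopologicalSpace X] {K L : Set X} {x y : X} (h : NS K x y) (hL : L ⊆ K) :
    NS L x y := by
  obtain ⟨C, hC, hx, hy, hd⟩ := h
  exact ⟨C, hC, hx, hy, hd.mono_right hL⟩

lemma degree_zero {K : Set ℂ} (hK : IsCompact K) {x : ℂ} (hx : x ∉ K)
    (hb : Bornology.IsBounded (connectedComponentIn Kᶜ x)) (n : ℤ) {φ g : ℂ → ℂ}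
    (hφ : ContinuousOn φ (closure (connectedComponentIn Kᶜ x)))
    (hφ0 : ∀ w ∈ closure (connectedComponentIn Kᶜ x), φ w ≠ 0)
    (hg : ContinuousOn g K) (he : ∀ w ∈ K, (w - x) ^ n = φ w * Complex.exp (g w)) : n = 0 := by
  classical
  set U := connectedComponentIn Kᶜ x with hU
  have hxU : x ∈ U := mem_connectedComponentIn hx
  obtain ⟨gt, hgt⟩ := ContinuousMap.exists_restrict_eq hK.isClosed
    ⟨K.domRestrict g, continuousOn_iff_continuous_domRestrict.1 hg⟩
  have hgt' : ∀ w ∈ K, gt w = g w := fun w hw => by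
    have := DFunLike.congr_fun hgt ⟨w, hw⟩
    exact this
  have hUo : IsOpen U := hK.isClosed.isOpen_compl.connectedComponentIn
  let F : ℂ → ℂ := U.piecewise (fun w => φ w * Complex.exp (gt w)) (fun w => (w - x) ^ n)
  have hnx : ∀ w ∉ U, w - x ≠ 0 := fun w hw h => hw (by rwa [sub_eq_zero.1 h])
  have hF : Continuous F := by
    apply continuous_piecewise
    · intro w hw
      have hwK := frontier_comp_subset hK.isClosed x hw
      rw [he w hwK, hgt' w hwK]
    · exact hφ.mul (by fun_prop)
    · rw [hUo.isClosed_compl.closure_eq]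
      apply ContinuousOn.zpow₀ (by fun_prop)
      intro w hw
      exact Or.inl (hnx w hw)
  have hF0 : ∀ w, F w ≠ 0 := by
    intro w
    by_cases hw : w ∈ U
    · simp only [F, piecewise_eq_of_mem _ _ _ hw]
      exact mul_ne_zero (hφ0 w (subset_closure hw)) (Complex.exp_ne_zero _)
    · simp only [F, piecewise_eq_of_notMem _ _ _ hw]
      exact zpow_ne_zero _ (hnx w hw)
  obtain ⟨G, hG, hGe⟩ := log_whole hF hF0
  obtain ⟨R, hR⟩ := hb.subset_ball x
  have hRpos : 0 < R := by
    have := hR hxU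
    simpa using this
  have hconst := log_const (S := (univ : Set ℝ)) isPreconnected_univ
    (g₁ := fun θ : ℝ => G (x + R * Complex.exp (θ * Complex.I)))
    (g₂ := fun θ : ℝ => (n : ℂ) * (Complex.log R + θ * Complex.I))
    (by fun_prop) (by fun_prop) (by
      intro θ _
      have hR0 : (R : ℂ) ≠ 0 := by exact_mod_cast hRpos.ne'
      have hnot : x + R * Complex.exp (θ * Complex.I) ∉ U := by
        intro h
        have := hR h
        rw [Metric.mem_ball, dist_eq_norm] at this
        simp [Complex.norm_exp_ofReal_mul_I, abs_of_pos hRpos] at this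
      simp only [hGe, F, piecewise_eq_of_notMem _ _ _ hnot, add_sub_cancel_left]
      rw [Complex.exp_int_mul, Complex.exp_add, Complex.exp_log hR0])
    (mem_univ (0 : ℝ)) (mem_univ (2 * Real.pi))
  simp only [Complex.ofReal_zero, zero_mul, Complex.exp_zero, Complex.ofReal_mul, Complex.ofReal_ofNat,
    Complex.exp_two_pi_mul_I] at hconst
  have h2 : (n : ℂ) * (2 * Real.pi * Complex.I) = 0 := by linear_combination hconst
  have h3 := Complex.two_pi_I_ne_zero
  rcases mul_eq_zero.1 h2 with h | h
  · exact_mod_cast h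
  · exact absurd h h3

lemma preconnected_outside (R : ℝ) (hR : 0 < R) : IsPreconnected {w : ℂ | R < ‖w‖} := by
  have : {w : ℂ | R < ‖w‖} = Complex.exp '' {z : ℂ | Real.log R < z.re} := by
    ext w
    constructor
    · intro hw
      have hw0 : w ≠ 0 := by rintro rfl; simp at hw; linarith
      refine ⟨Complex.log w, ?_, Complex.exp_log hw0⟩
      simp only [mem_ofPred_eq, Complex.log_re]
      exact Real.log_lt_log hR hw
    · rintro ⟨z, hz, rfl⟩
      simp only [mem_ofPred_eq, Complex.norm_exp] at *
      rwa [← Real.log_lt_iff_lt_exp hR]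
  rw [this]
  exact (convex_halfSpace_re_gt _).isPreconnected.image _ Complex.continuous_exp.continuousOn

lemma bounded_or {K : Set ℂ} (hK : IsCompact K) {x y : ℂ} (hx : x ∉ K) (hns : ¬ NS K x y) :
    Bornology.IsBounded (connectedComponentIn Kᶜ x) ∨
    Bornology.IsBounded (connectedComponentIn Kᶜ y) := by
  by_contra! hcon
  obtain ⟨h1, h2⟩ := hcon
  obtain ⟨R, hRp, hR⟩ := hK.isBounded.exists_pos_norm_le
  have aux : ∀ x, ¬ Bornology.IsBounded (connectedComponentIn Kᶜ x) →
      ∃ z ∈ connectedComponentIn Kᶜ x, R < ‖z‖ := by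
    intro x h
    by_contra! hh
    exact h (isBounded_iff_forall_norm_le.2 ⟨R, hh⟩)
  obtain ⟨z, hz, hzR⟩ := aux x h1
  obtain ⟨z', hz', hzR'⟩ := aux y h2
  have hsub := (preconnected_outside R hRp).subset_connectedComponentIn (F := Kᶜ) (x := z) hzR
    (fun w hw hwK => absurd (hR w hwK) (not_le.2 hw)) hzR'
  rw [← connectedComponentIn_eq hz] at hsub
  have e1 := connectedComponentIn_eq hsub
  have e2 := connectedComponentIn_eq hz'
  apply hns
  refine NS_of_mem_comp hx ?_
  rw [e1, ← e2]
  apply mem_connectedComponentIn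
  intro hy
  rw [connectedComponentIn_eq_empty (by simpa using hy)] at hz'
  exact hz'

lemma not_mem_closure_comp {K : Set ℂ} (hK : IsCompact K) {x y : ℂ} (hx : x ∉ K) (hy : y ∉ K)
    (hns : ¬ NS K x y) : ∀ w ∈ closure (connectedComponentIn Kᶜ x), w - y ≠ 0 := by
  intro w hw h
  rw [sub_eq_zero] at h
  subst h
  rw [closure_eq_self_union_frontier] at hw
  rcases hw with hw | hw
  · exact hns (NS_of_mem_comp hx hw)
  · exact hy (frontier_comp_subset hK.isClosed x hw)

lemma NS_of_hasLog {K : Set ℂ} (hK : IsCompact K) {x y : ℂ} (hx : x ∉ K) (hy : y ∉ K)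
    (h : HasLog K fun w => (w - x) / (w - y)) : NS K x y := by
  by_contra hns
  obtain ⟨g, hg, he⟩ := h
  have hnx : ∀ w ∈ K, w - x ≠ 0 := fun w hw h => hx (by rwa [sub_eq_zero.1 h] at hw)
  have hny : ∀ w ∈ K, w - y ≠ 0 := fun w hw h => hy (by rwa [sub_eq_zero.1 h] at hw)
  rcases bounded_or hK hx hns with hb | hb
  · have := degree_zero hK hx hb 1 (φ := fun w => w - y) (by fun_prop)
      (not_mem_closure_comp hK hx hy hns) hg (fun w hw => by
        rw [he w hw, zpow_one]; field_simp [hny w hw])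
    exact one_ne_zero this
  · have := degree_zero hK hy hb 1 (φ := fun w => w - x) (by fun_prop)
      (not_mem_closure_comp hK hy hx (fun h => hns h.symm)) hg.neg (fun w hw => by
        simp only [Pi.neg_apply, Complex.exp_neg, he w hw, zpow_one]; field_simp [hny w hw, hnx w hw])
    exact one_ne_zero this

lemma triple_log {K : Set ℂ} (hK : IsCompact K) {x y z : ℂ} (hx : x ∉ K) (hy : y ∉ K) (hz : z ∉ K)
    (hxy : ¬ NS K x y) (hyz : ¬ NS K y z) (hxz : ¬ NS K x z) (n m : ℤ) (hn : n ≠ 0) (hm : m ≠ 0)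
    {g₁ : ℂ → ℂ} (hg : ContinuousOn g₁ K)
    (he : ∀ w ∈ K, Complex.exp (g₁ w) = ((w - x) / (w - z)) ^ n * ((w - y) / (w - z)) ^ m) : False := by
  have hnx : ∀ w ∈ K, w - x ≠ 0 := fun w hw h => hx (by rwa [sub_eq_zero.1 h] at hw)
  have hny : ∀ w ∈ K, w - y ≠ 0 := fun w hw h => hy (by rwa [sub_eq_zero.1 h] at hw)
  have hnz : ∀ w ∈ K, w - z ≠ 0 := fun w hw h => hz (by rwa [sub_eq_zero.1 h] at hw)
  rcases bounded_or hK hx hxy with hb | hb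
  · have c1 := not_mem_closure_comp hK hx hy hxy
    have c2 := not_mem_closure_comp hK hx hz hxz
    refine hn (degree_zero hK hx hb n (φ := fun w => (w - z) ^ n * ((w - y) / (w - z)) ^ (-m))
      ?_ ?_ hg ?_)
    · refine ContinuousOn.mul (ContinuousOn.zpow₀ (by fun_prop) _ fun w hw => Or.inl (c2 w hw))
        (ContinuousOn.zpow₀ (ContinuousOn.div (by fun_prop) (by fun_prop) c2) _ fun w hw =>
          Or.inl (div_ne_zero (c1 w hw) (c2 w hw)))
    · intro w hw
      exact mul_ne_zero (zpow_ne_zero _ (c2 w hw)) (zpow_ne_zero _ (div_ne_zero (c1 w hw) (c2 w hw)))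
    · intro w hw
      have h1 : ((w - y) / (w - z)) ^ m ≠ 0 := zpow_ne_zero _ (div_ne_zero (hny w hw) (hnz w hw))
      have h2 : (w - z) ^ n ≠ 0 := zpow_ne_zero _ (hnz w hw)
      rw [he w hw, zpow_neg, div_zpow (w - x)]
      field_simp
  · have c1 := not_mem_closure_comp hK hy hx (fun h => hxy h.symm)
    have c2 := not_mem_closure_comp hK hy hz hyz
    refine hm (degree_zero hK hy hb m (φ := fun w => (w - z) ^ m * ((w - x) / (w - z)) ^ (-n))
      ?_ ?_ hg ?_)
    · refine ContinuousOn.mul (ContinuousOn.zpow₀ (by fun_prop) _ fun w hw => Or.inl (c2 w hw))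
        (ContinuousOn.zpow₀ (ContinuousOn.div (by fun_prop) (by fun_prop) c2) _ fun w hw =>
          Or.inl (div_ne_zero (c1 w hw) (c2 w hw)))
    · intro w hw
      exact mul_ne_zero (zpow_ne_zero _ (c2 w hw)) (zpow_ne_zero _ (div_ne_zero (c1 w hw) (c2 w hw)))
    · intro w hw
      have h1 : ((w - x) / (w - z)) ^ n ≠ 0 := zpow_ne_zero _ (div_ne_zero (hnx w hw) (hnz w hw))
      have h2 : (w - z) ^ m ≠ 0 := zpow_ne_zero _ (hnz w hw)
      rw [he w hw, zpow_neg, div_zpow (w - y)]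
      field_simp

end P11
end

section
namespace P11

lemma NS.notMem_left {X : Type} [TopologicalSpace X] {K : Set X} {x y : X} (h : NS K x y) :
    x ∉ K := by
  obtain ⟨C, hC, hx, hy, hd⟩ := h
  exact fun h => hd.le_bot ⟨hx, h⟩

lemma NS.notMem_right {X : Type} [TopologicalSpace X] {K : Set X} {x y : X} (h : NS K x y) :
    y ∉ K := h.symm.notMem_left

lemma IsArc.isPreconnected {X : Type} [TopologicalSpace X] {A : Set X} (h : IsArc A) :
    IsPreconnected A := by
  obtain ⟨γ, s, t, -, hc, -, rfl⟩ := h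
  exact isPreconnected_Icc.image _ hc

lemma IsArc.log_frac {A : Set ℂ} (hA : IsArc A) {x y : ℂ} (hx : x ∉ A) (hy : y ∉ A) :
    HasLog A fun w => (w - x) / (w - y) := by
  have hnx : ∀ w ∈ A, w - x ≠ 0 := fun w hw h => hx (by rwa [sub_eq_zero.1 h] at hw)
  have hny : ∀ w ∈ A, w - y ≠ 0 := fun w hw h => hy (by rwa [sub_eq_zero.1 h] at hw)
  exact hA.hasLog (ContinuousOn.div (by fun_prop) (by fun_prop) hny)
    fun w hw => div_ne_zero (hnx w hw) (hny w hw)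

lemma ns_union_arc_C {K A : Set ℂ} (hK : IsCompact K) (hA : IsArc A) (hKA : (K ∩ A).Subsingleton)
    {x y : ℂ} (hx : x ∉ A) (hy : y ∉ A) (h : NS K x y) : NS (K ∪ A) x y := by
  obtain ⟨g₁, c₁, e₁⟩ := hasLog_of_NS hK.isClosed h
  obtain ⟨g₂, c₂, e₂⟩ := hA.log_frac hx hy
  refine NS_of_hasLog (hK.union hA.isCompact) (by simp [h.notMem_left, hx])
    (by simp [h.notMem_right, hy]) ?_
  exact log_glue hK.isClosed hA.isCompact.isClosed c₁ c₂ e₁ e₂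
    fun p hp q hq => by rw [hKA hp hq]

lemma ns_theta_C {K A : Set ℂ} (hK : IsCompact K) (hA : IsArc A) {q₁ q₂ : ℂ}
    (hKA : ∀ r ∈ K ∩ A, r = q₁ ∨ r = q₂)
    {x y z : ℂ} (hx : x ∉ A) (hy : y ∉ A) (hz : z ∉ A) (hxz : NS K x z) (hyz : NS K y z) :
    NS (K ∪ A) x y ∨ NS (K ∪ A) y z ∨ NS (K ∪ A) x z := by
  by_cases hq : q₁ ∈ K ∩ A ∧ q₂ ∈ K ∩ A
  swap
  · right; left
    refine ns_union_arc_C hK hA (fun r hr r' hr' => ?_) hy hz hyz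
    rcases hKA r hr with rfl | rfl <;> rcases hKA r' hr' with rfl | rfl <;> tauto
  obtain ⟨hq1, hq2⟩ := hq
  obtain ⟨f₁, cf₁, ef₁⟩ := hasLog_of_NS hK.isClosed hxz
  obtain ⟨g₁, cg₁, eg₁⟩ := hasLog_of_NS hK.isClosed hyz
  obtain ⟨f₂, cf₂, ef₂⟩ := hA.log_frac hx hz
  obtain ⟨g₂, cg₂, eg₂⟩ := hA.log_frac hy hz
  have hinterior : ∀ u v : ℂ → ℂ, ∀ φ : ℂ → ℂ, (∀ w ∈ K, Complex.exp (u w) = φ w) →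
      (∀ w ∈ A, Complex.exp (v w) = φ w) → ∃ n : ℤ,
      (u q₁ - v q₁) - (u q₂ - v q₂) = n * (2 * Real.pi * Complex.I) := by
    intro u v φ hu hv
    rw [← Complex.exp_eq_one_iff]
    rw [Complex.exp_sub, Complex.exp_sub, Complex.exp_sub, hu _ hq1.1, hv _ hq1.2, hu _ hq2.1, hv _ hq2.2]
    have n1 : φ q₁ ≠ 0 := by rw [← hu _ hq1.1]; exact Complex.exp_ne_zero _
    have n2 : φ q₂ ≠ 0 := by rw [← hu _ hq2.1]; exact Complex.exp_ne_zero _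
    field_simp
  obtain ⟨n, hn⟩ := hinterior f₁ f₂ _ ef₁ ef₂
  obtain ⟨m, hm⟩ := hinterior g₁ g₂ _ eg₁ eg₂
  have hKc := hK.isClosed
  have hAc := hA.isCompact.isClosed
  have hU := hK.union hA.isCompact
  have hxU : x ∉ K ∪ A := by simp [hxz.notMem_left, hx]
  have hyU : y ∉ K ∪ A := by simp [hyz.notMem_left, hy]
  have hzU : z ∉ K ∪ A := by simp [hyz.notMem_right, hz]
  have two : ∀ d : ℂ → ℂ, d q₁ = d q₂ → ∀ p ∈ K ∩ A, ∀ q ∈ K ∩ A, d p = d q := by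
    intro d hd p hp q hq
    rcases hKA p hp with rfl | rfl <;> rcases hKA q hq with rfl | rfl <;> simp [hd]
  by_cases hn0 : n = 0
  · right; right
    refine NS_of_hasLog hU hxU hzU (log_glue hKc hAc cf₁ cf₂ ef₁ ef₂ ?_)
    refine two (fun w => f₁ w - f₂ w) ?_
    rw [hn0] at hn
    simpa [sub_eq_zero] using hn
  by_cases hm0 : m = 0
  · right; left
    refine NS_of_hasLog hU hyU hzU (log_glue hKc hAc cg₁ cg₂ eg₁ eg₂ ?_)
    refine two (fun w => g₁ w - g₂ w) ?_
    rw [hm0] at hm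
    simpa [sub_eq_zero] using hm
  by_contra! hcon
  obtain ⟨g, cg, eg⟩ := log_glue (f := fun w => ((w - x) / (w - z)) ^ m * ((w - y) / (w - z)) ^ (-n))
    (g₁ := fun w => m * f₁ w + ((-n : ℤ) : ℂ) * g₁ w) (g₂ := fun w => m * f₂ w + ((-n : ℤ) : ℂ) * g₂ w)
    hKc hAc
    (by fun_prop) (by fun_prop)
    (fun w hw => by simp only [Complex.exp_add, Complex.exp_int_mul, ef₁ w hw, eg₁ w hw])
    (fun w hw => by simp only [Complex.exp_add, Complex.exp_int_mul, ef₂ w hw, eg₂ w hw])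
    (two (fun w => (m * f₁ w + ((-n : ℤ) : ℂ) * g₁ w) - (m * f₂ w + ((-n : ℤ) : ℂ) * g₂ w)) (by
      push_cast
      linear_combination m * hn - n * hm))
  exact triple_log hU hxU hyU hzU hcon.1 hcon.2.1 hcon.2.2 m (-n) hm0 (by simpa using hn0) cg eg

lemma ns_cycle_C {K A κ : Set ℂ} (hK : IsCompact K) (hA : IsArc A) (hκ : IsCompact κ)
    (hκc : IsPreconnected κ) {p q : ℂ} (hKA : ∀ r ∈ K ∩ A, r = p ∨ r = q)
    (hpκ : p ∈ κ) (hqκ : q ∈ κ) (hpA : p ∈ A) (hqA : q ∈ A)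
    {x y : ℂ} (hx : x ∉ A) (hy : y ∉ A) (h₁ : NS (K ∪ κ) x y) (h₂ : NS (κ ∪ A) x y) :
    NS (K ∪ A) x y := by
  obtain ⟨g, cg, eg⟩ := hasLog_of_NS (hK.union hκ).isClosed h₁
  obtain ⟨l, cl, el⟩ := hasLog_of_NS (hκ.union hA.isCompact).isClosed h₂
  have hxK : x ∉ K := fun h => h₁.notMem_left (Or.inl h)
  have hyK : y ∉ K := fun h => h₁.notMem_right (Or.inl h)
  refine NS_of_hasLog (hK.union hA.isCompact) (by simp [hxK, hx]) (by simp [hyK, hy]) ?_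
  refine log_glue hK.isClosed hA.isCompact.isClosed (cg.mono subset_union_left)
    (cl.mono subset_union_right) (fun w hw => eg w (Or.inl hw)) (fun w hw => el w (Or.inr hw)) ?_
  have key : g p - l p = g q - l q :=
    log_const hκc (cg.mono subset_union_right) (cl.mono subset_union_left)
      (fun w hw => by rw [eg w (Or.inr hw), el w (Or.inl hw)]) hpκ hqκ
  intro r hr s hs
  rcases hKA r hr with rfl | rfl <;> rcases hKA s hs with rfl | rfl <;> simp [key]

/-! ### Transport to `ℝ × ℝ` -/

/-- The identification of the real plane with the complex plane. -/
noncomputable def toC : ℝ × ℝ ≃ₜ ℂ := Complex.equivRealProdCLM.symm.toHomeomorph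

lemma NS.image {X Y : Type} [TopologicalSpace X] [TopologicalSpace Y] (e : X ≃ₜ Y) {K : Set X}
    {x y : X} (h : NS K x y) : NS (e '' K) (e x) (e y) := by
  obtain ⟨C, hC, hx, hy, hd⟩ := h
  refine ⟨e '' C, hC.image _ e.continuous.continuousOn, mem_image_of_mem _ hx, mem_image_of_mem _ hy, ?_⟩
  exact (disjoint_image_iff e.injective).2 hd

lemma NS.of_image {X Y : Type} [TopologicalSpace X] [TopologicalSpace Y] (e : X ≃ₜ Y) {K : Set X}
    {x y : X} (h : NS (e '' K) (e x) (e y)) : NS K x y := by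
  have := h.image e.symm
  simpa [Set.image_image] using this

lemma IsArc.image {X Y : Type} [TopologicalSpace X] [TopologicalSpace Y] (e : X ≃ₜ Y) {A : Set X}
    (h : IsArc A) : IsArc (e '' A) := by
  obtain ⟨γ, s, t, hst, hc, hi, rfl⟩ := h
  exact ⟨e ∘ γ, s, t, hst, e.continuous.comp_continuousOn hc, e.injective.injOn.comp hi (mapsTo_univ _ _),
    by rw [image_comp]⟩

lemma ns_union_arc {K A : Set (ℝ × ℝ)} (hK : IsCompact K) (hA : IsArc A)
    (hKA : (K ∩ A).Subsingleton)
    {x y : ℝ × ℝ} (hx : x ∉ A) (hy : y ∉ A) (h : NS K x y) : NS (K ∪ A) x y := by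
  apply NS.of_image toC
  rw [image_union]
  refine ns_union_arc_C (hK.image toC.continuous) (hA.image toC) ?_
    (by simpa using hx) (by simpa using hy) (h.image toC)
  rw [← image_inter toC.injective]
  exact hKA.image _

lemma ns_theta {K A : Set (ℝ × ℝ)} (hK : IsCompact K) (hA : IsArc A) {q₁ q₂ : ℝ × ℝ}
    (hKA : ∀ r ∈ K ∩ A, r = q₁ ∨ r = q₂)
    {x y z : ℝ × ℝ} (hx : x ∉ A) (hy : y ∉ A) (hz : z ∉ A) (hxz : NS K x z) (hyz : NS K y z) :
    NS (K ∪ A) x y ∨ NS (K ∪ A) y z ∨ NS (K ∪ A) x z := by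
  have := ns_theta_C (hK.image toC.continuous) (hA.image toC) (q₁ := toC q₁) (q₂ := toC q₂)
    (by rw [← image_inter toC.injective]; rintro _ ⟨r, hr, rfl⟩; simpa using hKA r hr)
    (x := toC x) (y := toC y) (z := toC z)
    (by simpa using hx) (by simpa using hy) (by simpa using hz) (hxz.image toC) (hyz.image toC)
  rw [← image_union] at this
  exact this.imp (NS.of_image toC) (Or.imp (NS.of_image toC) (NS.of_image toC))

lemma ns_cycle {K A κ : Set (ℝ × ℝ)} (hK : IsCompact K) (hA : IsArc A) (hκ : IsCompact κ)
    (hκc : IsPreconnected κ) {p q : ℝ × ℝ} (hKA : ∀ r ∈ K ∩ A, r = p ∨ r = q)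
    (hpκ : p ∈ κ) (hqκ : q ∈ κ) (hpA : p ∈ A) (hqA : q ∈ A)
    {x y : ℝ × ℝ} (hx : x ∉ A) (hy : y ∉ A) (h₁ : NS (K ∪ κ) x y) (h₂ : NS (κ ∪ A) x y) :
    NS (K ∪ A) x y := by
  apply NS.of_image toC
  rw [image_union]
  refine ns_cycle_C (hK.image toC.continuous) (hA.image toC) (hκ.image toC.continuous)
    (hκc.image _ toC.continuous.continuousOn) (p := toC p) (q := toC q)
    (by rw [← image_inter toC.injective]; rintro _ ⟨r, hr, rfl⟩; simpa using hKA r hr)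
    (mem_image_of_mem _ hpκ) (mem_image_of_mem _ hqκ) (mem_image_of_mem _ hpA)
    (mem_image_of_mem _ hqA)
    (by simpa using hx) (by simpa using hy) ?_ ?_
  · rw [← image_union]; exact h₁.image toC
  · rw [← image_union]; exact h₂.image toC

end P11
end

section
namespace P11

/-- Closed subsets of the unit interval all of whose gaps are closed loops of the curve. -/
def Thin {X : Type} [MetricSpace X] (γ : ℝ → X) (C : Set ℝ) : Prop :=
  IsClosed C ∧ C ⊆ Icc 0 1 ∧ (0:ℝ) ∈ C ∧ (1:ℝ) ∈ C ∧
    ∀ s ∈ C, ∀ t ∈ C, s < t → (∀ z ∈ C, ¬ (s < z ∧ z < t)) → γ s = γ t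

lemma thin_sInter {X : Type} [MetricSpace X] {γ : ℝ → X} (hγ : Continuous γ) {c : Set (Set ℝ)}
    (hc : ∀ C ∈ c, Thin γ C) (hch : IsChain (· ⊆ ·) c) (hne : c.Nonempty) :
    Thin γ (⋂₀ c) := by
  obtain ⟨C0, hC0⟩ := hne
  refine ⟨isClosed_sInter fun C h => (hc C h).1, (sInter_subset_of_mem hC0).trans (hc C0 hC0).2.1,
    fun C h => (hc C h).2.2.1, fun C h => (hc C h).2.2.2.1, ?_⟩
  intro s hs t ht hst hgap
  by_contra hne
  have hd : 0 < dist (γ s) (γ t) := dist_pos.2 hne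
  obtain ⟨η₁, hη₁, h1⟩ := Metric.continuousAt_iff.1 (hγ.continuousAt (x := s)) _ (half_pos hd)
  obtain ⟨η₂, hη₂, h2⟩ := Metric.continuousAt_iff.1 (hγ.continuousAt (x := t)) _ (half_pos hd)
  obtain ⟨η, hη, hη1, hη2, hη3⟩ : ∃ η, 0 < η ∧ η < η₁ ∧ η < η₂ ∧ η < (t - s) / 2 := by
    refine ⟨min (min η₁ η₂) ((t-s)/2) / 2, ?_, ?_, ?_, ?_⟩
    · have : 0 < min (min η₁ η₂) ((t-s)/2) := by
        refine lt_min (lt_min hη₁ hη₂) (by linarith)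
      linarith
    all_goals
      have h0 : 0 < min (min η₁ η₂) ((t-s)/2) := lt_min (lt_min hη₁ hη₂) (by linarith)
      have ha := min_le_left (min η₁ η₂) ((t-s)/2)
      have hb := min_le_right (min η₁ η₂) ((t-s)/2)
      have hc' := min_le_left η₁ η₂
      have hd' := min_le_right η₁ η₂
      linarith
  obtain ⟨C, hC, hCe⟩ : ∃ C ∈ c, C ∩ Icc (s + η) (t - η) = ∅ := by
    by_contra hcon
    push Not at hcon
    have hdir : DirectedOn (· ⊇ ·) ((fun C => C ∩ Icc (s+η) (t-η)) '' c) := by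
      rintro _ ⟨A, hA, rfl⟩ _ ⟨B, hB, rfl⟩
      rcases hch.total hA hB with h | h
      · exact ⟨_, ⟨A, hA, rfl⟩, subset_rfl, inter_subset_inter_left _ h⟩
      · exact ⟨_, ⟨B, hB, rfl⟩, inter_subset_inter_left _ h, subset_rfl⟩
    have hne' : ((fun C => C ∩ Icc (s+η) (t-η)) '' c).Nonempty := ⟨_, C0, hC0, rfl⟩
    have : Nonempty ((fun C => C ∩ Icc (s+η) (t-η)) '' c) := hne'.to_subtype
    obtain ⟨z, hz⟩ := IsCompact.nonempty_sInter_of_directed_nonempty_isCompact_isClosed hdir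
      (by rintro _ ⟨A, hA, rfl⟩; exact (hcon A hA))
      (by rintro _ ⟨A, hA, rfl⟩; exact isCompact_Icc.inter_left (hc A hA).1)
      (by rintro _ ⟨A, hA, rfl⟩; exact (hc A hA).1.inter isClosed_Icc)
    have hzI : z ∈ ⋂₀ c := fun A hA => (hz _ ⟨A, hA, rfl⟩).1
    have := (hz _ ⟨C0, hC0, rfl⟩).2
    exact hgap z hzI ⟨by linarith [this.1], by linarith [this.2]⟩
  have hsC : s ∈ C := hs C hC
  have htC : t ∈ C := ht C hC
  have k1 : IsCompact (C ∩ Icc s (s+η)) := isCompact_Icc.inter_left (hc C hC).1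
  have k2 : IsCompact (C ∩ Icc (t-η) t) := isCompact_Icc.inter_left (hc C hC).1
  obtain ⟨s', hs', hs'm⟩ := k1.exists_isGreatest ⟨s, hsC, by constructor <;> linarith⟩
  obtain ⟨t', ht', ht'm⟩ := k2.exists_isLeast ⟨t, htC, by constructor <;> linarith⟩
  have hs'2 := hs'.2
  have ht'2 := ht'.2
  have heq : γ s' = γ t' := by
    refine (hc C hC).2.2.2.2 s' hs'.1 t' ht'.1 (by linarith [hs'2.2, ht'2.1]) ?_
    rintro z hz ⟨hz1, hz2⟩
    rcases le_total z (s+η) with h | h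
    · linarith [hs'm ⟨hz, by linarith [hs'2.1], h⟩]
    rcases le_total (t-η) z with h' | h'
    · linarith [ht'm ⟨hz, h', by linarith [ht'2.2]⟩]
    · have : z ∈ C ∩ Icc (s + η) (t - η) := ⟨hz, h, h'⟩
      rw [hCe] at this
      exact this
  have e1 := h1 (x := s') (by rw [Real.dist_eq, abs_lt]; constructor <;> linarith [hs'2.1, hs'2.2])
  have e2 := h2 (x := t') (by rw [Real.dist_eq, abs_lt]; constructor <;> linarith [ht'2.1, ht'2.2])
  rw [heq, dist_comm] at e1
  have := dist_triangle (γ s) (γ t') (γ t)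
  linarith

lemma exists_min_thin {X : Type} [MetricSpace X] {γ : ℝ → X} (hγ : Continuous γ) :
    ∃ C, Thin γ C ∧ ∀ s ∈ C, ∀ t ∈ C, s < t → γ s = γ t → ∀ z ∈ C, ¬ (s < z ∧ z < t) := by
  have h0 : Thin γ (Icc 0 1) := by
    refine ⟨isClosed_Icc, subset_rfl, by simp, by simp, ?_⟩
    intro s hs t ht hst h
    exfalso
    exact h ((s+t)/2) ⟨by linarith [hs.1], by linarith [ht.2]⟩ ⟨by linarith, by linarith⟩
  obtain ⟨C, hCs, hC⟩ := zorn_superset_nonempty {C | Thin γ C} (by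
    intro c hc hch hne
    exact ⟨⋂₀ c, thin_sInter hγ hc hch hne, fun s hs => sInter_subset_of_mem hs⟩) _ h0
  refine ⟨C, hC.1, ?_⟩
  have hT : Thin γ C := hC.1
  intro s hs t ht hst heq z hz hzst
  have hnew : Thin γ (C \ Ioo s t) := by
    refine ⟨hT.1.sdiff isOpen_Ioo, sdiff_subset.trans hT.2.1, ⟨hT.2.2.1, fun h => ?_⟩,
      ⟨hT.2.2.2.1, fun h => ?_⟩, ?_⟩
    · linarith [h.1, (hT.2.1 hs).1]
    · linarith [h.2, (hT.2.1 ht).2]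
    intro x hx y hy hxy hg
    by_cases hgg : ∀ z ∈ C, ¬ (x < z ∧ z < y)
    · exact hT.2.2.2.2 x hx.1 y hy.1 hxy hgg
    push Not at hgg
    obtain ⟨w, hw, hxw, hwy⟩ := hgg
    have hw' : w ∈ Ioo s t := by
      by_contra hcon
      exact hg w ⟨hw, hcon⟩ ⟨hxw, hwy⟩
    have e1 : s ≤ x := by
      by_contra hcon
      push Not at hcon
      exact hg s ⟨hs, fun h => lt_irrefl _ h.1⟩ ⟨hcon, hw'.1.trans hwy⟩
    have e2 : y ≤ t := by
      by_contra hcon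
      push Not at hcon
      exact hg t ⟨ht, fun h => lt_irrefl _ h.2⟩ ⟨hxw.trans hw'.2, hcon⟩
    have e3 : x = s := by
      by_contra hcon
      exact hx.2 ⟨lt_of_le_of_ne e1 (Ne.symm hcon), hxw.trans hw'.2⟩
    have e4 : y = t := by
      by_contra hcon
      exact hy.2 ⟨hw'.1.trans hwy, lt_of_le_of_ne e2 hcon⟩
    rw [e3, e4, heq]
  have := hC.2 (y := C \ Ioo s t) hnew sdiff_subset hz
  exact this.2 hzst

/-- From a path to a curve with interval fibres. -/
lemma exists_monotone_fibres {X : Type} [MetricSpace X] {γ : ℝ → X} (hγ : Continuous γ) :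
    ∃ g : ℝ → X, Continuous g ∧ g 0 = γ 0 ∧ g 1 = γ 1 ∧ range g ⊆ γ '' Icc 0 1 ∧
      ∀ u v t, u ≤ v → v ≤ t → g u = g t → g v = g u := by
  obtain ⟨C, hT, hmin⟩ := exists_min_thin hγ
  have hr : ∀ t : Icc (0:ℝ) 1, ∃ r, IsGreatest (C ∩ Icc 0 t) r := fun t =>
    (isCompact_Icc.inter_left hT.1).exists_isGreatest ⟨0, hT.2.2.1, by simp [t.2.1]⟩
  have hl : ∀ t : Icc (0:ℝ) 1, ∃ l, IsLeast (C ∩ Icc t 1) l := fun t =>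
    (isCompact_Icc.inter_left hT.1).exists_isLeast ⟨1, hT.2.2.2.1, by simp [t.2.2]⟩
  choose r hr using hr
  choose l hl using hl
  have hrl : ∀ t, γ (r t) = γ (l t) := by
    intro t
    have h1 := (hr t).1.2.2
    have h2 := (hl t).1.2.1
    rcases eq_or_lt_of_le (h1.trans h2) with h | h
    · rw [h]
    refine hT.2.2.2.2 _ (hr t).1.1 _ (hl t).1.1 h ?_
    rintro z hz ⟨hz1, hz2⟩
    rcases le_total z t with h' | h'
    · linarith [(hr t).2 ⟨hz, (hT.2.1 hz).1, h'⟩]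
    · linarith [(hl t).2 ⟨hz, h', (hT.2.1 hz).2⟩]
  have hmono : ∀ u t : Icc (0:ℝ) 1, u ≤ t → r u ≤ r t := by
    intro u t hut
    exact (hr t).2 ⟨(hr u).1.1, (hr u).1.2.1, (hr u).1.2.2.trans hut⟩
  have hcont : Continuous (fun t => γ (r t)) := by
    rw [Metric.continuous_iff]
    have huc : UniformContinuousOn γ (Icc 0 1) :=
      isCompact_Icc.uniformContinuousOn_of_continuous hγ.continuousOn
    intro b ε hε
    obtain ⟨δ, hδ, hh⟩ := Metric.uniformContinuousOn_iff.1 huc ε hε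
    have key : ∀ s t : Icc (0:ℝ) 1, s ≤ t → dist s t < δ → dist (γ (r s)) (γ (r t)) < ε := by
      intro s t hst hd
      have hst' : (s:ℝ) ≤ t := hst
      rcases le_or_gt (l s) t with h | h
      · rw [hrl s]
        have a1 : l s ≤ r t := (hr t).2 ⟨(hl s).1.1, s.2.1.trans (hl s).1.2.1, h⟩
        refine hh _ (hT.2.1 (hl s).1.1) _ (hT.2.1 (hr t).1.1) ?_
        have : dist s t = |(s:ℝ) - t| := rfl
        rw [this, abs_lt] at hd
        rw [Real.dist_eq, abs_lt]
        constructor <;> linarith [(hl s).1.2.1, (hr t).1.2.2]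
      · have : r s = r t := by
          refine le_antisymm (hmono s t hst) ?_
          refine (hr s).2 ⟨(hr t).1.1, (hr t).1.2.1, ?_⟩
          by_contra hcon
          push Not at hcon
          linarith [(hl s).2 ⟨(hr t).1.1, hcon.le, (hT.2.1 (hr t).1.1).2⟩, (hr t).1.2.2]
        rw [this, dist_self]; exact hε
    refine ⟨δ, hδ, fun a hab => ?_⟩
    rcases le_total a b with h | h
    · exact key a b h hab
    · rw [dist_comm]; exact key b a h (by rwa [dist_comm])
  refine ⟨fun t => γ (r (projIcc 0 1 zero_le_one t)), hcont.comp continuous_projIcc, ?_, ?_, ?_, ?_⟩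
  · have : r (projIcc 0 1 zero_le_one 0) = 0 := by
      have := (hr (projIcc 0 1 zero_le_one 0)).1.2
      rw [projIcc_left] at this ⊢
      exact le_antisymm this.2 this.1
    simp only [this]
  · have : r (projIcc 0 1 zero_le_one 1) = 1 := by
      rw [projIcc_right]
      refine le_antisymm (hr ⟨1, by simp⟩).1.2.2 ((hr ⟨1, by simp⟩).2 ⟨hT.2.2.2.1, by simp⟩)
    simp only [this]
  · rintro _ ⟨t, rfl⟩
    exact ⟨_, hT.2.1 (hr _).1.1, rfl⟩
  · intro u v t huv hvt heq
    have m1 := hmono _ _ (monotone_projIcc (zero_le_one' ℝ) huv)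
    have m2 := hmono _ _ (monotone_projIcc (zero_le_one' ℝ) hvt)
    simp only at heq ⊢
    set a := r (projIcc 0 1 zero_le_one u)
    set b := r (projIcc 0 1 zero_le_one v)
    set c := r (projIcc 0 1 zero_le_one t)
    rcases eq_or_lt_of_le m1 with h1 | h1
    · rw [h1]
    rcases eq_or_lt_of_le m2 with h2 | h2
    · rw [h2, heq]
    exact absurd ⟨h1, h2⟩ (hmin a (hr _).1.1 c (hr _).1.1 (h1.trans h2) heq b (hr _).1.1)

end P11
end

section
namespace P11

/-- Running supremum of the truncated distance to `g q` on `[q, t]`. -/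
noncomputable def runSup {X : Type} [MetricSpace X] (g : ℝ → X) (q t : ℝ) : ℝ :=
  sSup ((fun s => min 1 (dist (g q) (g (q + s * max (t - q) 0)))) '' Icc (0:ℝ) 1)

section
variable {X : Type} [MetricSpace X] {g : ℝ → X}

lemma runSup_bdd (q t : ℝ) :
    BddAbove ((fun s => min 1 (dist (g q) (g (q + s * max (t - q) 0)))) '' Icc (0:ℝ) 1) := by
  refine ⟨1, ?_⟩
  rintro _ ⟨s, -, rfl⟩
  exact min_le_left _ _

lemma runSup_nonempty (q t : ℝ) :
    ((fun s => min 1 (dist (g q) (g (q + s * max (t - q) 0)))) '' Icc (0:ℝ) 1).Nonempty :=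
  ⟨_, 0, by simp, rfl⟩

lemma runSup_nonneg (q t : ℝ) : 0 ≤ runSup g q t :=
  le_csSup_of_le (runSup_bdd q t) ⟨0, by simp, rfl⟩ (by positivity)

lemma runSup_le_one (q t : ℝ) : runSup g q t ≤ 1 := by
  refine csSup_le (runSup_nonempty q t) ?_
  rintro _ ⟨s, -, rfl⟩
  exact min_le_left _ _

lemma runSup_continuous (hg : Continuous g) (q : ℝ) : Continuous (runSup g q) := by
  refine IsCompact.continuous_sSup (f := fun t s => min 1 (dist (g q) (g (q + s * max (t - q) 0))))
    isCompact_Icc ?_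
  have : (↿(fun t s : ℝ => min 1 (dist (g q) (g (q + s * max (t - q) 0)))))
    = fun p : ℝ × ℝ => min 1 (dist (g q) (g (q + p.2 * max (p.1 - q) 0))) := rfl
  rw [this]
  fun_prop

lemma runSup_mono (q : ℝ) : Monotone (runSup g q) := by
  intro a b hab
  refine csSup_le (runSup_nonempty q a) ?_
  rintro _ ⟨s, hs, rfl⟩
  rcases le_or_gt b q with h | h
  · refine le_csSup_of_le (runSup_bdd q b) ⟨s, hs, rfl⟩ ?_
    simp only
    rw [max_eq_right (by linarith), max_eq_right (by linarith)]
  · refine le_csSup_of_le (runSup_bdd q b) ⟨s * max (a-q) 0 / (b-q), ⟨?_, ?_⟩, rfl⟩ ?_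
    · have : 0 ≤ s := hs.1
      have : 0 < b - q := by linarith
      positivity
    · rw [div_le_one (by linarith)]
      have : max (a-q) 0 ≤ b - q := max_le (by linarith) (by linarith)
      calc s * max (a-q) 0 ≤ 1 * max (a-q) 0 := by gcongr; exact hs.2
        _ ≤ b - q := by linarith
    · simp only
      rw [max_eq_left (by linarith : 0 ≤ b - q), div_mul_cancel₀ _ (by linarith)]

lemma runSup_eq_zero {q t : ℝ} (h : t ≤ q) : runSup g q t = 0 := by
  refine le_antisymm ?_ (runSup_nonneg q t)
  refine csSup_le (runSup_nonempty q t) ?_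
  rintro _ ⟨s, -, rfl⟩
  simp only
  rw [max_eq_right (by linarith)]
  simp

lemma runSup_pos {q t : ℝ} (h : q ≤ t) (hne : g q ≠ g t) : 0 < runSup g q t := by
  refine lt_of_lt_of_le (lt_min one_pos (dist_pos.2 hne)) ?_
  refine le_csSup_of_le (runSup_bdd q t) ⟨1, by simp, rfl⟩ ?_
  simp only
  rw [max_eq_left (by linarith)]
  simp

lemma runSup_const {q s t : ℝ} (hst : s ≤ t) (hc : ∀ v, s ≤ v → v ≤ t → g v = g s) :
    runSup g q s = runSup g q t := by
  refine le_antisymm (runSup_mono q hst) ?_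
  refine csSup_le (runSup_nonempty q t) ?_
  rintro _ ⟨a, ha, rfl⟩
  simp only
  rcases le_or_gt t q with h | h
  · rw [max_eq_right (by linarith)]; simpa using runSup_nonneg q s
  rw [max_eq_left (by linarith)]
  have hv : q + a * (t - q) ≤ t := by nlinarith [ha.2]
  have hv0 : q ≤ q + a * (t-q) := by nlinarith [ha.1]
  set v := q + a * (t - q)
  rcases le_total v s with h1 | h1
  · rcases eq_or_lt_of_le (hv0.trans h1) with h2 | h2
    · have : v = q := le_antisymm (by linarith) hv0
      rw [this]; simpa using runSup_nonneg q s
    refine le_csSup_of_le (runSup_bdd q s) ⟨(v - q)/(s-q), ⟨by apply div_nonneg <;> linarith, ?_⟩, rfl⟩ ?_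
    · rw [div_le_one (by linarith)]; linarith
    · simp only
      rw [max_eq_left (by linarith), div_mul_cancel₀ _ (by linarith)]
      simp
  · rw [hc v h1 hv]
    rcases le_total q s with h3 | h3
    · refine le_csSup_of_le (runSup_bdd q s) ⟨1, by simp, rfl⟩ ?_
      simp only
      rw [max_eq_left (by linarith)]
      simp
    · rw [hc q h3 h.le]
      simpa using runSup_nonneg q s

/-- The reparametrising function. -/
noncomputable def repar (g : ℝ → X) (t : ℝ) : ℝ :=
  ∑' n : ℕ, (1/2 : ℝ)^n * runSup g (TopologicalSpace.denseSeq ℝ n) t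

lemma repar_summable (t : ℝ) :
    Summable fun n : ℕ => (1/2 : ℝ)^n * runSup g (TopologicalSpace.denseSeq ℝ n) t := by
  refine Summable.of_nonneg_of_le (fun n => ?_) (fun n => ?_) summable_geometric_two
  · have := runSup_nonneg (g := g) (TopologicalSpace.denseSeq ℝ n) t
    positivity
  · have := runSup_le_one (g := g) (TopologicalSpace.denseSeq ℝ n) t
    have h2 : (0:ℝ) ≤ (1/2 : ℝ)^n := by positivity
    nlinarith

lemma repar_continuous (hg : Continuous g) : Continuous (repar g) := by
  refine continuous_tsum (u := fun n => (1/2:ℝ)^n) (fun n => ?_) summable_geometric_two ?_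
  · exact continuous_const.mul (runSup_continuous hg _)
  · intro n x
    have h0 := runSup_nonneg (g := g) (TopologicalSpace.denseSeq ℝ n) x
    have := runSup_le_one (g := g) (TopologicalSpace.denseSeq ℝ n) x
    have h2 : (0:ℝ) ≤ (1/2 : ℝ)^n := by positivity
    rw [Real.norm_of_nonneg (by positivity)]
    nlinarith

lemma repar_mono : Monotone (repar g) := by
  intro a b hab
  refine Summable.tsum_le_tsum (fun n => ?_) (repar_summable a) (repar_summable b)
  have := runSup_mono (g := g) (TopologicalSpace.denseSeq ℝ n) hab
  gcongr

lemma repar_lt (hg : Continuous g) {s t : ℝ} (hst : s < t) (hne : g s ≠ g t) :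
    repar g s < repar g t := by
  have hop : IsOpen {q : ℝ | g q ≠ g t} := isOpen_ne.preimage hg
  obtain ⟨ε, hε, hb⟩ := Metric.isOpen_iff.1 hop s hne
  have hne' : (Ioo s (min t (s + ε))).Nonempty := nonempty_Ioo.2 (lt_min hst (by linarith))
  obtain ⟨n, hq⟩ := (TopologicalSpace.denseRange_denseSeq ℝ).exists_mem_open isOpen_Ioo hne'
  set q := TopologicalSpace.denseSeq ℝ n with hqd
  have h1 : q < t := hq.2.trans_le (min_le_left _ _)
  have h2 : q < s + ε := hq.2.trans_le (min_le_right _ _)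
  have hqne : g q ≠ g t := hb (by rw [Metric.mem_ball, Real.dist_eq, abs_lt]; constructor <;> linarith [hq.1])
  refine Summable.tsum_lt_tsum_of_nonneg (i := n) (fun m => ?_) (fun m => ?_) ?_ (repar_summable t)
  · have := runSup_nonneg (g := g) (TopologicalSpace.denseSeq ℝ m) s
    positivity
  · have := runSup_mono (g := g) (TopologicalSpace.denseSeq ℝ m) hst.le
    gcongr
  · have e1 : runSup g q s = 0 := runSup_eq_zero hq.1.le
    have e2 : 0 < runSup g q t := runSup_pos h1.le hqne
    simp only [← hqd, e1, mul_zero]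
    positivity

lemma repar_eq {s t : ℝ} (hst : s ≤ t) (hc : ∀ v, s ≤ v → v ≤ t → g v = g s) :
    repar g s = repar g t := by
  unfold repar
  congr 1
  ext n
  rw [runSup_const hst hc]

/-- Every path with distinct endpoints contains an arc. -/
theorem exists_arc {γ : ℝ → X} (hγ : Continuous γ) (hne : γ 0 ≠ γ 1) :
    ∃ δ : ℝ → X, ContinuousOn δ (Icc 0 1) ∧ InjOn δ (Icc 0 1) ∧ δ 0 = γ 0 ∧ δ 1 = γ 1 ∧
      δ '' Icc 0 1 ⊆ γ '' Icc 0 1 := by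
  obtain ⟨g, hg, hg0, hg1, hgr, hfib⟩ := exists_monotone_fibres hγ
  have hne' : g 0 ≠ g 1 := by rwa [hg0, hg1]
  set φ := repar g with hφ
  have hφc : Continuous φ := repar_continuous hg
  have hφeq : ∀ s t, φ s = φ t ↔ g s = g t := by
    have key : ∀ s t, s ≤ t → (φ s = φ t ↔ g s = g t) := by
      intro s t hst
      constructor
      · intro h
        by_contra hcon
        rcases eq_or_lt_of_le hst with h' | h'
        · exact hcon (by rw [h'])
        · exact (repar_lt hg h' hcon).ne h
      · intro h
        exact repar_eq hst fun v h1 h2 => hfib s v t h1 h2 h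
    intro s t
    rcases le_total s t with h | h
    · exact key s t h
    · rw [eq_comm, key t s h, eq_comm]
  have hlt : φ 0 < φ 1 := repar_lt hg one_pos hne'
  have hsurj : ∀ y ∈ Icc (φ 0) (φ 1), ∃ x ∈ Icc (0:ℝ) 1, φ x = y :=
    fun y hy => intermediate_value_Icc zero_le_one hφc.continuousOn hy
  classical
  choose! ψ hψ1 hψ2 using hsurj
  set a := φ 0
  set b := φ 1
  have haff : ∀ τ ∈ Icc (0:ℝ) 1, a + (b - a) * τ ∈ Icc a b := by
    intro τ hτ
    constructor <;> nlinarith [hτ.1, hτ.2]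
  have hcont : ContinuousOn (fun y => g (ψ y)) (Icc a b) := by
    rw [continuousOn_iff_isClosed]
    intro Z hZ
    refine ⟨φ '' (g ⁻¹' Z ∩ Icc 0 1), ?_, ?_⟩
    · exact ((isCompact_Icc.inter_left (hZ.preimage hg)).image hφc).isClosed
    · ext y
      constructor
      · rintro ⟨h1, h2⟩
        exact ⟨⟨ψ y, ⟨h1, hψ1 y h2⟩, hψ2 y h2⟩, h2⟩
      · rintro ⟨⟨x, ⟨h1, h2⟩, rfl⟩, h3⟩
        refine ⟨?_, h3⟩
        have := (hφeq _ _).1 (hψ2 _ h3)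
        simp only [mem_preimage] at h1 ⊢
        rwa [this]
  refine ⟨fun τ => g (ψ (a + (b-a) * τ)), ?_, ?_, ?_, ?_, ?_⟩
  · exact hcont.comp (f := fun τ => a + (b-a)*τ) (by fun_prop) haff
  · intro x hx y hy h
    have := (hφeq _ _).2 h
    rw [hψ2 _ (haff x hx), hψ2 _ (haff y hy)] at this
    have hba : b - a ≠ 0 := by linarith
    exact mul_left_cancel₀ hba (by linarith)
  · simp only
    rw [← hg0]
    rw [← hφeq]
    rw [hψ2 _ (haff 0 (by simp))]; simp [a]
  · simp only
    rw [← hg1]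
    rw [← hφeq]
    rw [hψ2 _ (haff 1 (by simp))]; simp [a, b]
  · rintro _ ⟨τ, -, rfl⟩
    exact hgr ⟨_, rfl⟩
end
end P11
end

section
namespace P11

lemma arc_of_joinedIn {X : Type} [MetricSpace X] {S : Set X} {x y : X} (h : JoinedIn S x y)
    (hne : x ≠ y) :
    ∃ δ : ℝ → X, ContinuousOn δ (Icc 0 1) ∧ InjOn δ (Icc 0 1) ∧ δ 0 = x ∧ δ 1 = y ∧
      δ '' Icc 0 1 ⊆ S := by
  obtain ⟨p, hp⟩ := h
  obtain ⟨δ, h1, h2, h3, h4, h5⟩ := exists_arc (γ := p.extend) p.continuous_extend (by simpa using hne)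
  refine ⟨δ, h1, h2, by simpa using h3, by simpa using h4, h5.trans ?_⟩
  rintro _ ⟨t, ht, rfl⟩
  rw [Path.extend_apply p ht]
  exact hp _

/-- Infinite concatenation of paths shrinking to a point. -/
lemma joinedIn_limit {X : Type} [MetricSpace X] {x : ℕ → X} {V : ℕ → Set X} {u : X}
    (hJ : ∀ n, JoinedIn (V n) (x n) (x (n+1)))
    (hV : ∀ ε > 0, ∃ N, ∀ n ≥ N, V n ⊆ Metric.ball u ε) :
    JoinedIn (insert u (⋃ n, V n)) u (x 0) := by
  choose p hp using hJ
  set g : ℝ → X := fun t => (p ⌊t⌋₊).extend (t - ⌊t⌋₊) with hg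
  have hgn : ∀ n : ℕ, ∀ t ∈ Icc (n:ℝ) (n+1), g t = (p n).extend (t - n) := by
    intro n t ht
    rcases eq_or_lt_of_le ht.2 with h | h
    · have : ⌊t⌋₊ = n + 1 := by
        rw [h]; exact_mod_cast Nat.floor_natCast (n+1)
      simp only [hg]
      rw [this, h]; simp
    · have : ⌊t⌋₊ = n := (Nat.floor_eq_iff (by linarith [ht.1, (Nat.cast_nonneg n : (0:ℝ) ≤ n)])).2 ⟨ht.1, h⟩
      simp only [hg]
      rw [this]
  have hgV : ∀ t, 0 ≤ t → g t ∈ V ⌊t⌋₊ := by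
    intro t ht
    have : t - ⌊t⌋₊ ∈ Icc (0:ℝ) 1 := ⟨by linarith [Nat.floor_le ht], by linarith [Nat.lt_floor_add_one t]⟩
    simp only [hg]
    rw [Path.extend_apply _ this]
    exact hp _ _
  have hgc : ContinuousOn g (⋃ n : ℕ, Icc (n:ℝ) (n+1)) := by
    refine LocallyFinite.continuousOn_iUnion ?_ (fun n => isClosed_Icc) ?_
    · intro t
      refine ⟨Ioo (t-1) (t+1), Ioo_mem_nhds (by linarith) (by linarith), ?_⟩
      refine (finite_Iic ⌈t+1⌉₊).subset ?_
      rintro n ⟨z, hz1, hz2⟩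
      have : (n:ℝ) ≤ ⌈t+1⌉₊ := by linarith [hz1.1, hz2.2, Nat.le_ceil (t+1)]
      exact_mod_cast this
    · intro n
      have : ContinuousOn (fun t : ℝ => (p n).extend (t - n)) (Icc (n:ℝ) (n+1)) :=
        ((p n).continuous_extend.comp (by fun_prop)).continuousOn
      exact this.congr (hgn n)
  have hIci : ContinuousOn g (Ici 0) := by
    refine hgc.mono ?_
    intro t ht
    exact mem_iUnion.2 ⟨⌊t⌋₊, Nat.floor_le ht, (Nat.lt_floor_add_one t).le⟩
  set f : ℝ → X := fun t => if t ≤ 0 then u else g (1/t - 1) with hf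
  have h1 : f 1 = x 0 := by
    simp [hf, hg]
  refine JoinedIn.ofLine (f := f) ?_ (by simp [hf]) h1 ?_
  · intro t ht
    have ht' : t ∈ Icc (0:ℝ) 1 := ht
    rcases eq_or_lt_of_le ht'.1 with h0 | h0
    · subst h0
      rw [Metric.continuousWithinAt_iff]
      intro ε hε
      obtain ⟨N, hN⟩ := hV ε hε
      refine ⟨1/(N+2), by positivity, ?_⟩
      intro s hs hsd
      have hs' : s ∈ Icc (0:ℝ) 1 := hs
      rcases eq_or_lt_of_le hs'.1 with h1 | h1
      · rw [← h1, dist_self]; exact hε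
      have e : f 0 = u := by simp [hf]
      rw [e]
      have e2 : f s = g (1/s - 1) := by simp [hf, h1]
      rw [e2]
      rw [Real.dist_eq, sub_zero, abs_of_pos h1, lt_div_iff₀ (by positivity)] at hsd
      have hbig : (N:ℝ) ≤ 1/s - 1 := by
        have : (N:ℝ) + 1 ≤ 1/s := by
          rw [le_div_iff₀ h1]; nlinarith
        linarith
      exact hN ⌊1/s-1⌋₊ (Nat.le_floor hbig) (hgV _ (by linarith [(Nat.cast_nonneg N : (0:ℝ) ≤ N)]))
    · have hc : ContinuousWithinAt (fun t : ℝ => g (1/t - 1)) (Ioc 0 1) t := by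
        have hm : MapsTo (fun t : ℝ => 1/t - 1) (Ioc 0 1) (Ici 0) := by
          intro s hs
          have : 1 ≤ 1/s := by rw [le_div_iff₀ hs.1]; linarith [hs.2]
          simp only [mem_Ici]; linarith
        have h2 : ContinuousWithinAt (fun t : ℝ => 1/t - 1) (Ioc 0 1) t := by
          apply ContinuousAt.continuousWithinAt
          have := h0.ne'
          fun_prop (disch := assumption)
        exact ContinuousWithinAt.comp (g := g) (t := Ici 0) (hIci _ (hm ⟨h0, ht'.2⟩)) h2 hm
      have hc2 : ContinuousWithinAt f (Ioc 0 1) t := by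
        refine hc.congr (fun s hs => ?_) ?_
        · simp [hf, hs.1]
        · simp [hf, h0]
      refine hc2.mono_of_mem_nhdsWithin ?_
      rw [mem_nhdsWithin]
      exact ⟨Ioi 0, isOpen_Ioi, h0, fun s hs => ⟨hs.1, hs.2.2⟩⟩
  · rintro _ ⟨t, ht, rfl⟩
    have ht' : t ∈ Icc (0:ℝ) 1 := ht
    rcases eq_or_lt_of_le ht'.1 with h0 | h0
    · left; simp [hf, ← h0]
    · right
      have e2 : f t = g (1/t - 1) := by simp [hf, h0]
      rw [e2]
      refine mem_iUnion.2 ⟨_, hgV _ ?_⟩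
      have : 1 ≤ 1/t := by rw [le_div_iff₀ h0]; linarith [ht'.2]
      linarith
end P11
end

section
namespace P11

lemma NS.trans {X : Type} [TopologicalSpace X] {K : Set X} {x y z : X} (h₁ : NS K x y)
    (h₂ : NS K y z) : NS K x z := by
  obtain ⟨C, h1, h2, h3, h4⟩ := h₁
  obtain ⟨C', k1, k2, k3, k4⟩ := h₂
  exact ⟨C ∪ C', h1.union y h3 k2 k1, Or.inl h2, Or.inr k3, h4.union_left k4⟩

lemma NS.refl {X : Type} [TopologicalSpace X] {K : Set X} {x : X} (h : x ∉ K) : NS K x x :=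
  ⟨{x}, isPreconnected_singleton, rfl, rfl, by simpa using h⟩

/-- The points of `B` outside `L` fall into finitely many classes. -/
def FinClass (L B : Set (ℝ × ℝ)) : Prop :=
  ∃ T : Set (ℝ × ℝ), T.Finite ∧ ∀ x ∈ B, x ∉ L → ∃ t ∈ T, NS L x t

lemma FinClass.step {L S B : Set (ℝ × ℝ)} (hL : IsCompact L) (hS : IsArc S) {q₁ q₂ : ℝ × ℝ}
    (hq : ∀ r ∈ L ∩ S, r = q₁ ∨ r = q₂) (h : FinClass L B) : FinClass (L ∪ S) B := by
  obtain ⟨T, hT, hTB⟩ := h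
  have key : ∀ t ∈ T, ∃ T' : Set (ℝ × ℝ), T'.Finite ∧
      ∀ x ∈ B, x ∉ L ∪ S → NS L x t → ∃ t' ∈ T', NS (L ∪ S) x t' := by
    intro t _
    by_cases h1 : ∃ x ∈ B, x ∉ L ∪ S ∧ NS L x t
    swap
    · refine ⟨∅, finite_empty, fun x hx hx' hxt => absurd ⟨x, hx, hx', hxt⟩ h1⟩
    obtain ⟨x, hx, hxL, hxt⟩ := h1
    by_cases h2 : ∃ y ∈ B, y ∉ L ∪ S ∧ NS L y t ∧ ¬ NS (L ∪ S) x y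
    swap
    · push Not at h2
      exact ⟨{x}, finite_singleton _, fun y hy hyL hyt => ⟨x, rfl, (h2 y hy hyL hyt).symm⟩⟩
    obtain ⟨y, hy, hyL, hyt, hxy⟩ := h2
    refine ⟨{x, y}, toFinite _, fun z hz hzL hzt => ?_⟩
    rcases ns_theta hL hS hq (x := x) (y := y) (z := z) (fun h => hxL (Or.inr h)) (fun h => hyL (Or.inr h))
      (fun h => hzL (Or.inr h)) (hxt.trans hzt.symm) (hyt.trans hzt.symm) with h | h | h
    · exact absurd h hxy
    · exact ⟨y, by simp, h.symm⟩
    · exact ⟨x, by simp, h.symm⟩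
  choose! T' hT' hT'2 using key
  refine ⟨⋃ t ∈ T, T' t, hT.biUnion hT', fun x hx hxL => ?_⟩
  obtain ⟨t, ht, hxt⟩ := hTB x hx (fun h => hxL (Or.inl h))
  obtain ⟨t', ht', h⟩ := hT'2 t ht x hx hxL hxt
  exact ⟨t', mem_biUnion ht ht', h⟩

lemma FinClass.many {ι : Type} {L B : Set (ℝ × ℝ)} (hL : IsCompact L) {S : ι → Set (ℝ × ℝ)}
    (hS : ∀ i, IsArc (S i)) {q : ι → ℝ × ℝ} {u : ℝ × ℝ} (hq : ∀ i, ∀ r ∈ L ∩ S i, r = q i ∨ r = u)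
    (hij : ∀ i j, i ≠ j → ∀ r ∈ S i ∩ S j, r = u) (h : FinClass L B) (s : Finset ι) :
    FinClass (L ∪ ⋃ i ∈ s, S i) B := by
  classical
  induction s using Finset.induction_on with
  | empty => simpa using h
  | insert a s ha ih =>
    have e : L ∪ ⋃ i ∈ insert a s, S i = (L ∪ ⋃ i ∈ s, S i) ∪ S a := by
      rw [Finset.set_biUnion_insert, union_comm (S a), union_assoc]
    rw [e]
    refine FinClass.step (hL.union (s.isCompact_biUnion fun i _ => (hS i).isCompact)) (hS a)
      (q₁ := q a) (q₂ := u) ?_ ih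
    rintro r ⟨h1 | h1, h2⟩
    · exact hq a r ⟨h1, h2⟩
    · simp only [mem_iUnion] at h1
      obtain ⟨i, hi, hr⟩ := h1
      refine Or.inr (hij i a (fun h => ha (h ▸ hi)) r ⟨hr, h2⟩)

/-- Local finiteness of the components of the complement of `K` near `u`. -/
def LocFin (K : Set (ℝ × ℝ)) (u : ℝ × ℝ) : Prop :=
  ∀ ε > 0, ∃ r, 0 < r ∧ r < ε ∧ ∃ δ > 0, FinClass (K ∪ Metric.sphere u r) (Metric.ball u δ ∩ Kᶜ)

lemma locFin_star {ι : Type} [Finite ι] {K K' : Set (ℝ × ℝ)} (hK' : IsCompact K') {u : ℝ × ℝ}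
    (hu : u ∉ K') {γ : ι → ℝ → ℝ × ℝ} (hc : ∀ i, ContinuousOn (γ i) (Icc 0 1))
    (hinj : ∀ i, InjOn (γ i) (Icc 0 1)) (h0 : ∀ i, γ i 0 = u)
    (hij : ∀ i j, i ≠ j → ∀ r ∈ (γ i '' Icc 0 1) ∩ (γ j '' Icc 0 1), r = u)
    (hK : K = K' ∪ ⋃ i, γ i '' Icc 0 1) : LocFin K u := by
  classical
  have := Fintype.ofFinite ι
  intro ε hε
  have hEcl : IsClosed (K' ∪ range (fun i => γ i 1)) := hK'.isClosed.union (finite_range _).isClosed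
  have huE : u ∉ K' ∪ range (fun i => γ i 1) := by
    rintro (h | ⟨i, hi⟩)
    · exact hu h
    · have := hinj i (show (1:ℝ) ∈ Icc (0:ℝ) 1 by simp) (show (0:ℝ) ∈ Icc (0:ℝ) 1 by simp) (by rw [h0]; exact hi)
      exact one_ne_zero this
  obtain ⟨r1, hr1, hb1⟩ := Metric.isOpen_iff.1 hEcl.isOpen_compl u huE
  set r := min r1 ε / 2 with hr
  have hm : 0 < min r1 ε := lt_min hr1 hε
  have hr0 : 0 < r := by positivity
  have hrr1 : r < r1 := by linarith [min_le_left r1 ε]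
  have hrε : r < ε := by linarith [min_le_right r1 ε]
  have htau : ∀ i, ∃ τ, IsLeast {t | t ∈ Icc (0:ℝ) 1 ∧ r ≤ dist (γ i t) u} τ := by
    intro i
    have hcl : IsCompact {t | t ∈ Icc (0:ℝ) 1 ∧ r ≤ dist (γ i t) u} := by
      refine isCompact_Icc.of_isClosed_subset ?_ (fun t h => h.1)
      have hd : ContinuousOn (fun t => dist (γ i t) u) (Icc 0 1) := 
        continuous_dist.comp_continuousOn ((hc i).prodMk continuousOn_const)
      exact hd.preimage_isClosed_of_isClosed isClosed_Icc (isClosed_Ici (a := r))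
    refine hcl.exists_isLeast ⟨1, by simp, ?_⟩
    by_contra hcon
    push Not at hcon
    exact hb1 (a := γ i 1) (Metric.mem_ball.2 (hcon.trans hrr1)) (Or.inr ⟨i, rfl⟩)
  choose τ hτ using htau
  have hτI : ∀ i, τ i ∈ Icc (0:ℝ) 1 := fun i => (hτ i).1.1
  have hτ0 : ∀ i, 0 < τ i := by
    intro i
    refine lt_of_le_of_ne (hτI i).1 (fun h => ?_)
    have := (hτ i).1.2
    rw [← h, h0, dist_self] at this
    linarith
  have hτlt : ∀ i, ∀ t ∈ Icc (0:ℝ) (τ i), t ≠ τ i → dist (γ i t) u < r := by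
    intro i t ht hne
    by_contra hcon
    push Not at hcon
    have := (hτ i).2 ⟨⟨ht.1, ht.2.trans (hτI i).2⟩, hcon⟩
    exact hne (le_antisymm ht.2 this)
  have hsub1 : ∀ i, Icc (0:ℝ) (τ i) ⊆ Icc 0 1 := fun i => Icc_subset_Icc_right (hτI i).2
  have hsub2 : ∀ i, Icc (τ i) 1 ⊆ Icc (0:ℝ) 1 := fun i => Icc_subset_Icc_left (hτI i).1
  set S : ι → Set (ℝ × ℝ) := fun i => γ i '' Icc 0 (τ i) with hSdef
  set R : ι → Set (ℝ × ℝ) := fun i => γ i '' Icc (τ i) 1 with hRdef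
  set L := K' ∪ Metric.sphere u r ∪ ⋃ i, R i with hLdef
  have hSR : ∀ i, γ i '' Icc 0 1 = S i ∪ R i := by
    intro i
    simp only [hSdef, hRdef]
    rw [← image_union, Icc_union_Icc_eq_Icc (hτI i).1 (hτI i).2]
  have hRc : ∀ i, IsCompact (R i) := fun i => isCompact_Icc.image_of_continuousOn ((hc i).mono (hsub2 i))
  have hLc : IsCompact L :=
    (hK'.union (isCompact_sphere u r)).union (isCompact_iUnion hRc)
  have huL : u ∉ L := by
    rintro ((h | h) | h)
    · exact hu h
    · rw [Metric.mem_sphere, dist_self] at h; linarith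
    · obtain ⟨i, t, ht, hti⟩ := mem_iUnion.1 h
      have := hinj i (hsub2 i ht) (show (0:ℝ) ∈ Icc (0:ℝ) 1 by simp) (by rw [h0]; exact hti)
      linarith [ht.1, hτ0 i]
  have hSarc : ∀ i, IsArc (S i) := fun i =>
    ⟨γ i, 0, τ i, (hτI i).1, (hc i).mono (hsub1 i), (hinj i).mono (hsub1 i), rfl⟩
  obtain ⟨δ, hδ, hbδ⟩ := Metric.isOpen_iff.1 hLc.isClosed.isOpen_compl u huL
  have hKsub : K ∪ Metric.sphere u r ⊆ L ∪ ⋃ i ∈ (Finset.univ : Finset ι), S i := by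
    rw [hK]
    rintro z ((h | h) | h)
    · exact Or.inl (Or.inl (Or.inl h))
    · obtain ⟨i, hi⟩ := mem_iUnion.1 h
      rw [hSR i] at hi
      rcases hi with hi | hi
      · right; simp only [Finset.mem_univ, iUnion_true]; exact mem_iUnion.2 ⟨i, hi⟩
      · left; right; exact mem_iUnion.2 ⟨i, hi⟩
    · exact Or.inl (Or.inl (Or.inr h))
  have hfin : FinClass L (Metric.ball u δ) := by
    refine ⟨{u}, finite_singleton _, fun x hx hxL => ⟨u, rfl, Metric.ball u δ,
      (convex_ball u δ).isPreconnected, hx, Metric.mem_ball_self hδ, ?_⟩⟩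
    exact disjoint_left.2 hbδ
  have hmany := FinClass.many hLc hSarc (q := fun i => γ i (τ i)) (u := u) ?_ ?_ hfin Finset.univ
  · refine ⟨r, hr0, hrε, δ, hδ, ?_⟩
    obtain ⟨T, hT, hTB⟩ := hmany
    refine ⟨T, hT, fun x hx _ => ?_⟩
    have hxL : x ∉ L ∪ ⋃ i ∈ (Finset.univ : Finset ι), S i := by
      rintro (h | h)
      · exact hbδ hx.1 h
      · apply hx.2
        rw [hK]
        simp only [Finset.mem_univ, iUnion_true] at h
        obtain ⟨i, hi⟩ := mem_iUnion.1 h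
        right
        refine mem_iUnion.2 ⟨i, ?_⟩
        rw [hSR i]; exact Or.inl hi
    obtain ⟨t, ht, hxt⟩ := hTB x hx.1 hxL
    exact ⟨t, ht, hxt.mono hKsub⟩
  · rintro i z ⟨hzL, t, ht, rfl⟩
    by_cases hte : t = τ i
    · left; rw [hte]
    have hlt := hτlt i t ht hte
    rcases hzL with (h | h) | h
    · exact absurd (Or.inl h) (hb1 (Metric.mem_ball.2 (hlt.trans hrr1)))
    · rw [Metric.mem_sphere] at h; linarith
    · obtain ⟨j, hj⟩ := mem_iUnion.1 h
      by_cases hji : j = i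
      · subst hji
        obtain ⟨t', ht', he⟩ := hj
        have := hinj j (hsub2 j ht') (hsub1 j ht) he
        exact absurd (le_antisymm ht.2 (this ▸ ht'.1)) hte
      · right
        refine hij i j (Ne.symm hji) _ ⟨⟨t, hsub1 i ht, rfl⟩, ?_⟩
        rw [hSR j]; exact Or.inr hj
  · rintro i j hne z ⟨h1, h2⟩
    refine hij i j hne z ⟨?_, ?_⟩
    · rw [hSR i]; exact Or.inl h1
    · rw [hSR j]; exact Or.inl h2

/-- `W` is a locally (near `u`) full connected open piece of the complement of `K`. -/
structure Piece (K : Set (ℝ × ℝ)) (u : ℝ × ℝ) (W : Set (ℝ × ℝ)) (ρ : ℝ) : Prop where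
  op : IsOpen W
  conn : IsPreconnected W
  cl : u ∈ closure W
  sub : W ⊆ Kᶜ
  full : ∀ C, IsPreconnected C → C ⊆ Kᶜ → C ⊆ Metric.ball u ρ → (C ∩ W).Nonempty → C ⊆ W

lemma Piece.next {K : Set (ℝ × ℝ)} (hK : IsClosed K) {u : ℝ × ℝ} (hl : LocFin K u)
    {W : Set (ℝ × ℝ)} {ρ : ℝ} (hρ : 0 < ρ) (hW : Piece K u W ρ) {ε : ℝ} (hε : 0 < ε) :
    ∃ V ρ', 0 < ρ' ∧ ρ' < ε ∧ Piece K u V ρ' ∧ V ⊆ W ∧ V ⊆ Metric.ball u ρ' := by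
  obtain ⟨r, hr, hrε, δ, hδ, T, hT, hTB⟩ := hl (min ε ρ) (lt_min hε hρ)
  set L := K ∪ Metric.sphere u r with hL
  have hLcl : IsClosed L := hK.union Metric.isClosed_sphere
  set δ' := min δ r
  have hδ' : 0 < δ' := lt_min hδ hr
  have hcl : u ∈ closure (W ∩ Metric.ball u δ') := by
    rw [Metric.mem_closure_iff]
    intro η hη
    obtain ⟨b, hb, hd⟩ := Metric.mem_closure_iff.1 hW.cl (min η δ') (lt_min hη hδ')
    exact ⟨b, ⟨hb, by rw [Metric.mem_ball, dist_comm]; exact hd.trans_le (min_le_right _ _)⟩,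
      hd.trans_le (min_le_left _ _)⟩
  have hsub : W ∩ Metric.ball u δ' ⊆ ⋃ t ∈ T, {x | x ∈ W ∩ Metric.ball u δ' ∧ NS L x t} := by
    intro x hx
    have hd : dist x u < δ' := hx.2
    have hxL : x ∉ L := by
      rintro (h | h)
      · exact hW.sub hx.1 h
      · rw [Metric.mem_sphere] at h
        linarith [min_le_right δ r]
    obtain ⟨t, ht, hxt⟩ := hTB x ⟨Metric.mem_ball.2 (hd.trans_le (min_le_left _ _)), hW.sub hx.1⟩ hxL
    exact mem_biUnion ht ⟨hx, hxt⟩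
  have hcl2 := closure_mono hsub hcl
  rw [hT.closure_biUnion] at hcl2
  simp only [mem_iUnion] at hcl2
  obtain ⟨t, ht, hcl3⟩ := hcl2
  obtain ⟨x, hx, hxt⟩ : {x | x ∈ W ∩ Metric.ball u δ' ∧ NS L x t}.Nonempty :=
    closure_nonempty_iff.1 ⟨u, hcl3⟩
  have hxL : x ∉ L := hxt.notMem_left
  set V := connectedComponentIn Lᶜ x with hV
  have hVc : IsPreconnected V := isPreconnected_connectedComponentIn
  have hxV : x ∈ V := mem_connectedComponentIn hxL
  have hVL : V ⊆ Lᶜ := connectedComponentIn_subset _ _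
  have hVK : V ⊆ Kᶜ := fun z hz h => hVL hz (Or.inl h)
  have hVb : V ⊆ Metric.ball u r := by
    have hd : Disjoint (Metric.ball u r) (Metric.closedBall u r)ᶜ :=
      disjoint_compl_right_iff_subset.2 Metric.ball_subset_closedBall
    have hcov : V ⊆ Metric.ball u r ∪ (Metric.closedBall u r)ᶜ := by
      intro z hz
      rcases lt_trichotomy (dist z u) r with h | h | h
      · exact Or.inl h
      · exact absurd (Or.inr h) (hVL hz)
      · right; rw [mem_compl_iff, Metric.mem_closedBall]; linarith
    refine hVc.subset_left_of_subset_union Metric.isOpen_ball Metric.isClosed_closedBall.isOpen_compl hd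
      hcov ⟨x, hxV, ?_⟩
    have : dist x u < δ' := hx.2
    exact Metric.mem_ball.2 (this.trans_le (min_le_right _ _))
  have hrρ : r < ρ := hrε.trans_le (min_le_right _ _)
  refine ⟨V, r, hr, hrε.trans_le (min_le_left _ _), ⟨hLcl.isOpen_compl.connectedComponentIn, hVc, ?_, hVK, ?_⟩, ?_, hVb⟩
  · refine closure_mono ?_ hcl3
    rintro z ⟨-, hzt⟩
    exact mem_comp_of_NS (hxt.trans hzt.symm)
  · intro C hC hCK hCb hCV
    obtain ⟨z, hzC, hzV⟩ := hCV
    have : V = connectedComponentIn Lᶜ z := connectedComponentIn_eq hzV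
    rw [this]
    refine hC.subset_connectedComponentIn hzC ?_
    rintro w hw (h | h)
    · exact hCK hw h
    · have := hCb hw
      rw [Metric.mem_ball] at this
      rw [Metric.mem_sphere] at h
      linarith
  · exact hW.full V hVc hVK (hVb.trans (Metric.ball_subset_ball hrρ.le)) ⟨x, hxV, hx.1⟩

/-- Accessibility. -/
theorem accessible {K : Set (ℝ × ℝ)} (hK : IsClosed K) {u p x : ℝ × ℝ} (hl : LocFin K u)
    (hu : u ∈ closure (connectedComponentIn Kᶜ p)) (hx : x ∈ connectedComponentIn Kᶜ p) :
    JoinedIn (insert u (connectedComponentIn Kᶜ p)) u x := by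
  set F := connectedComponentIn Kᶜ p with hF
  have hF0 : Piece K u F 1 := by
    refine ⟨hK.isOpen_compl.connectedComponentIn, isPreconnected_connectedComponentIn, hu,
      connectedComponentIn_subset _ _, ?_⟩
    rintro C hC hCK - ⟨z, hzC, hzF⟩
    have : F = connectedComponentIn Kᶜ z := connectedComponentIn_eq hzF
    rw [this]
    exact hC.subset_connectedComponentIn hzC hCK
  let St := {W : Set (ℝ × ℝ) × ℝ // 0 < W.2 ∧ Piece K u W.1 W.2}
  have hnext : ∀ (n : ℕ) (W : St), ∃ W' : St, W'.1.1 ⊆ W.1.1 ∧ W'.1.1 ⊆ Metric.ball u (1/(n+1)) := by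
    rintro n ⟨⟨W, ρ⟩, hρ, hW⟩
    obtain ⟨V, ρ', h1, h2, h3, h4, h5⟩ := hW.next hK hl hρ (ε := 1/((n:ℝ)+1)) (by positivity)
    exact ⟨⟨(V, ρ'), h1, h3⟩, h4, h5.trans (Metric.ball_subset_ball h2.le)⟩
  choose nx hnx1 hnx2 using hnext
  let W : ℕ → St := fun n => Nat.rec ⟨(F, 1), one_pos, hF0⟩ (fun n W => nx n W) n
  have hW1 : ∀ n, (W (n+1)).1.1 ⊆ (W n).1.1 := fun n => hnx1 n (W n)
  have hW2 : ∀ n, (W (n+1)).1.1 ⊆ Metric.ball u (1/(n+1)) := fun n => hnx2 n (W n)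
  have hWF : ∀ n, (W n).1.1 ⊆ F := by
    intro n
    induction n with
    | zero => exact subset_rfl
    | succ n ih => exact (hW1 n).trans ih
  have hne : ∀ n, ∃ y, y ∈ (W n).1.1 := fun n => closure_nonempty_iff.1 ⟨u, (W n).2.2.cl⟩
  choose y hy using hne
  let z : ℕ → ℝ × ℝ := fun n => Nat.casesOn n x (fun n => y (n+1))
  have hz : ∀ n, z n ∈ (W n).1.1 := by
    intro n
    cases n with
    | zero => exact hx
    | succ n => exact hy (n+1)
  have hJ : ∀ n, JoinedIn (W n).1.1 (z n) (z (n+1)) := by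
    intro n
    have hc : IsConnected (W n).1.1 := ⟨⟨_, hz n⟩, (W n).2.2.conn⟩
    exact ((W n).2.2.op.isConnected_iff_isPathConnected.1 hc).joinedIn _ (hz n) _ (hW1 n (hz (n+1)))
  have := joinedIn_limit (u := u) hJ (by
    intro ε hε
    obtain ⟨N, hN⟩ := exists_nat_one_div_lt hε
    refine ⟨N+1, fun n hn => ?_⟩
    obtain ⟨m, rfl⟩ : ∃ m, n = m + 1 := ⟨n - 1, by omega⟩
    refine (hW2 m).trans (Metric.ball_subset_ball ?_)
    refine le_trans ?_ hN.le
    have : (N:ℝ) ≤ m := by exact_mod_cast (by omega : N ≤ m)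
    gcongr)
  exact this.mono (insert_subset_insert (iUnion_subset hWF))
end P11
end

section
namespace P11

variable {V : Type} {G : SimpleGraph V} {D : Drawing G}

lemma pos_left_mem {u v : V} (h : G.Adj u v) : D.pos u ∈ D.arc h := by
  obtain ⟨γ, -, -, h0, -, e⟩ := D.arc_isArc h
  rw [e, ← h0]; exact ⟨0, by simp, rfl⟩

lemma pos_right_mem {u v : V} (h : G.Adj u v) : D.pos v ∈ D.arc h := by
  obtain ⟨γ, -, -, -, h1, e⟩ := D.arc_isArc h
  rw [e, ← h1]; exact ⟨1, by simp, rfl⟩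

lemma arc_IsArc {u v : V} (h : G.Adj u v) : IsArc (D.arc h) := by
  obtain ⟨γ, hc, hi, -, -, e⟩ := D.arc_isArc h
  exact ⟨γ, 0, 1, zero_le_one, hc, hi, e⟩

lemma arc_compact {u v : V} (h : G.Adj u v) : IsCompact (D.arc h) := (arc_IsArc h).isCompact
lemma arc_preconn {u v : V} (h : G.Adj u v) : IsPreconnected (D.arc h) := (arc_IsArc h).isPreconnected

lemma arc_subset_K {u v : V} (h : G.Adj u v) : D.arc h ⊆ D.drawingSet := by
  intro p hp
  right
  simp only [mem_iUnion]
  exact ⟨u, v, h, hp⟩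

lemma pos_mem_K (v : V) : D.pos v ∈ D.drawingSet := Or.inl ⟨v, rfl⟩

lemma arc_congr {u v x y : V} (h : G.Adj u v) (h' : G.Adj x y) (e : s(x, y) = s(u, v)) :
    D.arc h' = D.arc h := by
  rw [Sym2.eq_iff] at e
  rcases e with ⟨rfl, rfl⟩ | ⟨rfl, rfl⟩
  · rfl
  · exact D.arc_symm h

lemma edgeInt_eq {u v : V} (h : G.Adj u v) : D.edgeInt s(u, v) = D.arcInt h := by
  ext p
  constructor
  · rintro ⟨x, y, h', e, hp⟩
    rw [Drawing.arcInt, arc_congr h h' e.symm] at hp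
    refine ⟨hp.1, ?_⟩
    rw [Sym2.eq_iff] at e
    rcases e with ⟨rfl, rfl⟩ | ⟨rfl, rfl⟩
    · exact hp.2
    · rw [pair_comm]; exact hp.2
  · intro hp
    exact ⟨u, v, h, rfl, hp⟩

/-- Everything in the drawing except the edge `uv`. -/
def others (D : Drawing G) (u v : V) : Set (ℝ × ℝ) :=
  range D.pos ∪ ⋃ (x : V) (y : V) (h : G.Adj x y) (_ : s(x, y) ≠ s(u, v)), D.arc h

lemma K_eq {u v : V} (h : G.Adj u v) : D.drawingSet = others D u v ∪ D.arc h := by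
  apply subset_antisymm
  · rintro p (hp | hp)
    · exact Or.inl (Or.inl hp)
    · simp only [mem_iUnion] at hp
      obtain ⟨x, y, h', hp⟩ := hp
      by_cases e : s(x, y) = s(u, v)
      · right; rwa [arc_congr h h' e] at hp
      · left; right; simp only [mem_iUnion]; exact ⟨x, y, h', e, hp⟩
  · rintro p (hp | hp)
    · rcases hp with hp | hp
      · exact Or.inl hp
      · simp only [mem_iUnion] at hp
        obtain ⟨x, y, h', e, hp⟩ := hp
        exact arc_subset_K h' hp
    · exact arc_subset_K h hp

lemma K_compact [Finite V] (D : Drawing G) : IsCompact D.drawingSet := by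
  refine (finite_range _).isCompact.union ?_
  refine isCompact_iUnion fun u => isCompact_iUnion fun v => isCompact_iUnion fun h => arc_compact h

lemma others_compact [Finite V] (D : Drawing G) (u v : V) : IsCompact (others D u v) := by
  refine (finite_range _).isCompact.union ?_
  refine isCompact_iUnion fun u => isCompact_iUnion fun v => isCompact_iUnion fun h =>
    isCompact_iUnion fun _ => arc_compact h

lemma arc_subset_others {u v x y : V} (h : G.Adj x y) (e : s(x, y) ≠ s(u, v)) :
    D.arc h ⊆ others D u v := by
  intro p hp
  right; simp only [mem_iUnion]; exact ⟨x, y, h, e, hp⟩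

/-- the edge `uv` is uncrossed -/
def Unc (D : Drawing G) (u v : V) : Prop := ∀ f, ¬ D.Cross s(u, v) f

lemma Unc.symm {u v : V} (h : Unc D u v) : Unc D v u := by
  unfold Unc; rw [Sym2.eq_swap]; exact h

lemma mem_arc_cases {u v : V} (h : G.Adj u v) {p} (hp : p ∈ D.arc h) :
    p = D.pos u ∨ p = D.pos v ∨ p ∈ D.arcInt h := by
  by_cases h1 : p = D.pos u
  · exact Or.inl h1
  by_cases h2 : p = D.pos v
  · exact Or.inr (Or.inl h2)
  · exact Or.inr (Or.inr ⟨hp, by simp [h1, h2]⟩)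

lemma cross_of {u v x y : V} (h : G.Adj u v) (h' : G.Adj x y) (e : s(u, v) ≠ s(x, y)) {p}
    (hp : p ∈ D.arcInt h) (hp' : p ∈ D.arcInt h') : D.Cross s(u, v) s(x, y) :=
  ⟨e, p, by rw [edgeInt_eq h]; exact hp, by rw [edgeInt_eq h']; exact hp'⟩

lemma pos_notMem_arcInt (hg : D.IsGood) {u v : V} (h : G.Adj u v) (w : V) :
    D.pos w ∉ D.arcInt h := by
  rintro ⟨h1, h2⟩
  rcases hg.1 w h h1 with rfl | rfl <;> simp at h2

/-- arcs of vertex-disjoint noncrossing edges are disjoint -/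
lemma arc_disjoint (hg : D.IsGood) {u v x y : V} (h : G.Adj u v) (h' : G.Adj x y)
    (h1 : u ≠ x) (h2 : u ≠ y) (h3 : v ≠ x) (h4 : v ≠ y) (hc : ¬ D.Cross s(u, v) s(x, y)) :
    Disjoint (D.arc h) (D.arc h') := by
  rw [disjoint_left]
  intro p hp hp'
  rcases mem_arc_cases h hp with rfl | rfl | hi
  · rcases hg.1 _ h' hp' with h | h <;> tauto
  · rcases hg.1 _ h' hp' with h | h <;> tauto
  rcases mem_arc_cases h' hp' with rfl | rfl | hi'
  · exact pos_notMem_arcInt hg h _ hi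
  · exact pos_notMem_arcInt hg h _ hi
  refine hc (cross_of h h' ?_ hi hi')
  rw [Ne, Sym2.eq_iff]; tauto

lemma others_arcInt (hg : D.IsGood) {u v : V} (h : G.Adj u v) (hu : Unc D u v) :
    Disjoint (others D u v) (D.arcInt h) := by
  rw [disjoint_left]
  rintro p (⟨w, rfl⟩ | hp) hp'
  · exact pos_notMem_arcInt hg h _ hp'
  · simp only [mem_iUnion] at hp
    obtain ⟨x, y, h', e, hp⟩ := hp
    rcases mem_arc_cases h' hp with rfl | rfl | hi
    · exact pos_notMem_arcInt hg h _ hp'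
    · exact pos_notMem_arcInt hg h _ hp'
    · exact hu _ (cross_of h h' e.symm hp' hi)

/-- two arcs sharing a vertex meet only there -/
lemma arc_inter_adj (hg : D.IsGood) {w u v : V} (h : G.Adj w u) (h' : G.Adj w v) (hne : u ≠ v)
    {p} (hp : p ∈ D.arc h) (hp' : p ∈ D.arc h') : p = D.pos w := by
  rcases mem_arc_cases h hp with rfl | rfl | hi
  · rfl
  · rcases hg.1 _ h' hp' with e | e
    · rw [e]
    · exact absurd e hne
  rcases mem_arc_cases h' hp' with rfl | rfl | hi'
  · rfl
  · exact absurd hi (pos_notMem_arcInt hg h _)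
  · have := hg.2.2 h h' hne
    exact absurd ⟨hi, hi'⟩ (this ▸ notMem_empty p)

lemma locFin_vertex [Finite V] (hg : D.IsGood) (w : V) (hw : ∃ v, G.Adj w v) :
    LocFin D.drawingSet (D.pos w) := by
  classical
  have hex : ∀ i : {v // G.Adj w v}, ∃ γ : ℝ → ℝ × ℝ,
    ContinuousOn γ (Set.Icc 0 1) ∧ Set.InjOn γ (Set.Icc 0 1) ∧
    γ 0 = D.pos w ∧ γ 1 = D.pos i ∧ D.arc i.2 = γ '' Set.Icc (0 : ℝ) 1 := fun i => D.arc_isArc i.2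
  choose γ hc hi h0 h1 he using hex
  have hK' : IsCompact (D.pos '' {v | v ≠ w} ∪
      ⋃ (x : V) (y : V) (h : G.Adj x y) (_ : x ≠ w ∧ y ≠ w), D.arc h) := by
    refine (toFinite _).isCompact.union ?_
    refine isCompact_iUnion fun u => isCompact_iUnion fun v => isCompact_iUnion fun h =>
      isCompact_iUnion fun _ => arc_compact h
  refine locFin_star (ι := {v // G.Adj w v}) hK' ?_ hc hi h0 ?_ ?_
  · rintro (⟨v, hv, e⟩ | hp)
    · exact hv (D.pos_inj e)
    · simp only [mem_iUnion] at hp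
      obtain ⟨x, y, h', e, hp⟩ := hp
      rcases hg.1 w h' hp with r | r
      · exact e.1 r.symm
      · exact e.2 r.symm
  · rintro i j hij r ⟨hr, hr'⟩
    rw [← he] at hr hr'
    exact arc_inter_adj hg i.2 j.2 (fun h => hij (Subtype.ext h)) hr hr'
  · apply subset_antisymm
    · rintro p (⟨v, rfl⟩ | hp)
      · by_cases hv : v = w
        · obtain ⟨v', hv'⟩ := hw
          right
          refine mem_iUnion.2 ⟨⟨v', hv'⟩, ?_⟩
          rw [← he ⟨v', hv'⟩, hv]; exact pos_left_mem hv'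
        · exact Or.inl (Or.inl ⟨v, hv, rfl⟩)
      · simp only [mem_iUnion] at hp
        obtain ⟨x, y, h', hp⟩ := hp
        by_cases hx : x = w
        · subst hx
          right
          refine mem_iUnion.2 ⟨⟨y, h'⟩, ?_⟩
          rw [← he ⟨y, h'⟩]; exact hp
        by_cases hy : y = w
        · subst hy
          right
          refine mem_iUnion.2 ⟨⟨x, h'.symm⟩, ?_⟩
          rw [← he ⟨x, h'.symm⟩, D.arc_symm h']; exact hp
        left; right; simp only [mem_iUnion]; exact ⟨x, y, h', ⟨hx, hy⟩, hp⟩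
    · rintro p ((⟨v, -, rfl⟩ | hp) | hp)
      · exact pos_mem_K v
      · simp only [mem_iUnion] at hp
        obtain ⟨x, y, h', -, hp⟩ := hp
        exact arc_subset_K h' hp
      · obtain ⟨i, hp⟩ := mem_iUnion.1 hp
        rw [← he i] at hp
        exact arc_subset_K i.2 hp

/-- parametrisation of an interior point -/
lemma arcInt_param {u v : V} (h : G.Adj u v) {p} (hp : p ∈ D.arcInt h) {γ : ℝ → ℝ × ℝ}
    (h0 : γ 0 = D.pos u) (h1 : γ 1 = D.pos v) (he : D.arc h = γ '' Icc (0:ℝ) 1) :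
    ∃ χ, 0 < χ ∧ χ < 1 ∧ γ χ = p := by
  obtain ⟨hp1, hp2⟩ := hp
  rw [he] at hp1
  obtain ⟨χ, hχ, rfl⟩ := hp1
  refine ⟨χ, lt_of_le_of_ne hχ.1 ?_, lt_of_le_of_ne hχ.2 ?_, rfl⟩
  · rintro rfl; simp [h0] at hp2
  · rintro rfl; simp [h1] at hp2

lemma locFin_interior [Finite V] {u v : V} (h : G.Adj u v) {p : ℝ × ℝ}
    (hp : p ∈ D.arcInt h) (hp' : p ∉ others D u v) : LocFin D.drawingSet p := by
  obtain ⟨γ, hc, hi, h0, h1, he⟩ := D.arc_isArc h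
  obtain ⟨χ, hχ0, hχ1, hχ⟩ := arcInt_param h hp h0 h1 he
  have m1 : ∀ t ∈ Icc (0:ℝ) 1, χ - χ * t ∈ Icc (0:ℝ) 1 := by
    intro t ht
    constructor <;> nlinarith [ht.1, ht.2]
  have m2 : ∀ t ∈ Icc (0:ℝ) 1, χ + (1 - χ) * t ∈ Icc (0:ℝ) 1 := by
    intro t ht
    constructor <;> nlinarith [ht.1, ht.2]
  let f : Bool → ℝ → ℝ := fun b t => if b then χ - χ * t else χ + (1 - χ) * t
  have m : ∀ b, ∀ t ∈ Icc (0:ℝ) 1, f b t ∈ Icc (0:ℝ) 1 := by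
    intro b t ht
    cases b
    · simpa [f] using m2 t ht
    · simpa [f] using m1 t ht
  have hdis : ∀ s ∈ Icc (0:ℝ) 1, ∀ t ∈ Icc (0:ℝ) 1, f true s = f false t → f true s = χ := by
    intro s hs t ht e
    simp only [f, if_true] at e ⊢
    simp only [Bool.false_eq_true, if_false] at e
    have e1 : 0 ≤ χ * s := mul_nonneg hχ0.le hs.1
    have e2 : 0 ≤ (1 - χ) * t := mul_nonneg (by linarith) ht.1
    linarith
  refine locFin_star (ι := Bool) (others_compact D u v) hp' (γ := fun b t => γ (f b t)) ?_ ?_ ?_ ?_ ?_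
  · intro b
    refine hc.comp (f := f b) ?_ (m b)
    cases b <;> simp only [f, if_true, Bool.false_eq_true, if_false] <;> fun_prop
  · intro b s hs t ht e
    have := hi (m b s hs) (m b t ht) e
    cases b
    · simp only [f, Bool.false_eq_true, if_false] at this
      exact mul_left_cancel₀ (a := 1 - χ) (by linarith) (by linarith)
    · simp only [f, if_true] at this
      exact mul_left_cancel₀ (a := χ) (by linarith) (by linarith)
  · intro b
    cases b <;> simp [f, hχ]
  · have key : ∀ r ∈ ((fun t => γ (f true t)) '' Icc 0 1) ∩ ((fun t => γ (f false t)) '' Icc 0 1), r = p := by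
      rintro r ⟨⟨s, hs, rfl⟩, ⟨t, ht, e⟩⟩
      have := hi (m false t ht) (m true s hs) e
      have := hdis s hs t ht this.symm
      simp only
      rw [this, hχ]
    rintro i j hij r ⟨h1, h2⟩
    cases i <;> cases j
    · exact absurd rfl hij
    · exact key r ⟨h2, h1⟩
    · exact key r ⟨h1, h2⟩
    · exact absurd rfl hij
  · rw [K_eq h, he]
    congr 1
    apply subset_antisymm
    · rintro _ ⟨t, ht, rfl⟩
      rcases le_total t χ with hle | hle
      · refine mem_iUnion.2 ⟨true, (χ - t)/χ, ⟨by apply div_nonneg <;> linarith, by rw [div_le_one hχ0]; linarith [ht.1]⟩, ?_⟩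
        simp only [f, if_true]
        congr 1
        field_simp; ring
      · have h1χ : 0 < 1 - χ := by linarith
        refine mem_iUnion.2 ⟨false, (t - χ)/(1-χ), ⟨by apply div_nonneg <;> linarith, by rw [div_le_one h1χ]; linarith [ht.2]⟩, ?_⟩
        simp only [f, Bool.false_eq_true, if_false]
        congr 1
        field_simp; ring
    · intro z hz
      obtain ⟨b, t, ht, rfl⟩ := mem_iUnion.1 hz
      exact ⟨_, m b t ht, rfl⟩
end P11
end

section
namespace P11

/-- a preconnected set containing a point of `F` and one not in `F` meets the frontier -/
lemma meets_frontier {X : Type} [TopologicalSpace X] {C F : Set X} (hC : IsPreconnected C) {x y : X} (hx : x ∈ C)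
    (hxF : x ∈ F) (hy : y ∈ C) (hyF : y ∉ F) : ∃ z ∈ C, z ∈ frontier F := by
  by_contra hcon
  push Not at hcon
  have hd : Disjoint (interior F) (interior Fᶜ) :=
    disjoint_compl_right.mono interior_subset interior_subset
  have hcov : C ⊆ interior F ∪ interior Fᶜ := by
    intro z hz
    have := hcon z hz
    rw [frontier, mem_sdiff] at this
    push Not at this
    by_cases hzF : z ∈ closure F
    · exact Or.inl (this hzF)
    · right; rw [interior_compl]; exact hzF
  have hxi : x ∈ interior F := by
    rcases hcov hx with h | h
    · exact h
    · exact absurd hxF (interior_subset h)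
  have := hC.subset_left_of_subset_union isOpen_interior isOpen_interior hd hcov ⟨x, hx, hxi⟩
  exact hyF (interior_subset (this hy))

/-- a connected set with a point of its closure -/
lemma preconn_insert {X : Type} [TopologicalSpace X] {F : Set X} (hF : IsPreconnected F) {S : Set X}
    (hS : S ⊆ closure F) : IsPreconnected (F ∪ S) :=
  hF.subset_closure subset_union_left (union_subset subset_closure hS)

lemma preconn_union {X : Type} [TopologicalSpace X] {F ρ : Set X} (hF : IsPreconnected F) (hρ : IsPreconnected ρ)
    {p : X} (hp : p ∈ ρ) (hpF : p ∈ closure F) : IsPreconnected (F ∪ ρ) := by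
  have h1 : IsPreconnected (F ∪ {p}) := preconn_insert hF (by simpa using hpF)
  have : F ∪ ρ = (F ∪ {p}) ∪ ρ := by
    rw [union_assoc, union_eq_self_of_subset_left (singleton_subset_iff.2 hp)]
  rw [this]
  exact h1.union p (Or.inr rfl) hp hρ

/-- If a face touches an interior point of an open arc piece, it touches the whole piece. -/
lemma frontier_arc {K0 : Set (ℝ × ℝ)} (hK0 : IsCompact K0) {γ : ℝ → ℝ × ℝ} {s t : ℝ}
    (hc : ContinuousOn γ (Icc s t)) (hi : InjOn γ (Icc s t))
    (hK : ∀ σ ∈ Icc s t, γ σ ∈ K0 → σ = s ∨ σ = t) {F : Set (ℝ × ℝ)} (hF : IsPreconnected F)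
    (hFn : F.Nonempty)
    (hFK : Disjoint F (K0 ∪ γ '' Icc s t)) (hfr : frontier F ⊆ K0 ∪ γ '' Icc s t)
    {τ : ℝ} (hτ : τ ∈ Ioo s t) (hτF : γ τ ∈ closure F) : γ '' Icc s t ⊆ closure F := by
  have hst : s < t := hτ.1.trans hτ.2
  have key : ∀ σ ∈ Ioo s t, γ σ ∈ closure F := by
    intro σ hσ
    by_contra hcon
    have hcσ : ContinuousAt γ σ := hc.continuousAt (Icc_mem_nhds hσ.1 hσ.2)
    have hnb : γ ⁻¹' (closure F)ᶜ ∩ Ioo s t ∈ nhds σ :=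
      Filter.inter_mem (hcσ (isClosed_closure.isOpen_compl.mem_nhds hcon)) (Ioo_mem_nhds hσ.1 hσ.2)
    obtain ⟨ε, hε, hb⟩ := Metric.mem_nhds_iff.1 hnb
    have hin : ∀ z, |z - σ| ≤ ε / 2 → z ∈ γ ⁻¹' (closure F)ᶜ ∩ Ioo s t := by
      intro z hz
      exact hb (by rw [Metric.mem_ball, Real.dist_eq]; linarith)
    set σ1 := σ - ε/2
    set σ2 := σ + ε/2
    have a1 : s < σ1 := (hin σ1 (by simp only [σ1]; rw [abs_le]; constructor <;> linarith)).2.1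
    have a2 : σ2 < t := (hin σ2 (by simp only [σ2]; rw [abs_le]; constructor <;> linarith)).2.2
    have a3 : σ1 < σ := by simp only [σ1]; linarith
    have a4 : σ < σ2 := by simp only [σ2]; linarith
    obtain ⟨x, hx⟩ := hFn
    have hxK := disjoint_left.1 hFK hx
    have h0 : NS K0 x (γ σ) := by
      refine ⟨F ∪ γ '' Ioo s t, ?_, Or.inl hx, Or.inr ⟨σ, hσ, rfl⟩, ?_⟩
      · refine preconn_union hF ?_ (p := γ τ) ⟨τ, hτ, rfl⟩ hτF
        exact isPreconnected_Ioo.image _ (hc.mono Ioo_subset_Icc_self)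
      · refine Disjoint.union_left (hFK.mono_right subset_union_left) ?_
        rw [disjoint_left]
        rintro _ ⟨z, hz, rfl⟩ hzK
        rcases hK z (Ioo_subset_Icc_self hz) hzK with rfl | rfl
        · exact lt_irrefl _ hz.1
        · exact lt_irrefl _ hz.2
    have s1 : Icc s σ1 ⊆ Icc s t := Icc_subset_Icc_right (by linarith)
    have s2 : Icc σ2 t ⊆ Icc s t := Icc_subset_Icc_left (by linarith)
    have hA1 : IsArc (γ '' Icc s σ1) := ⟨γ, s, σ1, a1.le, hc.mono s1, hi.mono s1, rfl⟩
    have hA2 : IsArc (γ '' Icc σ2 t) := ⟨γ, σ2, t, a2.le, hc.mono s2, hi.mono s2, rfl⟩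
    have hx1 : x ∉ γ '' Icc s σ1 := fun h => hxK (Or.inr (image_mono s1 h))
    have hx2 : x ∉ γ '' Icc σ2 t := fun h => hxK (Or.inr (image_mono s2 h))
    have hσI := Ioo_subset_Icc_self hσ
    have hy1 : γ σ ∉ γ '' Icc s σ1 := by
      rintro ⟨z, hz, e⟩
      have := hi (s1 hz) hσI e
      linarith [hz.2]
    have hy2 : γ σ ∉ γ '' Icc σ2 t := by
      rintro ⟨z, hz, e⟩
      have := hi (s2 hz) hσI e
      linarith [hz.1]
    have h1 : NS (K0 ∪ γ '' Icc s σ1) x (γ σ) := by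
      refine ns_union_arc hK0 hA1 ?_ hx1 hy1 h0
      have : ∀ p ∈ K0 ∩ γ '' Icc s σ1, p = γ s := by
        rintro _ ⟨hp, z, hz, rfl⟩
        rcases hK z (s1 hz) hp with rfl | rfl
        · rfl
        · linarith [hz.2]
      intro p hp q hq
      rw [this p hp, this q hq]
    have h2 : NS (K0 ∪ γ '' Icc s σ1 ∪ γ '' Icc σ2 t) x (γ σ) := by
      refine ns_union_arc (hK0.union hA1.isCompact) hA2 ?_ hx2 hy2 h1
      have : ∀ p ∈ (K0 ∪ γ '' Icc s σ1) ∩ γ '' Icc σ2 t, p = γ t := by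
        rintro _ ⟨hp | ⟨z', hz', e⟩, z, hz, rfl⟩
        · rcases hK z (s2 hz) hp with rfl | rfl
          · linarith [hz.1]
          · rfl
        · have := hi (s1 hz') (s2 hz) e
          linarith [hz'.2, hz.1]
      intro p hp q hq
      rw [this p hp, this q hq]
    obtain ⟨C, hC, hxC, hyC, hCd⟩ := h2
    obtain ⟨z, hzC, hzf⟩ := meets_frontier hC hxC hx hyC (fun h => hcon (subset_closure h))
    have hzn := disjoint_left.1 hCd hzC
    rcases hfr hzf with h | ⟨w, hw, rfl⟩
    · exact hzn (Or.inl (Or.inl h))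
    · rcases le_or_gt w σ1 with h | h
      · exact hzn (Or.inl (Or.inr ⟨w, ⟨hw.1, h⟩, rfl⟩))
      rcases le_or_gt σ2 w with h' | h'
      · exact hzn (Or.inr ⟨w, ⟨h', hw.2⟩, rfl⟩)
      · exact (hin w (by rw [abs_le]; simp only [σ1, σ2] at h h'; constructor <;> linarith)).1
          (frontier_subset_closure hzf)
  have hcl : Icc s t ⊆ closure (Ioo s t) := by rw [closure_Ioo hst.ne]
  have hcc : ContinuousOn γ (closure (Ioo s t)) := by rwa [closure_Ioo hst.ne]
  calc γ '' Icc s t ⊆ γ '' closure (Ioo s t) := image_mono hcl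
    _ ⊆ closure (γ '' Ioo s t) := hcc.image_closure
    _ ⊆ closure F := closure_minimal (by rintro _ ⟨z, hz, rfl⟩; exact key z hz) isClosed_closure

variable {V : Type} {G : SimpleGraph V} {D : Drawing G}

lemma face_open [Finite V] {F : Set (ℝ × ℝ)} (h : D.IsFace F) : IsOpen F := by
  obtain ⟨p, hp, rfl⟩ := h
  exact (K_compact D).isClosed.isOpen_compl.connectedComponentIn

lemma face_preconn {F : Set (ℝ × ℝ)} (h : D.IsFace F) : IsPreconnected F := by
  obtain ⟨p, hp, rfl⟩ := h
  exact isPreconnected_connectedComponentIn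

lemma face_nonempty {F : Set (ℝ × ℝ)} (h : D.IsFace F) : F.Nonempty := by
  obtain ⟨p, hp, rfl⟩ := h
  exact ⟨p, mem_connectedComponentIn hp⟩

lemma face_disj {F : Set (ℝ × ℝ)} (h : D.IsFace F) : Disjoint F D.drawingSet := by
  obtain ⟨p, hp, rfl⟩ := h
  exact disjoint_left.2 (connectedComponentIn_subset _ _)

lemma face_frontier [Finite V] {F : Set (ℝ × ℝ)} (h : D.IsFace F) : frontier F ⊆ D.drawingSet := by
  obtain ⟨p, hp, rfl⟩ := h
  exact frontier_comp_subset (K_compact D).isClosed p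

lemma face_eq_of_NS {F F1 : Set (ℝ × ℝ)} (h : D.IsFace F) (h1 : D.IsFace F1) {x y : ℝ × ℝ}
    (hx : x ∈ F) (hy : y ∈ F1) (hns : NS D.drawingSet x y) : F = F1 := by
  obtain ⟨p, hp, rfl⟩ := h
  obtain ⟨q, hq, rfl⟩ := h1
  rw [connectedComponentIn_eq hx, connectedComponentIn_eq hy]
  exact connectedComponentIn_eq (mem_comp_of_NS hns)

lemma faces_disj {F F1 : Set (ℝ × ℝ)} (h : D.IsFace F) (h1 : D.IsFace F1) (hne : F ≠ F1) :
    Disjoint F F1 := by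
  rw [disjoint_left]
  intro x hx hx1
  exact hne (face_eq_of_NS h h1 hx hx1 (NS.refl (disjoint_left.1 (face_disj h) hx)))

lemma mem_frontier_of [Finite V] {F : Set (ℝ × ℝ)} (h : D.IsFace F) {p} (hp : p ∈ closure F)
    (hpK : p ∈ D.drawingSet) : p ∈ frontier F := by
  rw [(face_open h).frontier_eq]
  exact ⟨hp, fun h' => disjoint_left.1 (face_disj h) h' hpK⟩

/-- edge piece lemma for faces -/
lemma face_piece [Finite V] {F : Set (ℝ × ℝ)} (hF : D.IsFace F) {u v : V} (h : G.Adj u v)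
    {γ : ℝ → ℝ × ℝ} (hc : ContinuousOn γ (Icc 0 1)) (hi : InjOn γ (Icc 0 1))
    (he : D.arc h = γ '' Icc (0:ℝ) 1) {s t τ : ℝ} (hs : 0 ≤ s) (ht : t ≤ 1)
    (hot : ∀ σ ∈ Ioo s t, γ σ ∉ others D u v) (hτ : τ ∈ Ioo s t) (hτF : γ τ ∈ closure F) :
    γ '' Icc s t ⊆ closure F := by
  have hst : s < t := hτ.1.trans hτ.2
  have i1 : Icc 0 s ⊆ Icc (0:ℝ) 1 := Icc_subset_Icc_right (by linarith)
  have i2 : Icc t 1 ⊆ Icc (0:ℝ) 1 := Icc_subset_Icc_left (by linarith)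
  have i3 : Icc s t ⊆ Icc (0:ℝ) 1 := Icc_subset_Icc hs ht
  have hKe : D.drawingSet = (others D u v ∪ γ '' Icc 0 s ∪ γ '' Icc t 1) ∪ γ '' Icc s t := by
    rw [K_eq h, he, ← Icc_union_Icc_eq_Icc hs (hst.le.trans ht), ← Icc_union_Icc_eq_Icc hst.le ht,
      image_union, image_union]
    ext z; simp only [mem_union]; tauto
  refine frontier_arc (K0 := others D u v ∪ γ '' Icc 0 s ∪ γ '' Icc t 1) ?_ (hc.mono i3) (hi.mono i3) ?_
    (face_preconn hF) (face_nonempty hF) (hKe ▸ face_disj hF) (hKe ▸ face_frontier hF) hτ hτF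
  · exact ((others_compact D u v).union (isCompact_Icc.image_of_continuousOn (hc.mono i1))).union
      (isCompact_Icc.image_of_continuousOn (hc.mono i2))
  · rintro σ hσ ((hk | ⟨z, hz, e⟩) | ⟨z, hz, e⟩)
    · by_contra hcon
      push Not at hcon
      exact hot σ ⟨lt_of_le_of_ne hσ.1 (Ne.symm hcon.1), lt_of_le_of_ne hσ.2 hcon.2⟩ hk
    · have := hi (i1 hz) (i3 hσ) e
      left; linarith [hz.2, hσ.1]
    · have := hi (i2 hz) (i3 hσ) e
      right; linarith [hz.1, hσ.2]

lemma others_cross (hg : D.IsGood) {u v : V} (h : G.Adj u v) {p} (hp : p ∈ D.arcInt h)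
    (ho : p ∈ others D u v) : ∃ f, f ≠ s(u, v) ∧ p ∈ D.edgeInt f := by
  rcases ho with ⟨w, rfl⟩ | ho
  · exact absurd hp (pos_notMem_arcInt hg h w)
  simp only [mem_iUnion] at ho
  obtain ⟨x, y, h', e, ho⟩ := ho
  rcases mem_arc_cases h' ho with rfl | rfl | hi
  · exact absurd hp (pos_notMem_arcInt hg h _)
  · exact absurd hp (pos_notMem_arcInt hg h _)
  · exact ⟨s(x, y), e, by rw [edgeInt_eq h']; exact hi⟩

/-- In a true face, a boundary edge is uncrossed and lies wholly on the boundary. -/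
lemma true_edge [Finite V] (hg : D.IsGood) (h1p : D.IsOnePlanar) {F : Set (ℝ × ℝ)}
    (hF : D.IsTrueFace F) {u v : V} (h : G.Adj u v) {p} (hp : p ∈ D.arcInt h)
    (hpF : p ∈ closure F) : Unc D u v ∧ D.arc h ⊆ closure F := by
  obtain ⟨γ, hc, hi, h0, h1, he⟩ := D.arc_isArc h
  obtain ⟨τ, hτ0, hτ1, rfl⟩ := arcInt_param h hp h0 h1 he
  have hinterior : ∀ σ ∈ Ioo (0:ℝ) 1, γ σ ∈ D.arcInt h := by
    intro σ hσ
    refine ⟨by rw [he]; exact ⟨σ, Ioo_subset_Icc_self hσ, rfl⟩, ?_⟩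
    rintro (e | e)
    · rw [← h0] at e
      have := hi (Ioo_subset_Icc_self hσ) (by simp) e
      linarith [hσ.1]
    · rw [mem_singleton_iff, ← h1] at e
      have := hi (Ioo_subset_Icc_self hσ) (by simp) e
      linarith [hσ.2]
  have hcr : ∀ f, f ≠ s(u, v) → ∀ q ∈ D.arcInt h, q ∈ D.edgeInt f → q ∈ D.crossingSet :=
    fun f hf q hq hqf => ⟨s(u,v), f, Ne.symm hf, by rw [edgeInt_eq h]; exact hq, hqf⟩
  by_cases hex : ∃ f, D.Cross s(u, v) f
  · exfalso
    obtain ⟨f, hf⟩ := hex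
    obtain ⟨hne, q, hq, hqf⟩ := hf
    rw [edgeInt_eq h] at hq
    obtain ⟨χ, hχ0, hχ1, rfl⟩ := arcInt_param h hq h0 h1 he
    have hqc : γ χ ∈ D.crossingSet := hcr f hne.symm _ hq hqf
    have hχF : γ χ ∉ closure F := fun hh => hF.2 _ hqc (mem_frontier_of hF.1 hh (arc_subset_K h hq.1))
    have hot : ∀ σ ∈ Ioo (0:ℝ) 1, σ ≠ χ → γ σ ∉ others D u v := by
      intro σ hσ hne' ho
      obtain ⟨f', hf', hm⟩ := others_cross hg h (hinterior σ hσ) ho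
      have c1 : D.Cross s(u, v) f' := ⟨hf'.symm, γ σ, by rw [edgeInt_eq h]; exact hinterior σ hσ, hm⟩
      have c2 : D.Cross s(u, v) f := ⟨hne, γ χ, by rw [edgeInt_eq h]; exact hq, hqf⟩
      have : f' = f := h1p _ c1 c2
      subst this
      have := hg.2.1 _ _ hne ⟨by rw [edgeInt_eq h]; exact hinterior σ hσ, hm⟩ ⟨by rw [edgeInt_eq h]; exact hq, hqf⟩
      exact hne' (hi (Ioo_subset_Icc_self hσ) ⟨hχ0.le, hχ1.le⟩ this)
    rcases lt_trichotomy τ χ with hlt | heq | hlt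
    · have := face_piece hF.1 h hc hi he (s := 0) (t := χ) le_rfl hχ1.le
        (fun σ hσ => hot σ ⟨hσ.1, hσ.2.trans hχ1⟩ hσ.2.ne) ⟨hτ0, hlt⟩ hpF
      exact hχF (this ⟨χ, ⟨hχ0.le, le_rfl⟩, rfl⟩)
    · exact hχF (heq ▸ hpF)
    · have := face_piece hF.1 h hc hi he (s := χ) (t := 1) hχ0.le le_rfl
        (fun σ hσ => hot σ ⟨hχ0.trans hσ.1, hσ.2⟩ hσ.1.ne') ⟨hlt, hτ1⟩ hpF
      exact hχF (this ⟨χ, ⟨le_rfl, hχ1.le⟩, rfl⟩)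
  · have hunc : Unc D u v := fun f hf => hex ⟨f, hf⟩
    refine ⟨hunc, ?_⟩
    rw [he]
    refine face_piece hF.1 h hc hi he le_rfl le_rfl ?_ ⟨hτ0, hτ1⟩ hpF
    intro σ hσ ho
    exact disjoint_left.1 (others_arcInt hg h hunc) ho (hinterior σ hσ)

/-- A true face has a boundary vertex outside any given edge. -/
lemma third_vertex [Finite V] (hg : D.IsGood) (h1p : D.IsOnePlanar) {F : Set (ℝ × ℝ)}
    (hF : D.IsTrueFace F) {a b w : V} (h : G.Adj a b) (hwa : w ≠ a) (hwb : w ≠ b) :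
    ∃ c, c ≠ a ∧ c ≠ b ∧ D.pos c ∈ closure F := by
  by_contra hcon
  push Not at hcon
  have hv : ∀ c, D.pos c ∈ closure F → c = a ∨ c = b := by
    intro c hc
    by_contra hh
    push Not at hh
    exact hcon c hh.1 hh.2 hc
  have hfr : frontier F ⊆ D.arc h := by
    intro p hp
    have hpc := frontier_subset_closure hp
    rcases face_frontier hF.1 hp with ⟨c, rfl⟩ | hpK
    · rcases hv c hpc with rfl | rfl
      · exact pos_left_mem h
      · exact pos_right_mem h
    · simp only [mem_iUnion] at hpK
      obtain ⟨x, y, h', hpa⟩ := hpK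
      rcases mem_arc_cases h' hpa with rfl | rfl | hinterior
      · rcases hv _ hpc with rfl | rfl
        · exact pos_left_mem h
        · exact pos_right_mem h
      · rcases hv _ hpc with rfl | rfl
        · exact pos_left_mem h
        · exact pos_right_mem h
      · have := (true_edge hg h1p hF h' hinterior hpc).2
        have hx := hv x (this (pos_left_mem h'))
        have hy := hv y (this (pos_right_mem h'))
        have hxy := h'.ne
        have : s(x, y) = s(a, b) := by
          rw [Sym2.eq_iff]
          rcases hx with rfl | rfl <;> rcases hy with rfl | rfl <;> simp_all
        rwa [← arc_congr h h' this]
  obtain ⟨x, hx⟩ := face_nonempty hF.1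
  have hxK := disjoint_left.1 (face_disj hF.1) hx
  have h0 : NS ∅ x (D.pos w) := ⟨univ, isPreconnected_univ, trivial, trivial, by simp⟩
  have h1 := ns_union_arc isCompact_empty (arc_IsArc h) (by simp) (fun hh => hxK (arc_subset_K h hh))
    (fun hh => by rcases hg.1 w h hh with e | e <;> tauto) h0
  obtain ⟨C, hC, hxC, hyC, hCd⟩ := h1
  obtain ⟨z, hzC, hzf⟩ := meets_frontier hC hxC hx hyC
    (fun hh => disjoint_left.1 (face_disj hF.1) hh (pos_mem_K w))
  exact disjoint_left.1 hCd hzC (Or.inr (hfr hzf))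
end P11
end

section
namespace P11

variable {V : Type} {G : SimpleGraph V} {D : Drawing G}

lemma edgeInt_subset_K (e : Sym2 V) : D.edgeInt e ⊆ D.drawingSet := by
  rintro p ⟨u, v, h, -, hp⟩
  exact arc_subset_K h hp.1

/-- The drawing with one more edge `uv` drawn as `B`. -/
noncomputable def addEdge (D : Drawing G) {u v : V} (huv : u ≠ v) (B : Set (ℝ × ℝ))
    (hB : ∃ γ : ℝ → ℝ × ℝ, ContinuousOn γ (Set.Icc 0 1) ∧ Set.InjOn γ (Set.Icc 0 1) ∧
    γ 0 = D.pos u ∧ γ 1 = D.pos v ∧ B = γ '' Set.Icc (0 : ℝ) 1) :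
    Drawing (G ⊔ SimpleGraph.fromEdgeSet {s(u, v)}) where
  pos := D.pos
  pos_inj := D.pos_inj
  arc := fun x y _ => by
    classical exact if hG : G.Adj x y then D.arc hG else B
  arc_symm := by
    intro x y h
    by_cases hG : G.Adj x y
    · simp only [dif_pos hG, dif_pos hG.symm]; exact D.arc_symm hG
    · have hG' : ¬ G.Adj y x := fun h => hG h.symm
      simp only [dif_neg hG, dif_neg hG']
  arc_isArc := by
    intro x y h
    by_cases hG : G.Adj x y
    · simp only [dif_pos hG]; exact D.arc_isArc hG
    · simp only [dif_neg hG]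
      rw [SimpleGraph.sup_adj, SimpleGraph.fromEdgeSet_adj] at h
      have e := (h.resolve_left hG).1
      rw [mem_singleton_iff, Sym2.eq_iff] at e
      rcases e with ⟨rfl, rfl⟩ | ⟨rfl, rfl⟩
      · exact hB
      · obtain ⟨γ, hc, hi, h0, h1, rfl⟩ := hB
        have m : ∀ t ∈ Icc (0:ℝ) 1, 1 - t ∈ Icc (0:ℝ) 1 := fun t ht => ⟨by linarith [ht.2], by linarith [ht.1]⟩
        refine ⟨fun t => γ (1 - t), ?_, ?_, by simpa using h1, by simpa using h0, ?_⟩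
        · exact hc.comp (f := fun t => 1 - t) (by fun_prop) m
        · intro s hs t ht e
          have := hi (m s hs) (m t ht) e
          linarith
        · apply subset_antisymm
          · rintro _ ⟨t, ht, rfl⟩
            exact ⟨1 - t, m t ht, by simp⟩
          · rintro _ ⟨t, ht, rfl⟩
            exact ⟨1 - t, m t ht, rfl⟩

lemma add_edge (hmax : D.IsMaximalOnePlane) {u v a b : V} (huv : u ≠ v) {p : ℝ × ℝ}
    {δ : ℝ → ℝ × ℝ} (hc : ContinuousOn δ (Icc 0 1)) (hi : InjOn δ (Icc 0 1))
    (h0 : δ 0 = D.pos u) (h1 : δ 1 = D.pos v)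
    (H : ∀ q ∈ δ '' Icc 0 1, q ∈ D.drawingSet → q = D.pos u ∨ q = D.pos v ∨
      (q = p ∧ q ∈ D.edgeInt s(a, b) ∧ Unc D a b ∧ a ≠ u ∧ a ≠ v ∧ b ≠ u ∧ b ≠ v)) :
    G.Adj u v := by
  by_contra hadj
  obtain ⟨hg, h1p, hm⟩ := hmax
  set B := δ '' Icc 0 1 with hBdef
  set D' := addEdge D huv B ⟨δ, hc, hi, h0, h1, rfl⟩ with hD'
  set I := B \ {D.pos u, D.pos v} with hI
  have hIe : ∀ q ∈ I, ∀ f, q ∈ D.edgeInt f → q = p ∧ f = s(a, b) ∧ Unc D a b ∧ a ≠ u ∧ a ≠ v ∧ b ≠ u ∧ b ≠ v := by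
    intro q hq f hf
    rcases H q hq.1 (edgeInt_subset_K f hf) with h | h | ⟨e1, e2, e3, e4⟩
    · exact absurd (Or.inl h) hq.2
    · exact absurd (Or.inr h) hq.2
    · refine ⟨e1, ?_, e3, e4⟩
      by_contra hne
      exact e3 f ⟨Ne.symm hne, q, e2, hf⟩
  have hnew : ∀ x y : V, s(x, y) = s(u, v) → ¬ G.Adj x y := by
    intro x y e hh
    rw [Sym2.eq_iff] at e
    rcases e with ⟨rfl, rfl⟩ | ⟨rfl, rfl⟩
    · exact hadj hh
    · exact hadj hh.symm
  have hold : ∀ ⦃x y : V⦄ (h' : (G ⊔ SimpleGraph.fromEdgeSet {s(u, v)}).Adj x y) (h : G.Adj x y),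
      D'.arc h' = D.arc h := by
    intro x y h' h
    simp only [hD', addEdge, dif_pos h]
  have hnewarc : ∀ ⦃x y : V⦄ (h' : (G ⊔ SimpleGraph.fromEdgeSet {s(u, v)}).Adj x y) (h : ¬ G.Adj x y),
      D'.arc h' = B := by
    intro x y h' h
    simp only [hD', addEdge, dif_neg h]
  have hnewe : ∀ ⦃x y : V⦄ (h' : (G ⊔ SimpleGraph.fromEdgeSet {s(u, v)}).Adj x y) (h : ¬ G.Adj x y),
      s(x, y) = s(u, v) := by
    intro x y h' h
    rw [SimpleGraph.sup_adj, SimpleGraph.fromEdgeSet_adj] at h'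
    exact (h'.resolve_left h).1
  have hpair : ∀ x y : V, s(x, y) = s(u, v) → ({D.pos x, D.pos y} : Set (ℝ × ℝ)) = {D.pos u, D.pos v} := by
    intro x y e
    rw [Sym2.eq_iff] at e
    rcases e with ⟨rfl, rfl⟩ | ⟨rfl, rfl⟩
    · rfl
    · exact pair_comm _ _
  have hinterior : ∀ ⦃x y : V⦄ (h' : (G ⊔ SimpleGraph.fromEdgeSet {s(u, v)}).Adj x y) (h : ¬ G.Adj x y),
      D'.arcInt h' = I := by
    intro x y h' h
    show D'.arc h' \ {D.pos x, D.pos y} = _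
    rw [hnewarc h' h, hpair x y (hnewe h' h)]
  have hinto : ∀ ⦃x y : V⦄ (h' : (G ⊔ SimpleGraph.fromEdgeSet {s(u, v)}).Adj x y) (h : G.Adj x y),
      D'.arcInt h' = D.arcInt h := by
    intro x y h' h
    show D'.arc h' \ {D.pos x, D.pos y} = _
    rw [hold h' h]; rfl
  have hE : ∀ e q, q ∈ D'.edgeInt e → (e ≠ s(u, v) ∧ q ∈ D.edgeInt e) ∨ (e = s(u, v) ∧ q ∈ I) := by
    rintro e q ⟨x, y, h, rfl, hq⟩
    by_cases hG : G.Adj x y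
    · left
      rw [hinto h hG] at hq
      exact ⟨fun e => hnew x y e hG, by rw [edgeInt_eq hG]; exact hq⟩
    · right
      rw [hinterior h hG] at hq
      exact ⟨hnewe h hG, hq⟩
  refine hm u v huv hadj D' rfl (fun x y h => hold _ h) ⟨⟨?_, ?_, ?_⟩, ?_⟩
  · intro w x y h hw
    by_cases hG : G.Adj x y
    · rw [hold h hG] at hw
      exact hg.1 w hG hw
    · rw [hnewarc h hG] at hw
      have : w = u ∨ w = v := by
        rcases H _ hw (pos_mem_K w) with h | h | h
        · exact Or.inl (D.pos_inj h)
        · exact Or.inr (D.pos_inj h)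
        · obtain ⟨x', y', h', -, hp⟩ := h.2.1
          exact absurd hp (pos_notMem_arcInt hg h' w)
      have e := hnewe h hG
      rw [Sym2.eq_iff] at e
      rcases e with ⟨rfl, rfl⟩ | ⟨rfl, rfl⟩
      · exact this
      · exact this.symm
  · intro e f hne q hq q' hq'
    rcases hE e q hq.1 with ⟨a0, a1⟩ | ⟨a0, a1⟩ <;> rcases hE f q hq.2 with ⟨b0, b1⟩ | ⟨b0, b1⟩ <;>
    rcases hE e q' hq'.1 with ⟨c0, c1⟩ | ⟨c0, c1⟩ <;> rcases hE f q' hq'.2 with ⟨d0, d1⟩ | ⟨d0, d1⟩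
    all_goals first
      | exact hg.2.1 e f hne ⟨a1, b1⟩ ⟨c1, d1⟩
      | exact absurd (a0.trans b0.symm) hne
      | exact absurd (c0.trans d0.symm) hne
      | exact absurd a0 c0
      | exact absurd b0 d0
      | exact (hIe q a1 f b1).1.trans (hIe q' c1 f d1).1.symm
      | exact (hIe q b1 e a1).1.trans (hIe q' d1 e c1).1.symm
      | exact absurd c0 a0
      | exact absurd d0 b0
  · intro x y z h h' hne
    have aux : ∀ ⦃x y z : V⦄ (h : G.Adj x y) (e : s(x, z) = s(u, v)), ∀ q ∈ D.arcInt h, q ∈ I → False := by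
      intro x y z h e q hq hqI
      obtain ⟨-, e1, -, c1, c2, c3, c4⟩ := hIe q hqI s(x, y) (by rw [edgeInt_eq h]; exact hq)
      have hx : x = a ∨ x = b := by
        rw [Sym2.eq_iff] at e1; tauto
      have hx' : x = u ∨ x = v := by
        rw [Sym2.eq_iff] at e; tauto
      rcases hx with rfl | rfl <;> rcases hx' with rfl | rfl <;> tauto
    rw [eq_empty_iff_forall_notMem]
    rintro q ⟨q1, q2⟩
    by_cases hG : G.Adj x y
    · rw [hinto h hG] at q1
      by_cases hG' : G.Adj x z
      · rw [hinto h' hG'] at q2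
        have := hg.2.2 hG hG' hne
        exact (this ▸ notMem_empty q) ⟨q1, q2⟩
      · rw [hinterior h' hG'] at q2
        exact aux hG (hnewe h' hG') q q1 q2
    · rw [hinterior h hG] at q1
      by_cases hG' : G.Adj x z
      · rw [hinto h' hG'] at q2
        exact aux hG' (hnewe h hG) q q2 q1
      · have := (hnewe h hG).trans (hnewe h' hG').symm
        exact hne (Sym2.congr_right.1 this)
  · rintro e f ⟨n1, q, hq, hqf⟩ f' ⟨n2, q', hq', hqf'⟩
    rcases hE e q hq with ⟨a0, a1⟩ | ⟨a0, a1⟩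
    · have A1 : q' ∈ D.edgeInt e := by
        rcases hE e q' hq' with ⟨_, c1⟩ | ⟨c0, _⟩
        · exact c1
        · exact absurd c0 a0
      have key : ∀ r, r ∈ D.edgeInt e → r ∈ I → ∀ f, e ≠ f → ∀ s, s ∈ D.edgeInt e → s ∈ D.edgeInt f → False := by
        intro r hr hrI f hf s hs hsf
        obtain ⟨-, e1, e2, -⟩ := hIe r hrI e hr
        subst e1
        exact e2 f ⟨hf, s, hs, hsf⟩
      rcases hE f q hqf with ⟨b0, b1⟩ | ⟨b0, b1⟩ <;> rcases hE f' q' hqf' with ⟨d0, d1⟩ | ⟨d0, d1⟩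
      · exact h1p e ⟨n1, q, a1, b1⟩ ⟨n2, q', A1, d1⟩
      · exact (key q' A1 d1 f n1 q a1 b1).elim
      · exact (key q a1 b1 f' n2 q' A1 d1).elim
      · rw [b0, d0]
    · subst a0
      rcases hE f q hqf with ⟨b0, b1⟩ | ⟨b0, b1⟩
      swap
      · exact absurd b0.symm n1
      rcases hE f' q' hqf' with ⟨d0, d1⟩ | ⟨d0, d1⟩
      swap
      · exact absurd d0.symm n2
      rcases hE _ q' hq' with ⟨c0, _⟩ | ⟨_, c1⟩
      · exact absurd rfl c0
      rw [(hIe q a1 f b1).2.1, (hIe q' c1 f' d1).2.1]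
end P11
end

section
namespace P11

variable {V : Type} {G : SimpleGraph V} {D : Drawing G}

lemma arcInt_nonempty (hg : D.IsGood) {u v : V} (h : G.Adj u v) : (D.arcInt h).Nonempty := by
  obtain ⟨γ, hc, hi, h0, h1, he⟩ := D.arc_isArc h
  refine ⟨γ (1/2), by rw [he]; exact ⟨1/2, by constructor <;> norm_num, rfl⟩, ?_⟩
  rintro (e | e)
  · rw [← h0] at e
    have := hi (by constructor <;> norm_num) (by simp) e
    norm_num at this
  · rw [mem_singleton_iff, ← h1] at e
    have := hi (by constructor <;> norm_num) (by simp) e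
    norm_num at this

/-- `F1` is a face neighbouring `F` along the uncrossed edge `ab`, with a further vertex `d`. -/
structure Nb (D : Drawing G) (F F1 : Set (ℝ × ℝ)) (a b d : V) : Prop where
  hF : D.IsFace F
  hF1 : D.IsFace F1
  ne : F ≠ F1
  adj : G.Adj a b
  unc : Unc D a b
  s0 : D.arc adj ⊆ closure F
  s1 : D.arc adj ⊆ closure F1
  hd : D.pos d ∈ closure F1
  da : d ≠ a
  db : d ≠ b

lemma Nb.symm {F F1 : Set (ℝ × ℝ)} {a b d : V} (h : Nb D F F1 a b d) : Nb D F F1 b a d :=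
  ⟨h.hF, h.hF1, h.ne, h.adj.symm, h.unc.symm, by rw [D.arc_symm]; exact h.s0,
    by rw [D.arc_symm]; exact h.s1, h.hd, h.db, h.da⟩

lemma Nb.a0 {F F1 : Set (ℝ × ℝ)} {a b d : V} (h : Nb D F F1 a b d) : D.pos a ∈ closure F :=
  h.s0 (pos_left_mem _)
lemma Nb.b0 {F F1 : Set (ℝ × ℝ)} {a b d : V} (h : Nb D F F1 a b d) : D.pos b ∈ closure F :=
  h.s0 (pos_right_mem _)
lemma Nb.a1 {F F1 : Set (ℝ × ℝ)} {a b d : V} (h : Nb D F F1 a b d) : D.pos a ∈ closure F1 :=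
  h.s1 (pos_left_mem _)
lemma Nb.b1 {F F1 : Set (ℝ × ℝ)} {a b d : V} (h : Nb D F F1 a b d) : D.pos b ∈ closure F1 :=
  h.s1 (pos_right_mem _)

/-- `x` and `y` are joined by a continuum avoiding both faces, the open edge `ab` and `ρ`. -/
def Free (D : Drawing G) (F F1 : Set (ℝ × ℝ)) (a b : V) (ρ : Set (ℝ × ℝ)) (x y : V) : Prop :=
  ∃ P : Set (ℝ × ℝ), IsCompact P ∧ IsPreconnected P ∧ D.pos x ∈ P ∧ D.pos y ∈ P ∧
    Disjoint P F ∧ Disjoint P F1 ∧ Disjoint P (D.edgeInt s(a, b)) ∧ Disjoint P ρ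

lemma Free.symm {F F1 ρ : Set (ℝ × ℝ)} {a b x y : V} (h : Free D F F1 a b ρ x y) :
    Free D F F1 a b ρ y x := by
  obtain ⟨P, h1, h2, h3, h4, h5⟩ := h
  exact ⟨P, h1, h2, h4, h3, h5⟩

lemma Free.trans {F F1 ρ : Set (ℝ × ℝ)} {a b x y z : V} (h : Free D F F1 a b ρ x y)
    (h' : Free D F F1 a b ρ y z) : Free D F F1 a b ρ x z := by
  obtain ⟨P, h1, h2, h3, h4, h5, h6, h7, h8⟩ := h
  obtain ⟨P', h1', h2', h3', h4', h5', h6', h7', h8'⟩ := h'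
  exact ⟨P ∪ P', h1.union h1', h2.union _ h4 h3' h2', Or.inl h3, Or.inr h4',
    h5.union_left h5', h6.union_left h6', h7.union_left h7', h8.union_left h8'⟩

lemma others_subset_K {u v : V} : others D u v ⊆ D.drawingSet := by
  rintro p (hp | hp)
  · exact Or.inl hp
  · simp only [mem_iUnion] at hp
    obtain ⟨x, y, h', e, hp⟩ := hp
    exact arc_subset_K h' hp

lemma others_inter_arc (hg : D.IsGood) {u v : V} (h : G.Adj u v) (hu : Unc D u v) :
    ∀ r ∈ others D u v ∩ D.arc h, r = D.pos u ∨ r = D.pos v := by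
  rintro r ⟨hr, hr'⟩
  rcases mem_arc_cases h hr' with h' | h' | h'
  · exact Or.inl h'
  · exact Or.inr h'
  · exact absurd h' (disjoint_left.1 (others_arcInt hg h hu) hr)

/-- the main separation lemma -/
lemma Nb.sep [Finite V] (hg : D.IsGood) {F F1 ρ : Set (ℝ × ℝ)} {a b d : V} (h : Nb D F F1 a b d)
    (hρ : IsPreconnected ρ) {p q : ℝ × ℝ} (hp : p ∈ ρ) (hpF : p ∈ closure F) (hq : q ∈ ρ)
    (hqF : q ∈ closure F1) (hd : Disjoint ρ (D.arc h.adj)) : ¬ Free D F F1 a b ρ a b := by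
  rintro ⟨P, hPc, hPp, haP, hbP, hPF, hPF1, hPA, hPρ⟩
  rw [edgeInt_eq h.adj] at hPA
  obtain ⟨x, hx⟩ := face_nonempty h.hF
  obtain ⟨y, hy⟩ := face_nonempty h.hF1
  have hFK := face_disj h.hF
  have hF1K := face_disj h.hF1
  have hxA : x ∉ D.arc h.adj := fun hh => disjoint_left.1 hFK hx (arc_subset_K _ hh)
  have hyA : y ∉ D.arc h.adj := fun hh => disjoint_left.1 hF1K hy (arc_subset_K _ hh)
  have hAi : D.arcInt h.adj ⊆ D.arc h.adj := sdiff_subset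
  have n1 : NS (others D a b ∪ P) x y := by
    obtain ⟨z, hz⟩ := arcInt_nonempty hg h.adj
    refine ⟨(F ∪ D.arcInt h.adj) ∪ (F1 ∪ D.arcInt h.adj), ?_, Or.inl (Or.inl hx), Or.inr (Or.inl hy), ?_⟩
    · exact (preconn_insert (face_preconn h.hF) (hAi.trans h.s0)).union z (Or.inr hz) (Or.inr hz)
        (preconn_insert (face_preconn h.hF1) (hAi.trans h.s1))
    · have d1 := others_arcInt hg h.adj h.unc
      rw [disjoint_left] at *
      rintro r ((hr | hr) | (hr | hr)) (hr' | hr')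
      · exact hFK hr (others_subset_K hr')
      · exact hPF hr' hr
      · exact d1 hr' hr
      · exact hPA hr' hr
      · exact hF1K hr (others_subset_K hr')
      · exact hPF1 hr' hr
      · exact d1 hr' hr
      · exact hPA hr' hr
  have n2 : NS (P ∪ D.arc h.adj) x y := by
    refine ⟨F1 ∪ (F ∪ ρ), ?_, Or.inr (Or.inl hx), Or.inl hy, ?_⟩
    · exact preconn_union (face_preconn h.hF1) (preconn_union (face_preconn h.hF) hρ hp hpF)
        (Or.inr hq) hqF
    · rw [disjoint_left] at *
      rintro r (hr | (hr | hr)) (hr' | hr')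
      · exact hPF1 hr' hr
      · exact hF1K hr (arc_subset_K _ hr')
      · exact hPF hr' hr
      · exact hFK hr (arc_subset_K _ hr')
      · exact hPρ hr' hr
      · exact hd hr hr'
  have n3 := ns_cycle (others_compact D a b) (arc_IsArc h.adj) hPc hPp (others_inter_arc hg h.adj h.unc)
    haP hbP (pos_left_mem _) (pos_right_mem _) hxA hyA n1 n2
  rw [← K_eq h.adj] at n3
  exact h.ne (face_eq_of_NS h.hF h.hF1 hx hy n3)

/-- three distinct faces cannot share an edge -/
lemma Nb.same_edge [Finite V] (hg : D.IsGood) {F F1 F2 : Set (ℝ × ℝ)} {a b d d' : V}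
    (h : Nb D F F1 a b d) (h' : Nb D F F2 a b d') : F1 = F2 := by
  by_contra hne
  obtain ⟨x, hx⟩ := face_nonempty h.hF
  obtain ⟨y, hy⟩ := face_nonempty h.hF1
  obtain ⟨z, hz⟩ := face_nonempty h'.hF1
  have nA : ∀ {F x}, D.IsFace F → x ∈ F → x ∉ D.arc h.adj :=
    fun hF hx hh => disjoint_left.1 (face_disj hF) hx (arc_subset_K _ hh)
  have hAi : D.arcInt h.adj ⊆ D.arc h.adj := sdiff_subset
  have n1 : ∀ {F F1 : Set (ℝ × ℝ)} {x y : ℝ × ℝ}, D.IsFace F → D.IsFace F1 → D.arc h.adj ⊆ closure F →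
      D.arc h.adj ⊆ closure F1 → x ∈ F → y ∈ F1 → NS (others D a b) x y := by
    intro F F1 x y hF hF1 s0 s1 hx hy
    obtain ⟨z, hz⟩ := arcInt_nonempty hg h.adj
    refine ⟨(F ∪ D.arcInt h.adj) ∪ (F1 ∪ D.arcInt h.adj), ?_, Or.inl (Or.inl hx), Or.inr (Or.inl hy), ?_⟩
    · exact (preconn_insert (face_preconn hF) (hAi.trans s0)).union z (Or.inr hz) (Or.inr hz)
        (preconn_insert (face_preconn hF1) (hAi.trans s1))
    · have d1 := others_arcInt hg h.adj h.unc
      have hFK := face_disj hF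
      have hF1K := face_disj hF1
      rw [disjoint_left] at *
      rintro r ((hr | hr) | (hr | hr)) hr'
      · exact hFK hr (others_subset_K hr')
      · exact d1 hr' hr
      · exact hF1K hr (others_subset_K hr')
      · exact d1 hr' hr
  have := ns_theta (others_compact D a b) (arc_IsArc h.adj) (others_inter_arc hg h.adj h.unc)
    (nA h.hF hx) (nA h.hF1 hy) (nA h'.hF1 hz) (n1 h.hF h'.hF1 h.s0 h'.s1 hx hz)
    (n1 h.hF1 h'.hF1 h.s1 h'.s1 hy hz)
  rw [← K_eq h.adj] at this
  rcases this with e | e | e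
  · exact h.ne (face_eq_of_NS h.hF h.hF1 hx hy e)
  · exact hne (face_eq_of_NS h.hF1 h'.hF1 hy hz e)
  · exact h'.ne (face_eq_of_NS h.hF h'.hF1 hx hz e)

lemma face_join [Finite V] {F : Set (ℝ × ℝ)} (hF : D.IsFace F) {u x : ℝ × ℝ} (hl : LocFin D.drawingSet u)
    (hu : u ∈ closure F) (hx : x ∈ F) : JoinedIn (insert u F) u x := by
  obtain ⟨p, hp, rfl⟩ := hF
  exact accessible (K_compact D).isClosed hl hu hx

lemma face_join2 [Finite V] {F : Set (ℝ × ℝ)} (hF : D.IsFace F) {u v : ℝ × ℝ} (hl : LocFin D.drawingSet u)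
    (hu : u ∈ closure F) (hl' : LocFin D.drawingSet v) (hv : v ∈ closure F) :
    JoinedIn (F ∪ {u, v}) u v := by
  obtain ⟨x, hx⟩ := face_nonempty hF
  refine ((face_join hF hl hu hx).mono ?_).trans ((face_join hF hl' hv hx).mono ?_).symm
  · rintro r (rfl | hr) <;> simp [*]
  · rintro r (rfl | hr) <;> simp [*]

/-- continuum through a face -/
lemma face_link [Finite V] (hg : D.IsGood) (hiso : ∀ w, ∃ v, G.Adj w v) {F : Set (ℝ × ℝ)}
    (hF : D.IsFace F) {x y : V} (hx : D.pos x ∈ closure F) (hy : D.pos y ∈ closure F) :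
    ∃ P, IsCompact P ∧ IsPreconnected P ∧ D.pos x ∈ P ∧ D.pos y ∈ P ∧ P ⊆ F ∪ {D.pos x, D.pos y} := by
  obtain ⟨γ, hγ⟩ := face_join2 hF (locFin_vertex hg x (hiso x)) hx (locFin_vertex hg y (hiso y)) hy
  refine ⟨range γ, isCompact_range γ.continuous, isPreconnected_range γ.continuous, ⟨0, by simp⟩,
    ⟨1, by simp⟩, ?_⟩
  rintro _ ⟨t, rfl⟩
  exact hγ t

lemma face_adj [Finite V] (hmax : D.IsMaximalOnePlane) (hiso : ∀ w, ∃ v, G.Adj w v) {F : Set (ℝ × ℝ)}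
    (hF : D.IsFace F) {x y : V} (hx : D.pos x ∈ closure F) (hy : D.pos y ∈ closure F) (hxy : x ≠ y) :
    G.Adj x y := by
  have hg := hmax.1
  obtain ⟨δ, hc, hi, h0, h1, hs⟩ := arc_of_joinedIn
    (face_join2 hF (locFin_vertex hg x (hiso x)) hx (locFin_vertex hg y (hiso y)) hy)
    (fun e => hxy (D.pos_inj e))
  refine add_edge (a := x) (b := y) (p := D.pos x) hmax hxy hc hi h0 h1 ?_
  intro q hq hqK
  rcases hs hq with h | h | h
  · exact absurd hqK (disjoint_left.1 (face_disj hF) h)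
  · exact Or.inl h
  · exact Or.inr (Or.inl h)

lemma Nb.cross_adj [Finite V] (hmax : D.IsMaximalOnePlane) (hiso : ∀ w, ∃ v, G.Adj w v)
    {F F1 : Set (ℝ × ℝ)} {a b d c : V} (h : Nb D F F1 a b d) (hc : D.pos c ∈ closure F) (hca : c ≠ a)
    (hcb : c ≠ b) (hcd : c ≠ d) : G.Adj c d := by
  have hg := hmax.1
  obtain ⟨p, hp⟩ := arcInt_nonempty hg h.adj
  have hlp : LocFin D.drawingSet p :=
    locFin_interior h.adj hp (fun hh => disjoint_left.1 (others_arcInt hg h.adj h.unc) hh hp)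
  have j1 := face_join2 h.hF (locFin_vertex hg c (hiso c)) hc hlp (h.s0 hp.1)
  have j2 := face_join2 h.hF1 hlp (h.s1 hp.1) (locFin_vertex hg d (hiso d)) h.hd
  have j : JoinedIn (F ∪ F1 ∪ {p, D.pos c, D.pos d}) (D.pos c) (D.pos d) := by
    refine (j1.mono ?_).trans (j2.mono ?_)
    · rintro r (hr | rfl | rfl) <;> simp [*]
    · rintro r (hr | rfl | rfl) <;> simp [*]
  obtain ⟨δ, hc, hi, h0, h1, hs⟩ := arc_of_joinedIn j (fun e => hcd (D.pos_inj e))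
  refine add_edge (a := a) (b := b) (p := p) hmax hcd hc hi h0 h1 ?_
  intro q hq hqK
  rcases hs hq with (h' | h') | (h' | h' | h')
  · exact absurd hqK (disjoint_left.1 (face_disj h.hF) h')
  · exact absurd hqK (disjoint_left.1 (face_disj h.hF1) h')
  · exact Or.inr (Or.inr ⟨h', by rw [edgeInt_eq h.adj, h']; exact hp, h.unc, hca.symm, h.da.symm, hcb.symm, h.db.symm⟩)
  · exact Or.inl h'
  · exact Or.inr (Or.inl h')

/-- an edge gives a free link -/
lemma Nb.free_edge (hg : D.IsGood) {F F1 ρ : Set (ℝ × ℝ)} {a b d x y : V} (h : Nb D F F1 a b d)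
    (hxy : G.Adj x y) (hne : s(x, y) ≠ s(a, b)) (hρ : Disjoint (D.arc hxy) ρ) :
    Free D F F1 a b ρ x y := by
  refine ⟨D.arc hxy, arc_compact _, arc_preconn _, pos_left_mem _, pos_right_mem _,
    (face_disj h.hF).symm.mono_left (arc_subset_K _), (face_disj h.hF1).symm.mono_left (arc_subset_K _), ?_, hρ⟩
  rw [edgeInt_eq h.adj]
  exact (others_arcInt hg h.adj h.unc).mono_left (arc_subset_others hxy hne)

/-- a face gives a free link -/
lemma Nb.free_face [Finite V] (hg : D.IsGood) (hiso : ∀ w, ∃ v, G.Adj w v)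
    {F F1 F2 ρ : Set (ℝ × ℝ)} {a b d x y : V} (h : Nb D F F1 a b d)
    (hF2 : D.IsFace F2) (n0 : F2 ≠ F) (n1 : F2 ≠ F1)
    (hx : D.pos x ∈ closure F2) (hy : D.pos y ∈ closure F2) (hρ : Disjoint F2 ρ) (hxρ : D.pos x ∉ ρ)
    (hyρ : D.pos y ∉ ρ) : Free D F F1 a b ρ x y := by
  obtain ⟨P, hP, hPp, hxP, hyP, hs⟩ := face_link hg hiso hF2 hx hy
  refine ⟨P, hP, hPp, hxP, hyP, ?_, ?_, ?_, ?_⟩ <;> rw [disjoint_left] <;> intro r hr hr' <;>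
    rcases hs hr with h' | rfl | rfl
  · exact disjoint_left.1 (faces_disj hF2 h.hF n0) h' hr'
  · exact disjoint_left.1 (face_disj h.hF) hr' (pos_mem_K _)
  · exact disjoint_left.1 (face_disj h.hF) hr' (pos_mem_K _)
  · exact disjoint_left.1 (faces_disj hF2 h.hF1 n1) h' hr'
  · exact disjoint_left.1 (face_disj h.hF1) hr' (pos_mem_K _)
  · exact disjoint_left.1 (face_disj h.hF1) hr' (pos_mem_K _)
  · exact disjoint_left.1 (face_disj hF2) h' (edgeInt_subset_K _ hr')
  · rw [edgeInt_eq h.adj] at hr'; exact pos_notMem_arcInt hg _ _ hr'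
  · rw [edgeInt_eq h.adj] at hr'; exact pos_notMem_arcInt hg _ _ hr'
  · exact disjoint_left.1 hρ h' hr'
  · exact hxρ hr'
  · exact hyρ hr'

/-- extraction of the neighbour structure -/
lemma exists_nb [Finite V] (hg : D.IsGood) (h1p : D.IsOnePlanar) (hcard : 3 ≤ Nat.card V)
    {F F1 : Set (ℝ × ℝ)} (hF : D.IsTrueFace F)
    (hF1 : D.IsTrueFace F1) (hadj : D.FaceAdj F F1) :
    ∃ a b c d, Nb D F F1 a b d ∧ D.pos c ∈ closure F ∧ c ≠ a ∧ c ≠ b := by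
  obtain ⟨hne, p, hp, hp1, hpv, hpc⟩ := hadj
  rcases face_frontier hF.1 hp with h | h
  · exact absurd h hpv
  simp only [mem_iUnion] at h
  obtain ⟨a, b, h, hpa⟩ := h
  have hpi : p ∈ D.arcInt h := by
    rcases mem_arc_cases h hpa with rfl | rfl | hi
    · exact absurd ⟨_, rfl⟩ hpv
    · exact absurd ⟨_, rfl⟩ hpv
    · exact hi
  obtain ⟨hu, s0⟩ := true_edge hg h1p hF h hpi (frontier_subset_closure hp)
  obtain ⟨-, s1⟩ := true_edge hg h1p hF1 h hpi (frontier_subset_closure hp1)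
  have hw : ∃ w, w ≠ a ∧ w ≠ b := by
    by_contra hcon
    push Not at hcon
    have : (univ : Set V) ⊆ {a, b} := by
      intro w _
      by_cases hwa : w = a
      · exact Or.inl hwa
      · exact Or.inr (hcon w hwa)
    have h2 := ncard_le_ncard this (toFinite _)
    have h3 := ncard_insert_le a {b}
    rw [ncard_singleton] at h3
    rw [ncard_univ] at h2
    omega
  obtain ⟨w, hwa, hwb⟩ := hw
  obtain ⟨c, hca, hcb, hc⟩ := third_vertex hg h1p hF h hwa hwb
  obtain ⟨d, hda, hdb, hd⟩ := third_vertex hg h1p hF1 h hwa hwb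
  exact ⟨a, b, c, d, ⟨hF.1, hF1.1, hne, h, hu, s0, s1, hd, hda, hdb⟩, hc, hca, hcb⟩
end P11
end

section
namespace P11

variable {V : Type} {G : SimpleGraph V} {D : Drawing G}

/-- reachability avoiding `S` -/
def Rch (G : SimpleGraph V) (S : Set V) (x y : V) : Prop :=
  Relation.ReflTransGen (fun u v => G.Adj u v ∧ u ∉ S ∧ v ∉ S) x y

lemma Rch.mono {S T : Set V} (h : S ⊆ T) {x y : V} (hr : Rch G T x y) : Rch G S x y := by
  induction hr with
  | refl => exact Relation.ReflTransGen.refl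
  | tail _ e ih =>
    exact Relation.ReflTransGen.tail ih ⟨e.1, fun h' => e.2.1 (h h'), fun h' => e.2.2 (h h')⟩

lemma KConnected.rch {k : ℕ} (hk : KConnected G k) {S : Set V} (hS : S.ncard < k) {x y : V}
    (hx : x ∉ S) (hy : y ∉ S) : Rch G S x y := by
  have h := (hk S hS).preconnected ⟨x, hx⟩ ⟨y, hy⟩
  obtain ⟨p⟩ := h
  suffices H : ∀ (u v : (Sᶜ : Set V)), (G.induce Sᶜ).Walk u v → Rch G S u v from H _ _ p
  intro u v p
  induction p with
  | nil => exact Relation.ReflTransGen.refl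
  | @cons u v w h _ ih => exact Relation.ReflTransGen.head ⟨h, u.2, v.2⟩ ih

lemma Rch.first_hit {S : Set V} {w a c : V} (hw : w ≠ a) (hw' : w ≠ c) (hac : a ≠ c)
    (h : Rch G S w a) : Rch G (insert c S) w a ∨ Rch G (insert a S) w c := by
  suffices H : ∀ x, Rch G S w x → (x ≠ a ∧ x ≠ c ∧ Rch G (insert a (insert c S)) w x) ∨
      Rch G (insert c S) w a ∨ Rch G (insert a S) w c by
    rcases H a h with h | h
    · exact absurd rfl h.1
    · exact h
  intro x hx
  induction hx with
  | refl => exact Or.inl ⟨hw, hw', Relation.ReflTransGen.refl⟩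
  | @tail x y hx hxy ih =>
    rcases ih with ⟨h1, h2, h3⟩ | ih
    · obtain ⟨hadj, hxS, hyS⟩ := hxy
      by_cases hya : y = a
      · subst hya
        right; left
        refine Relation.ReflTransGen.tail (h3.mono (subset_insert _ _)) ⟨hadj, ?_, ?_⟩ <;>
          simp [*]
      by_cases hyc : y = c
      · subst hyc
        right; right
        refine Relation.ReflTransGen.tail (h3.mono (insert_subset_insert (subset_insert _ _))) ⟨hadj, ?_, ?_⟩ <;>
          simp [*]
      left
      refine ⟨hya, hyc, Relation.ReflTransGen.tail h3 ⟨hadj, ?_, ?_⟩⟩ <;> simp [*]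
    · exact Or.inr ih

lemma exists_out [Finite V] {S : Set V} (h : S.ncard < Nat.card V) : ∃ w, w ∉ S := by
  by_contra hcon
  push Not at hcon
  rw [eq_univ_of_forall hcon, ncard_univ] at h
  exact lt_irrefl _ h

lemma ncard2 (a b : V) : ({a, b} : Set V).ncard ≤ 2 := by
  have := ncard_insert_le a {b}; rw [ncard_singleton] at this; omega
lemma ncard3 (a b c : V) : ({a, b, c} : Set V).ncard ≤ 3 := by
  have := ncard_insert_le a {b, c}; have := ncard2 b c; omega
lemma ncard4 (a b c d : V) : ({a, b, c, d} : Set V).ncard ≤ 4 := by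
  have := ncard_insert_le a {b, c, d}; have := ncard3 b c d; omega
lemma ncard5 (a b c d e : V) : ({a, b, c, d, e} : Set V).ncard ≤ 5 := by
  have := ncard_insert_le a {b, c, d, e}; have := ncard4 b c d e; omega

lemma cross_symm {e f : Sym2 V} (h : D.Cross e f) : D.Cross f e :=
  ⟨h.1.symm, by rw [inter_comm]; exact h.2⟩

/-- ambient assumptions -/
structure Ctx (D : Drawing G) : Prop where
  max : D.IsMaximalOnePlane
  conn : KConnected G 3
  card : 5 ≤ Nat.card V

lemma Ctx.good (h : Ctx D) : D.IsGood := h.max.1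
lemma Ctx.onep (h : Ctx D) : D.IsOnePlanar := h.max.2.1

lemma Ctx.iso [Finite V] (h : Ctx D) (w : V) : ∃ v, G.Adj w v := by
  obtain ⟨x, hx⟩ := exists_out (S := {w}) (by rw [ncard_singleton]; have := h.card; omega)
  have hr := KConnected.rch h.conn (S := ∅) (by simp) (x := w) (y := x) (by simp) (by simp)
  rcases Relation.ReflTransGen.cases_head hr with e | ⟨c, hc, -⟩
  · exact absurd e.symm hx
  · exact ⟨c, hc.1⟩

lemma free_rch {F F1 ρ : Set (ℝ × ℝ)} {a b d x y : V} (hg : D.IsGood) (h : Nb D F F1 a b d) {S : Set V}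
    (hr : Rch G S x y) (hab : a ∈ S ∨ b ∈ S) (hx : D.pos x ∉ ρ)
    (H : ∀ u v (h : G.Adj u v), u ∉ S → v ∉ S → Disjoint (D.arc h) ρ) : Free D F F1 a b ρ x y := by
  induction hr with
  | refl =>
    refine ⟨{D.pos x}, isCompact_singleton, isPreconnected_singleton, rfl, rfl, ?_, ?_, ?_, ?_⟩ <;>
      rw [disjoint_singleton_left]
    · exact fun hh => disjoint_left.1 (face_disj h.hF) hh (pos_mem_K _)
    · exact fun hh => disjoint_left.1 (face_disj h.hF1) hh (pos_mem_K _)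
    · rw [edgeInt_eq h.adj]; exact pos_notMem_arcInt hg _ _
    · exact hx
  | @tail u v _ huv ih =>
    obtain ⟨hadj, hu, hv⟩ := huv
    refine ih.trans (h.free_edge hg hadj ?_ (H u v hadj hu hv))
    intro e
    rw [Sym2.eq_iff] at e
    rcases e with ⟨rfl, rfl⟩ | ⟨rfl, rfl⟩ <;> tauto

lemma link_disj (hg : D.IsGood) {F2 ρ : Set (ℝ × ℝ)} (hF2 : D.IsFace F2) {c d u v : V}
    (hs : ρ ⊆ F2 ∪ {D.pos c, D.pos d}) (h : G.Adj u v) (h1 : u ≠ c) (h2 : u ≠ d) (h3 : v ≠ c)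
    (h4 : v ≠ d) : Disjoint (D.arc h) ρ := by
  rw [disjoint_left]
  intro r hr hr'
  rcases hs hr' with h' | rfl | rfl
  · exact disjoint_left.1 (face_disj hF2) h' (arc_subset_K _ hr)
  · rcases hg.1 _ h hr with e | e
    · exact h1 e.symm
    · exact h3 e.symm
  · rcases hg.1 _ h hr with e | e
    · exact h2 e.symm
    · exact h4 e.symm

lemma link_pos {F2 ρ : Set (ℝ × ℝ)} (hF2 : D.IsFace F2) {c d u : V}
    (hs : ρ ⊆ F2 ∪ {D.pos c, D.pos d}) (h1 : u ≠ c) (h2 : u ≠ d) : D.pos u ∉ ρ := by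
  intro hr'
  rcases hs hr' with h' | h' | h'
  · exact disjoint_left.1 (face_disj hF2) h' (pos_mem_K _)
  · exact h1 (D.pos_inj h')
  · exact h2 (D.pos_inj h')

lemma sep_arc [Finite V] (X : Ctx D) {F F1 : Set (ℝ × ℝ)} {a b d c : V} (h : Nb D F F1 a b d)
    (hc : D.pos c ∈ closure F) (hca : c ≠ a) (hcb : c ≠ b) (hcd : G.Adj c d) :
    ¬ Free D F F1 a b (D.arc hcd) a b := by
  refine h.sep X.good (arc_preconn _) (pos_left_mem _) hc (pos_right_mem _) h.hd ?_
  exact arc_disjoint X.good _ _ hca hcb h.da h.db (fun hh => h.unc _ (cross_symm hh))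

lemma sep_link [Finite V] (X : Ctx D) {F F1 F2 : Set (ℝ × ℝ)} {a b d c : V} (h : Nb D F F1 a b d)
    (hF2 : D.IsFace F2)
    (hc : D.pos c ∈ closure F) (hca : c ≠ a) (hcb : c ≠ b) (hc2 : D.pos c ∈ closure F2)
    (hd2 : D.pos d ∈ closure F2) :
    ∃ ρ, ρ ⊆ F2 ∪ {D.pos c, D.pos d} ∧ ¬ Free D F F1 a b ρ a b := by
  obtain ⟨ρ, -, h2, h3, h4, h5⟩ := face_link X.good X.iso hF2 hc2 hd2
  exact ⟨ρ, h5, h.sep X.good h2 h3 hc h4 h.hd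
    (link_disj X.good hF2 h5 _ hca.symm h.da.symm hcb.symm h.db.symm).symm⟩

/-- the separation for reachability -/
lemma sep_rch [Finite V] (X : Ctx D) {F F1 F2 : Set (ℝ × ℝ)} {a b d c w : V} (h : Nb D F F1 a b d)
    (hF2 : D.IsFace F2)
    (hc : D.pos c ∈ closure F) (hca : c ≠ a) (hcb : c ≠ b) (hc2 : D.pos c ∈ closure F2)
    (hd2 : D.pos d ∈ closure F2) (hwc : w ≠ c) (hwd : w ≠ d) (h1 : Rch G {b, c, d} w a)
    (h2 : Rch G {a, c, d} w b) : False := by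
  obtain ⟨ρ, hs, hn⟩ := sep_link X h hF2 hc hca hcb hc2 hd2
  have hw := link_pos hF2 hs hwc hwd
  refine hn ((free_rch X.good h h1 (by simp) hw ?_).symm.trans (free_rch X.good h h2 (by simp) hw ?_))
  all_goals
    intro u v hadj hu hv
    simp only [mem_insert_iff, mem_singleton_iff, not_or] at hu hv
    exact link_disj X.good hF2 hs hadj hu.2.1 hu.2.2 hv.2.1 hv.2.2

/-- a vertex of `F` outside `ab` is not on `F1` -/
lemma not_both [Finite V] (X : Ctx D) {F F1 : Set (ℝ × ℝ)} {a b d c : V} (h : Nb D F F1 a b d)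
    (hc : D.pos c ∈ closure F) (hca : c ≠ a) (hcb : c ≠ b) (hc1 : D.pos c ∈ closure F1) : False := by
  have h' : Nb D F F1 a b c := { h with hd := hc1, da := hca, db := hcb }
  obtain ⟨w, hw⟩ := exists_out (S := {a, b, c}) (by have := ncard3 a b c; have := X.card; omega)
  simp only [mem_insert_iff, mem_singleton_iff, not_or] at hw
  have e1 : ({b, c, c} : Set V) = {b, c} := by simp
  have e2 : ({a, c, c} : Set V) = {a, c} := by simp
  have hab := h.adj.ne
  refine sep_rch X h' h.hF hc hca hcb hc hc hw.2.2 hw.2.2 (KConnected.rch X.conn ?_ ?_ ?_)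
    (KConnected.rch X.conn ?_ ?_ ?_)
  · rw [e1]; have := ncard2 b c; omega
  · simp [hw]
  · simp [hab, hca.symm]
  · rw [e2]; have := ncard2 a c; omega
  · simp [hw]
  · simp [hab.symm, hcb.symm]

/-- one free edge against an arc -/
lemma fe [Finite V] (X : Ctx D) {F F1 : Set (ℝ × ℝ)} {a b d c d' x y : V} (h : Nb D F F1 a b d)
    (hcd : G.Adj c d') (hxy : G.Adj x y) (hab : s(x, y) ≠ s(a, b)) (h1 : x ≠ c) (h2 : x ≠ d')
    (h3 : y ≠ c) (h4 : y ≠ d') (hx : ¬ D.Cross s(c, d') s(x, y)) :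
    Free D F F1 a b (D.arc hcd) x y :=
  h.free_edge X.good hxy hab (arc_disjoint X.good _ _ h1 h2 h3 h4 (fun hh => hx (cross_symm hh)))

lemma s_ne {a b x y : V} (h1 : x ≠ a) (h2 : x ≠ b) : s(x, y) ≠ s(a, b) := by
  rw [Ne, Sym2.eq_iff]; tauto
lemma s_ne' {a b x y : V} (h1 : y ≠ a) (h2 : y ≠ b) : s(x, y) ≠ s(a, b) := by
  rw [Ne, Sym2.eq_iff]; tauto

/-- disjoint edges are impossible -/
lemma caseB [Finite V] (X : Ctx D) {F F1 F2 : Set (ℝ × ℝ)} {a b d a' b' d' : V} (h : Nb D F F1 a b d)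
    (h' : Nb D F F2 a' b' d') (hne : F1 ≠ F2) (n1 : a ≠ a') (n2 : a ≠ b') (n3 : b ≠ a') (n4 : b ≠ b') :
    False := by
  have d1 : a' ≠ d := fun e => not_both X h h'.a0 n1.symm n3.symm (e ▸ h.hd)
  have d2 : b' ≠ d := fun e => not_both X h h'.b0 n2.symm n4.symm (e ▸ h.hd)
  have d3 : a ≠ d' := fun e => not_both X h' h.a0 n1 n2 (e ▸ h'.hd)
  have d4 : b ≠ d' := fun e => not_both X h' h.b0 n3 n4 (e ▸ h'.hd)
  have hda := h.da
  have hdb := h.db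
  have hda' := h'.da
  have hdb' := h'.db
  have eaa : G.Adj a a' := face_adj X.max X.iso h.hF h.a0 h'.a0 n1
  have eab : G.Adj a b' := face_adj X.max X.iso h.hF h.a0 h'.b0 n2
  have eba : G.Adj a' b := face_adj X.max X.iso h.hF h'.a0 h.b0 n3.symm
  have ebb : G.Adj b' b := face_adj X.max X.iso h.hF h'.b0 h.b0 n4.symm
  by_cases hdd : d = d'
  · subst hdd
    obtain ⟨ρ, hs, hn⟩ := sep_link X h h'.hF1 h'.a0 n1.symm n3.symm h'.a1 h'.hd
    refine hn ((h.free_edge X.good eab (s_ne' n2.symm n4.symm) ?_).trans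
      (h.free_edge X.good ebb (s_ne n2.symm n4.symm) ?_))
    · exact link_disj X.good h'.hF1 hs _ n1 hda.symm h'.adj.ne.symm d2
    · exact link_disj X.good h'.hF1 hs _ h'.adj.ne.symm d2 n3 hdb.symm
  · have ebd : G.Adj b' d := h.cross_adj X.max X.iso h'.b0 n2.symm n4.symm d2
    have ead : G.Adj a d' := h'.cross_adj X.max X.iso h.a0 n1 n2 d3
    have edb : G.Adj d' b := (h'.cross_adj X.max X.iso h.b0 n3 n4 d4).symm
    have hn := sep_arc X h h'.b0 n2.symm n4.symm ebd
    have hab' := h'.adj.ne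
    have f1 := fe X h ebd eaa (s_ne' n1.symm n3.symm) n2 hda.symm hab' d1
    have f2 := fe X h ebd eba (s_ne n1.symm n3.symm) hab' d1 n4 hdb.symm
    have f3 := fe X h ebd ead (s_ne' d3.symm d4.symm) n2 hda.symm hdb' (Ne.symm hdd)
    have f4 := fe X h ebd edb (s_ne d3.symm d4.symm) hdb' (Ne.symm hdd) n4 hdb.symm
    have f5 : Free D F F1 a b (D.arc ebd) d' a' := by
      refine h.free_face X.good X.iso h'.hF1 h'.ne.symm hne.symm h'.hd h'.a1
        ((face_disj h'.hF1).mono_right (arc_subset_K _)) ?_ ?_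
      · intro hh; rcases X.good.1 _ _ hh with e | e
        · exact hdb' e
        · exact hdd e.symm
      · intro hh; rcases X.good.1 _ _ hh with e | e
        · exact hab' e
        · exact d1 e
    have u := X.onep s(b', d)
    by_cases c2 : D.Cross s(b', d) s(a', b)
    · by_cases c3 : D.Cross s(b', d) s(a, d')
      · exact s_ne n1 h.adj.ne (u c3 c2)
      by_cases c4 : D.Cross s(b', d) s(d', b)
      · exact s_ne hda' d4.symm (u c4 c2)
      exact hn ((f3 c3).trans (f4 c4))
    · by_cases c1 : D.Cross s(b', d) s(a, a')
      · by_cases c3 : D.Cross s(b', d) s(a, d')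
        · have := u c1 c3
          rw [Sym2.congr_right] at this
          exact absurd this.symm hda'
        · exact hn (((f3 c3).trans f5).trans (f2 c2))
      · exact hn ((f1 c1).trans (f2 c2))

/-- consecutive edges -/
lemma caseA [Finite V] (X : Ctx D) {F F1 F2 : Set (ℝ × ℝ)} {a b d c e : V} (h : Nb D F F1 a b d)
    (h' : Nb D F F2 b c e) (hne : F1 ≠ F2) (hac : a ≠ c) :
    G.Adj c d ∧ G.Adj a e ∧ (d ≠ e → D.Cross s(c, d) s(a, e)) := by
  have hbc := h'.adj.ne
  have hab := h.adj.ne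
  have d1 : c ≠ d := fun e => not_both X h h'.b0 hac.symm hbc.symm (e ▸ h.hd)
  have d2 : a ≠ e := fun e => not_both X h' h.a0 hab hac (e ▸ h'.hd)
  have ecd := h.cross_adj X.max X.iso h'.b0 hac.symm hbc.symm d1
  have eae := h'.cross_adj X.max X.iso h.a0 hab hac d2
  refine ⟨ecd, eae, fun hde => ?_⟩
  by_contra hcr
  refine sep_arc X h h'.b0 hac.symm hbc.symm ecd
    ((fe X h ecd eae (s_ne' d2.symm h'.da) hac h.da.symm h'.db hde.symm hcr).trans ?_)
  refine h.free_face X.good X.iso h'.hF1 h'.ne.symm hne.symm h'.hd h'.a1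
        ((face_disj h'.hF1).mono_right (arc_subset_K _)) ?_ ?_
  · intro hh; rcases X.good.1 _ _ hh with e | e
    · exact h'.db e
    · exact hde e.symm
  · intro hh; rcases X.good.1 _ _ hh with e | e
    · exact hbc e
    · exact h.db e.symm

lemma caseA_verts [Finite V] (X : Ctx D) {F F1 F2 : Set (ℝ × ℝ)} {a b d c e g : V} (h : Nb D F F1 a b d)
    (h' : Nb D F F2 b c e) (hac : a ≠ c) (hg : D.pos g ∈ closure F) : g = a ∨ g = b ∨ g = c := by
  by_contra hcon
  push Not at hcon
  obtain ⟨ga, gb, gc⟩ := hcon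
  have hbc := h'.adj.ne
  have hab := h.adj.ne
  have c1 : c ≠ d := fun e => not_both X h h'.b0 hac.symm hbc.symm (e ▸ h.hd)
  have g1 : g ≠ d := fun e => not_both X h hg ga gb (e ▸ h.hd)
  have a2 : a ≠ e := fun e => not_both X h' h.a0 hab hac (e ▸ h'.hd)
  have g2 : g ≠ e := fun e => not_both X h' hg gb gc (e ▸ h'.hd)
  have egd := h.cross_adj X.max X.iso hg ga gb g1
  have ege := h'.cross_adj X.max X.iso hg gb gc g2
  have eac : G.Adj a c := face_adj X.max X.iso h.hF h.a0 h'.b0 hac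
  have eag : G.Adj a g := face_adj X.max X.iso h.hF h.a0 hg ga.symm
  have egb : G.Adj g b := face_adj X.max X.iso h.hF hg h.b0 gb
  have hda := h.da
  have hdb := h.db
  have heb := h'.da
  have hec := h'.db
  have k1 : D.Cross s(g, d) s(a, c) := by
    by_contra hcr
    refine sep_arc X h hg ga gb egd
      ((fe X h egd eac (s_ne' hac.symm hbc.symm) ga.symm hda.symm gc.symm c1 hcr).trans
       (fe X h egd h'.adj.symm (s_ne hac.symm hbc.symm) gc.symm c1 gb.symm hdb.symm ?_))
    intro hh
    exact h'.unc.symm _ (cross_symm hh)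
  have k2 : D.Cross s(g, e) s(a, c) := by
    by_contra hcr
    refine sep_arc X h' hg gb gc ege
      ((fe X h' ege h.adj.symm (s_ne' hab hac) gb.symm heb.symm ga.symm a2 ?_).trans
       (fe X h' ege eac (s_ne hab hac) ga.symm a2 gc.symm hec.symm hcr))
    intro hh
    exact h.unc.symm _ (cross_symm hh)
  have hde : d = e := by
    have := X.onep s(a, c) (cross_symm k1) (cross_symm k2)
    rwa [Sym2.congr_right] at this
  subst hde
  obtain ⟨ρ, hs, hn⟩ := sep_link X h h'.hF1 h'.b0 hac.symm hbc.symm h'.b1 h'.hd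
  refine hn ((h.free_edge X.good eag (s_ne' ga gb) ?_).trans
      (h.free_edge X.good egb (s_ne ga gb) ?_))
  · exact link_disj X.good h'.hF1 hs _ hac hda.symm gc g1
  · exact link_disj X.good h'.hF1 hs _ gc g1 hbc hdb.symm

/-- 5-connected: no neighbour at all -/
lemma case5 [Finite V] (X : Ctx D) (hk : KConnected G 5) (hn : 6 ≤ Nat.card V)
    {F F1 : Set (ℝ × ℝ)} {a b d c : V} (h : Nb D F F1 a b d)
    (hc : D.pos c ∈ closure F) (hca : c ≠ a) (hcb : c ≠ b) : False := by
  have hcd : c ≠ d := fun e => not_both X h hc hca hcb (e ▸ h.hd)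
  have ecd := h.cross_adj X.max X.iso hc hca hcb hcd
  have hab := h.adj.ne
  have hda := h.da
  have hdb := h.db
  have hy : ∃ y, y ≠ a ∧ y ≠ b ∧ ∀ u v (_ : G.Adj u v), D.Cross s(c, d) s(u, v) → u = y ∨ v = y := by
    by_cases hex : ∃ f, D.Cross s(c, d) f
    · obtain ⟨f, hf⟩ := hex
      obtain ⟨-, q, -, u, v, huv, e, -⟩ := id hf
      subst e
      have hne : s(u, v) ≠ s(a, b) := fun e => h.unc _ (cross_symm (e ▸ hf))
      have huv' := huv.ne
      have : (u ≠ a ∧ u ≠ b) ∨ (v ≠ a ∧ v ≠ b) := by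
        by_contra hcon
        apply hne
        rw [Sym2.eq_iff]
        by_cases h1 : u = a
        · subst h1
          by_cases h2 : v = b
          · exact Or.inl ⟨rfl, h2⟩
          · exact absurd (Or.inr ⟨huv'.symm, h2⟩) hcon
        · by_cases h3 : u = b
          · subst h3
            by_cases h2 : v = a
            · exact Or.inr ⟨rfl, h2⟩
            · exact absurd (Or.inr ⟨h2, huv'.symm⟩) hcon
          · exact absurd (Or.inl ⟨h1, h3⟩) hcon
      rcases this with ⟨h1, h2⟩ | ⟨h1, h2⟩
      · refine ⟨u, h1, h2, fun x y _ hh => ?_⟩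
        have := X.onep _ hf hh
        rw [Sym2.eq_iff] at this
        tauto
      · refine ⟨v, h1, h2, fun x y _ hh => ?_⟩
        have := X.onep _ hf hh
        rw [Sym2.eq_iff] at this
        tauto
    · exact ⟨c, hca, hcb, fun u v _ hh => absurd ⟨_, hh⟩ hex⟩
  obtain ⟨y, hya, hyb, hy⟩ := hy
  obtain ⟨w, hw⟩ := exists_out (S := {a, b, c, d, y}) (by have := ncard5 a b c d y; omega)
  simp only [mem_insert_iff, mem_singleton_iff, not_or] at hw
  obtain ⟨w1, w2, w3, w4, w5⟩ := hw
  have hwρ : D.pos w ∉ D.arc ecd := by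
    intro hh; rcases X.good.1 _ _ hh with e | e
    · exact w3 e
    · exact w4 e
  have H : ∀ S : Set V, c ∈ S → d ∈ S → y ∈ S →
      ∀ u v (h : G.Adj u v), u ∉ S → v ∉ S → Disjoint (D.arc h) (D.arc ecd) := by
    intro S hc hd hyS u v huv hu hv
    have ne : ∀ {p q : V}, p ∈ S → q ∉ S → q ≠ p := fun hp hq e => hq (e ▸ hp)
    refine arc_disjoint X.good _ _ (ne hc hu) (ne hd hu) (ne hc hv) (ne hd hv) (fun hh => ?_)
    rcases hy u v huv (cross_symm hh) with e | e
    · exact ne hyS hu e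
    · exact ne hyS hv e
  have r1 : Rch G {a, c, d, y} w b := by
    refine KConnected.rch hk (by have := ncard4 a c d y; omega) (by simp [*]) ?_
    simp [hab.symm, hcb.symm, hdb.symm, hyb.symm]
  have r2 : Rch G {b, c, d, y} w a := by
    refine KConnected.rch hk (by have := ncard4 b c d y; omega) (by simp [*]) ?_
    simp [hab, hca.symm, hda.symm, hya.symm]
  exact sep_arc X h hc hca hcb ecd ((free_rch X.good h r2 (by simp) hwρ (H _ (by simp) (by simp) (by simp))).symm.trans
    (free_rch X.good h r1 (by simp) hwρ (H _ (by simp) (by simp) (by simp))))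

/-- 4-connected: no two neighbours -/
lemma case4 [Finite V] (X : Ctx D) (hk : KConnected G 4) (hn : 6 ≤ Nat.card V)
    {F F1 F2 : Set (ℝ × ℝ)} {a b d c e : V} (h : Nb D F F1 a b d)
    (h' : Nb D F F2 b c e) (hne : F1 ≠ F2) (hac : a ≠ c) : False := by
  obtain ⟨ecd, eae, hcr⟩ := caseA X h h' hne hac
  have hab := h.adj.ne
  have hbc := h'.adj.ne
  have hda := h.da
  have hdb := h.db
  have heb := h'.da
  have hec := h'.db
  have hcd := ecd.ne
  have hae := eae.ne
  obtain ⟨w, hw⟩ := exists_out (S := {a, b, c, d, e}) (by have := ncard5 a b c d e; omega)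
  simp only [mem_insert_iff, mem_singleton_iff, not_or] at hw
  obtain ⟨w1, w2, w3, w4, w5⟩ := hw
  by_cases hde : d = e
  · subst hde
    refine sep_rch X h h'.hF1 h'.b0 hac.symm hbc.symm h'.b1 h'.hd w3 w4
      (KConnected.rch hk (by have := ncard3 b c d; omega) (by simp [*]) ?_)
      (KConnected.rch hk (by have := ncard3 a c d; omega) (by simp [*]) ?_)
    · simp [hab, hac, hda.symm]
    · simp [hab.symm, hbc, hdb.symm]
  · have hX := hcr hde
    have u1 := X.onep s(c, d)
    have u2 := X.onep s(a, e)
    have hw1 : D.pos w ∉ D.arc ecd := by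
      intro hh; rcases X.good.1 _ _ hh with e | e
      · exact w3 e
      · exact w4 e
    have hw2 : D.pos w ∉ D.arc eae := by
      intro hh; rcases X.good.1 _ _ hh with e | e
      · exact w1 e
      · exact w5 e
    have H1 : ∀ S : Set V, c ∈ S → d ∈ S → (a ∈ S ∨ e ∈ S) →
        ∀ u v (h : G.Adj u v), u ∉ S → v ∉ S → Disjoint (D.arc h) (D.arc ecd) := by
      intro S hc hd hyS u v huv hu hv
      have ne : ∀ {p q : V}, p ∈ S → q ∉ S → q ≠ p := fun hp hq e => hq (e ▸ hp)
      refine arc_disjoint X.good _ _ (ne hc hu) (ne hd hu) (ne hc hv) (ne hd hv) (fun hh => ?_)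
      have := u1 (cross_symm hh) hX
      rw [Sym2.eq_iff] at this
      rcases this with ⟨rfl, rfl⟩ | ⟨rfl, rfl⟩ <;> tauto
    have H2 : ∀ S : Set V, a ∈ S → e ∈ S → (c ∈ S ∨ d ∈ S) →
        ∀ u v (h : G.Adj u v), u ∉ S → v ∉ S → Disjoint (D.arc h) (D.arc eae) := by
      intro S hc hd hyS u v huv hu hv
      have ne : ∀ {p q : V}, p ∈ S → q ∉ S → q ≠ p := fun hp hq e => hq (e ▸ hp)
      refine arc_disjoint X.good _ _ (ne hc hu) (ne hd hu) (ne hc hv) (ne hd hv) (fun hh => ?_)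
      have := u2 (cross_symm hh) (cross_symm hX)
      rw [Sym2.eq_iff] at this
      rcases this with ⟨rfl, rfl⟩ | ⟨rfl, rfl⟩ <;> tauto
    have r1 : Rch G {c, d, a} w b :=
      KConnected.rch hk (by have := ncard3 c d a; omega) (by simp [*]) (by simp [hab.symm, hbc, hdb.symm])
    have r2 : Rch G {a, e, c} w b :=
      KConnected.rch hk (by have := ncard3 a e c; omega) (by simp [*]) (by simp [hab.symm, hbc, heb.symm])
    have r3 : Rch G {b, d, e} w a :=
      KConnected.rch hk (by have := ncard3 b d e; omega) (by simp [*]) (by simp [hab, hae, hda.symm])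
    have f1 := free_rch X.good h r1 (by simp) hw1 (H1 _ (by simp) (by simp) (by simp))
    have f2 := free_rch X.good h' r2 (by simp) hw2 (H2 _ (by simp) (by simp) (by simp))
    rcases r3.first_hit w1 w3 hac with r | r
    · have f3 := free_rch X.good h r (by simp) hw1 (H1 _ (by simp) (by simp) (by simp))
      exact sep_arc X h h'.b0 hac.symm hbc.symm ecd (f3.symm.trans f1)
    · have f3 := free_rch X.good h' r (by simp) hw2 (H2 _ (by simp) (by simp) (by simp))
      exact sep_arc X h' h.a0 hab hac eae (f2.symm.trans f3)

/-- triangle case -/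
lemma case3 [Finite V] (X : Ctx D) {F F1 F2 F3 : Set (ℝ × ℝ)} {a b d c e f : V} (h : Nb D F F1 a b d)
    (h' : Nb D F F2 b c e) (h'' : Nb D F F3 c a f) (n12 : F1 ≠ F2) (n23 : F2 ≠ F3) (n31 : F3 ≠ F1) : False := by
  have hab := h.adj.ne
  have hbc := h'.adj.ne
  have hca := h''.adj.ne
  have hda := h.da
  have hdb := h.db
  have heb := h'.da
  have hec := h'.db
  have hfc := h''.da
  have hfa := h''.db
  obtain ⟨ecd, eae, k1⟩ := caseA X h h' n12 hca.symm
  obtain ⟨-, ebf, k2⟩ := caseA X h' h'' n23 hab.symm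
  obtain ⟨-, -, k3⟩ := caseA X h'' h n31 hbc.symm
  have hcd := ecd.ne
  have hae := eae.ne
  have hbf := ebf.ne
  have e1 : d = e ∧ e = f := by
    by_cases q1 : d = e
    · by_cases q2 : e = f
      · exact ⟨q1, q2⟩
      · exfalso
        have := X.onep _ (cross_symm (k2 q2)) (k3 (fun h => q2 (q1.symm.trans h.symm)))
        exact s_ne hca.symm hda.symm this
    · exfalso
      by_cases q2 : e = f
      · have := X.onep _ (k1 q1) (cross_symm (k3 (fun h => q1 (h.symm.trans q2.symm))))
        exact s_ne hab hfa.symm this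
      · have := X.onep _ (cross_symm (k1 q1)) (k2 q2)
        exact s_ne hbc.symm hfc.symm this
  obtain ⟨rfl, rfl⟩ := e1
  obtain ⟨w, hw⟩ := exists_out (S := {a, b, c, d}) (by have := ncard4 a b c d; have := X.card; omega)
  simp only [mem_insert_iff, mem_singleton_iff, not_or] at hw
  obtain ⟨w1, w2, w3, w4⟩ := hw
  have t1 := fun p q => sep_rch X h h'.hF1 h'.b0 hca hbc.symm h'.b1 h'.hd w3 w4 p q
  have t2 := fun p q => sep_rch X h' h''.hF1 h''.b0 hab hca.symm h''.b1 h''.hd w1 w4 p q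
  have t3 := fun p q => sep_rch X h'' h.hF1 h.b0 hbc hab.symm h.b1 h.hd w2 w4 p q
  have pm : ∀ {x y z x' y' z' u : V}, Rch G {x, y, z} w u → ({x', y', z'} : Set V) ⊆ {x, y, z} →
    Rch G {x', y', z'} w u := fun hr hs => hr.mono hs
  have ra : Rch G {a, d} w b := KConnected.rch X.conn (by have := ncard2 a d; omega) (by simp [*])
    (by simp [hab.symm, hdb.symm])
  have rb : Rch G {b, d} w a := KConnected.rch X.conn (by have := ncard2 b d; omega) (by simp [*])
    (by simp [hab, hda.symm])
  have rc : Rch G {c, d} w a := KConnected.rch X.conn (by have := ncard2 c d; omega) (by simp [*])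
    (by simp [hca.symm, hda.symm])
  have sw : ∀ x y z : V, ({y, x, z} : Set V) = {x, y, z} := fun x y z => insert_comm _ _ _
  rcases ra.first_hit w2 w3 hbc with p | p <;> rcases rb.first_hit w1 w3 hca.symm with q | q <;>
    rcases rc.first_hit w1 w2 hab with r | r
  all_goals
    first
      | exact t1 (by first | assumption | (rw [sw]; assumption)) (by first | assumption | (rw [sw]; assumption))
      | exact t2 (by first | assumption | (rw [sw]; assumption)) (by first | assumption | (rw [sw]; assumption))
      | exact t3 (by first | assumption | (rw [sw]; assumption)) (by first | assumption | (rw [sw]; assumption))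

/-- normal form of two neighbours -/
lemma two_nb [Finite V] (X : Ctx D) {F F1 F2 : Set (ℝ × ℝ)} {a b d a' b' e : V} (h : Nb D F F1 a b d)
    (h' : Nb D F F2 a' b' e) (hne : F1 ≠ F2) :
    ∃ x y z, Nb D F F1 x y d ∧ Nb D F F2 y z e ∧ x ≠ z := by
  have hab := h.adj.ne
  have hab' := h'.adj.ne
  by_cases p1 : b = a'
  · subst p1
    refine ⟨a, b, b', h, h', fun e => ?_⟩
    subst e
    exact hne (h.same_edge X.good h'.symm)
  by_cases p2 : b = b'
  · subst p2
    refine ⟨a, b, a', h, h'.symm, fun e => ?_⟩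
    subst e
    exact hne (h.same_edge X.good h')
  by_cases p3 : a = a'
  · subst p3
    exact ⟨b, a, b', h.symm, h', p2⟩
  by_cases p4 : a = b'
  · subst p4
    exact ⟨b, a, a', h.symm, h'.symm, p1⟩
  exact (caseB X h h' hne p3 p4 p1 p2).elim

lemma three_nb [Finite V] (X : Ctx D) {F F1 F2 F3 : Set (ℝ × ℝ)} {a b d a' b' e a'' b'' f : V}
    (h : Nb D F F1 a b d) (h' : Nb D F F2 a' b' e) (h'' : Nb D F F3 a'' b'' f)
    (n12 : F1 ≠ F2) (n23 : F2 ≠ F3) (n31 : F3 ≠ F1) : False := by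
  obtain ⟨x, y, z, k, k', hxz⟩ := two_nb X h h' n12
  have p := caseA_verts X k k' hxz h''.a0
  have q := caseA_verts X k k' hxz h''.b0
  have hne := h''.adj.ne
  rcases p with rfl | rfl | rfl <;> rcases q with rfl | rfl | rfl
  · exact hne rfl
  · exact n31 (h''.same_edge X.good k)
  · exact case3 X k k' h''.symm n12 n23 n31
  · exact n31 (h''.symm.same_edge X.good k)
  · exact hne rfl
  · exact n23 (k'.same_edge X.good h'')
  · exact case3 X k k' h'' n12 n23 n31
  · exact n23 (k'.same_edge X.good h''.symm)
  · exact hne rfl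

lemma KConnected.mono {k l : ℕ} (h : KConnected G k) (hl : l ≤ k) : KConnected G l :=
  fun S hS => h S (hS.trans_le hl)

theorem main [Fintype V] (D : Drawing G) (k : ℕ)
    (hk3 : 3 ≤ k) (hk5 : k ≤ 5)
    (hmax : D.IsMaximalOnePlane) (hconn : KConnected G k)
    (hn3 : k = 3 → 5 ≤ Fintype.card V)
    (hn4 : 4 ≤ k → 6 ≤ Fintype.card V) :
    ∀ F : Set (ℝ × ℝ), D.IsTrueFace F →
      {F' : Set (ℝ × ℝ) | D.IsTrueFace F' ∧ D.FaceAdj F F'}.ncard ≤ 5 - k := by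
  intro F hF
  rw [← Nat.card_eq_fintype_card] at hn3 hn4
  have hc5 : 5 ≤ Nat.card V := by
    rcases hk3.eq_or_lt with e | e
    · exact hn3 e.symm
    · exact (by norm_num : 5 ≤ 6).trans (hn4 e)
  have X : Ctx D := ⟨hmax, KConnected.mono hconn hk3, hc5⟩
  have hnb : ∀ F1 ∈ {F' : Set (ℝ × ℝ) | D.IsTrueFace F' ∧ D.FaceAdj F F'},
      ∃ a b c d, Nb D F F1 a b d ∧ D.pos c ∈ closure F ∧ c ≠ a ∧ c ≠ b := by
    rintro F1 ⟨h1, h2⟩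
    exact exists_nb X.good X.onep (by omega) hF h1 h2
  by_contra hcon
  push Not at hcon
  have hfin : {F' : Set (ℝ × ℝ) | D.IsTrueFace F' ∧ D.FaceAdj F F'}.Finite :=
    finite_of_ncard_pos (by omega)
  obtain rfl | rfl | rfl : k = 3 ∨ k = 4 ∨ k = 5 := by omega
  · obtain ⟨F1, m1, F2, m2, F3, m3, n12, n13, n23⟩ := (two_lt_ncard hfin).1 hcon
    obtain ⟨a, b, c, d, h, -⟩ := hnb F1 m1
    obtain ⟨a', b', c', d', h', -⟩ := hnb F2 m2
    obtain ⟨a'', b'', c'', d'', h'', -⟩ := hnb F3 m3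
    exact three_nb X h h' h'' n12 n23 n13.symm
  · obtain ⟨F1, m1, F2, m2, n12⟩ := (one_lt_ncard hfin).1 hcon
    obtain ⟨a, b, c, d, h, -⟩ := hnb F1 m1
    obtain ⟨a', b', c', d', h', -⟩ := hnb F2 m2
    obtain ⟨x, y, z, p, q, hxz⟩ := two_nb X h h' n12
    exact case4 X hconn (hn4 le_rfl) p q n12 hxz
  · obtain ⟨F1, m1⟩ := nonempty_of_ncard_ne_zero hcon.ne'
    obtain ⟨a, b, c, d, h, hc, hca, hcb⟩ := hnb F1 m1
    exact case5 X hconn (hn4 (by norm_num)) h hc hca hcb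
end P11
end

/-- Let `G` be a `k`-connected maximal 1-plane graph, `3 ≤ k ≤ 5`,
immovable if `k = 3`, with `n ≥ 5` if `k = 3` and `n ≥ 6` if `k ≥ 4`. Then every
true face of `G^×` is adjacent to at most `5 - k` true faces of `G^×`. -/
theorem stmt_11 {V : Type} [Fintype V] {G : SimpleGraph V} (D : Drawing G) (k : ℕ)
    (hk3 : 3 ≤ k) (hk5 : k ≤ 5)
    (hmax : D.IsMaximalOnePlane) (hconn : KConnected G k)
    (himm : k = 3 → D.Immovable)
    (hn3 : k = 3 → 5 ≤ Fintype.card V)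
    (hn4 : 4 ≤ k → 6 ≤ Fintype.card V) :
    ∀ F : Set (ℝ × ℝ), D.IsTrueFace F →
      {F' : Set (ℝ × ℝ) | D.IsTrueFace F' ∧ D.FaceAdj F F'}.ncard ≤ 5 - k := by
  exact P11.main D k hk3 hk5 hmax hconn hn3 hn4
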